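/- arXiv:1009.2944 — 2 statements merged into one kernel-verified Lean document; each statement's English description precedes it below -/
import Mathlib

section
/- There exist infinitely many positive integers n such that P⁺(g(n)) > log g(n). -/
/-- Landau's function: the maximal order of a permutation of the symmetric group on `n` letters. -/
noncomputable def landau (n : ℕ) : ℕ :=
  Finset.univ.sup fun σ : Equiv.Perm (Fin n) => orderOf σ

/-- The largest prime factor of `m` (0 if `m` has no prime factor). -/
def maxPrimeFac (m : ℕ) : ℕ := m.primeFactors.sup id

/-!
For a prime `q` and `ρ = q / log q`, let `N` minimize `ℓ M - ρ * log M`, where `ℓ M` is the least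
number of letters on which some permutation has order `M`. Then `N` is the value of Landau's
function at `ℓ N`, and for a suitable choice of `N` its largest prime factor is `q`. Minimality
forces primes with exponent at least `2` to be at most about `√(q / 2)` and those with exponent at
least `3` to be `O(q ^ (1 / 3))`. Hence `log N` exceeds `θ q` by little more than `θ √(q / 2)`, and
since `log 4 / √2 < 0.995`, Chebyshev's bound `θ y ≤ y * log 4` gives `log N ≤ θ q + 0.995 * √q`.
So it suffices that `θ q < q - 0.995 * √q` for infinitely many primes `q`.

As `ψ x - θ x` contains the term `θ √x`, which is about `√x` if `θ` does not undershoot already,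
this follows once, for every `δ > 0`, one has `ψ x < x + δ * √x` for arbitrarily large `x`.
Otherwise `ψ x - x - δ * √x` is bounded below, and by Landau's lemma on Mellin transforms of
nonnegative functions its transform, computed from `ζ' / ζ`, is, up to the transform of a constant,
nonnegative on the real axis down to `1 / 2`, because `ζ` has no zeros on `(0, 1)`. But the term
`-δ * √x` produces a pole with negative residue at `1 / 2`.
-/

open Filter Topology Set Asymptotics MeasureTheory

section Landau

open scoped ComplexOrder

lemma differentiableOn_iteratedDeriv {F : ℂ → ℂ} {U : Set ℂ} (hU : IsOpen U)
    (hF : DifferentiableOn ℂ F U) (n : ℕ) : DifferentiableOn ℂ (iteratedDeriv n F) U := by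
  induction n with
  | zero => simpa only [iteratedDeriv_zero] using hF
  | succ n ih => simpa only [iteratedDeriv_succ] using ih.deriv hU

lemma iteratedDeriv_iteratedDeriv (F : ℂ → ℂ) (m n : ℕ) :
    iteratedDeriv m (iteratedDeriv n F) = iteratedDeriv (m + n) F := by
  simp only [iteratedDeriv_eq_iterate, Function.iterate_add_apply]

/- The set of `t` at which all derivatives are nonnegative is closed, and the Taylor series at such
a `t` shows that it extends to the right of `t`. -/
lemma iteratedDeriv_nonneg_of_le {F : ℂ → ℂ} {U : Set ℂ} (hU : IsOpen U)
    (hF : DifferentiableOn ℂ F U) {a b : ℝ} (hab : a ≤ b) (hseg : ∀ t ∈ Icc a b, (t : ℂ) ∈ U)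
    (ha : ∀ n, 0 ≤ iteratedDeriv n F a) (n : ℕ) : 0 ≤ iteratedDeriv n F b := by
  have hd := differentiableOn_iteratedDeriv hU hF
  suffices Icc a b ⊆ ⋂ n, (fun t : ℝ ↦ iteratedDeriv n F t) ⁻¹' Ici 0 from
    mem_iInter.mp (this ⟨hab, le_rfl⟩) n
  refine IsClosed.Icc_subset_of_forall_exists_gt ?_ (mem_iInter.mpr ha) ?_
  · rw [inter_comm, inter_iInter]
    exact isClosed_iInter fun n ↦ ContinuousOn.preimage_isClosed_of_isClosed
      ((hd n).continuousOn.comp Complex.continuous_ofReal.continuousOn hseg)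
      isClosed_Icc isClosed_Ici
  · rintro x ⟨hx, hxab⟩ y (hy : x < y)
    obtain ⟨r, hr, hball⟩ := Metric.isOpen_iff.mp hU x (hseg x (Ico_subset_Icc_self hxab))
    obtain ⟨z, hxz, hz⟩ := exists_between (lt_min hy (lt_add_of_pos_right x hr))
    refine ⟨z, mem_iInter.mpr fun n ↦ ?_, hxz, (hz.trans_le (min_le_left _ _)).le⟩
    refine ((hd n).mono hball).nonneg_of_iteratedDeriv_nonneg (fun m ↦ ?_) ?_ ?_
    · rw [iteratedDeriv_iteratedDeriv]
      exact mem_iInter.mp hx _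
    · exact_mod_cast hxz.le
    · rw [Metric.mem_ball, Complex.dist_eq, ← Complex.ofReal_sub, Complex.norm_real,
        Real.norm_of_nonneg (sub_pos.mpr hxz).le, sub_lt_iff_lt_add']
      exact hz.trans_le (min_le_right _ _)

lemma mellin_ofReal_nonneg {f : ℝ → ℝ} (hf₀ : ∀ t, 0 ≤ f t) (w : ℝ) :
    0 ≤ mellin (fun t ↦ (f t : ℂ)) w := by
  have integrand_eq : ∀ t ∈ Ioi (0 : ℝ),
      (t : ℂ) ^ ((w : ℂ) - 1) • (f t : ℂ) = ((t ^ (w - 1) * f t : ℝ) : ℂ) := fun t ht ↦ by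
    rw [smul_eq_mul, Complex.ofReal_mul, Complex.ofReal_cpow (le_of_lt ht), Complex.ofReal_sub,
      Complex.ofReal_one]
  rw [mellin, setIntegral_congr_fun measurableSet_Ioi integrand_eq, integral_complex_ofReal,
    Complex.zero_le_real]
  exact setIntegral_nonneg measurableSet_Ioi fun t ht ↦
    mul_nonneg (Real.rpow_nonneg (le_of_lt ht) _) (hf₀ t)

/-- The real functions whose Mellin transform is taken below: `f` is supported in `[1, ∞)` and
`f t = O(t ^ σ')` for all `σ' > σ`, so that the Mellin integral
`∫ t in Ioi 0, t ^ (-s - 1) * f t` at `-s` converges for `σ < re s`. -/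
structure HasOrderLE (σ : ℝ) (f : ℝ → ℝ) : Prop where
  locallyIntegrableOn : LocallyIntegrableOn f (Ioi 0)
  eq_zero_of_lt_one : ∀ t < 1, f t = 0
  isBigO : ∀ σ' > σ, f =O[atTop] fun t ↦ t ^ σ'

namespace HasOrderLE

variable {σ : ℝ} {f g : ℝ → ℝ}

lemma mono {σ₁ σ₂ : ℝ} (hf : HasOrderLE σ₁ f) (h : σ₁ ≤ σ₂) : HasOrderLE σ₂ f where
  locallyIntegrableOn := hf.locallyIntegrableOn
  eq_zero_of_lt_one := hf.eq_zero_of_lt_one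
  isBigO σ' hσ' := hf.isBigO σ' (h.trans_lt hσ')

lemma sub (hf : HasOrderLE σ f) (hg : HasOrderLE σ g) : HasOrderLE σ (f - g) where
  locallyIntegrableOn := hf.locallyIntegrableOn.sub hg.locallyIntegrableOn
  eq_zero_of_lt_one t ht := by
    rw [Pi.sub_apply, hf.eq_zero_of_lt_one t ht, hg.eq_zero_of_lt_one t ht, sub_zero]
  isBigO σ' hσ' := (hf.isBigO σ' hσ').sub (hg.isBigO σ' hσ')

lemma const_smul (c : ℝ) (hf : HasOrderLE σ f) : HasOrderLE σ (c • f) where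
  locallyIntegrableOn := hf.locallyIntegrableOn.smul c
  eq_zero_of_lt_one t ht := by rw [Pi.smul_apply, hf.eq_zero_of_lt_one t ht, smul_zero]
  isBigO σ' hσ' := (hf.isBigO σ' hσ').const_smul_left c

lemma log_mul (hf : HasOrderLE σ f) : HasOrderLE σ (Real.log * f) where
  locallyIntegrableOn := hf.locallyIntegrableOn.continuousOn_mul
    (Real.continuousOn_log.mono fun _ ht ↦ ne_of_gt ht) isOpen_Ioi.isLocallyClosed
  eq_zero_of_lt_one t ht := by rw [Pi.mul_apply, hf.eq_zero_of_lt_one t ht, mul_zero]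
  isBigO σ' hσ' := by
    obtain ⟨τ, hτ, hτσ'⟩ := exists_between hσ'
    exact (isBigO_rpow_top_log_smul (neg_lt_neg hτσ')
      (by simpa only [neg_neg] using hf.isBigO τ hτ)).congr_right fun t ↦ by rw [neg_neg]

lemma log_mul_nonneg (hf : HasOrderLE σ f) (hf₀ : ∀ t, 0 ≤ f t) (t : ℝ) :
    0 ≤ (Real.log * f) t := by
  rcases lt_or_ge t 1 with ht | ht
  · rw [hf.log_mul.eq_zero_of_lt_one t ht]
  · exact mul_nonneg (Real.log_nonneg ht) (hf₀ t)

lemma mellinConvergent_and_hasDerivAt (hf : HasOrderLE σ f) {w : ℂ} (hw : σ < -w.re) :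
    MellinConvergent (fun t ↦ (f t : ℂ)) w ∧ HasDerivAt (mellin fun t ↦ (f t : ℂ))
      (mellin (fun t ↦ ((Real.log * f) t : ℂ)) w) w := by
  obtain ⟨τ, hτ, hτw⟩ := exists_between hw
  have hloc : LocallyIntegrableOn (fun t ↦ (f t : ℂ)) (Ioi 0) := fun t ht ↦
    let ⟨u, hu, hfu⟩ := hf.locallyIntegrableOn t ht
    ⟨u, hu, hfu.ofReal⟩
  have htop : (fun t ↦ (f t : ℂ)) =O[atTop] fun t ↦ t ^ (-(-τ)) :=
    Complex.isBigO_ofReal_left.mpr (by simpa only [neg_neg] using hf.isBigO τ hτ)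
  have hbot : (fun t ↦ (f t : ℂ)) =O[𝓝[>] 0] fun t ↦ t ^ (-(w.re - 1)) := by
    refine EventuallyEq.trans_isBigO ?_ (isBigO_zero _ _)
    filter_upwards [mem_nhdsWithin_of_mem_nhds (Iio_mem_nhds one_pos)] with t ht
    rw [hf.eq_zero_of_lt_one t ht, Complex.ofReal_zero]
  refine ⟨mellinConvergent_of_isBigO_rpow hloc htop (by linarith) hbot (by linarith), ?_⟩
  simpa only [Complex.real_smul, Complex.ofReal_mul, Pi.mul_apply] using
    (mellin_hasDerivAt_of_isBigO_rpow hloc htop (by linarith) hbot (by linarith)).2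

lemma iteratedDeriv_mellin_nonneg (hf : HasOrderLE σ f) (hf₀ : ∀ t, 0 ≤ f t) {w : ℝ}
    (hw : σ < -w) (n : ℕ) : 0 ≤ iteratedDeriv n (mellin fun t ↦ (f t : ℂ)) w := by
  induction n generalizing f with
  | zero => simpa only [iteratedDeriv_zero] using mellin_ofReal_nonneg hf₀ w
  | succ n ih =>
    have hderiv : deriv (mellin fun t ↦ (f t : ℂ)) =ᶠ[𝓝 (w : ℂ)]
        mellin fun t ↦ ((Real.log * f) t : ℂ) := by
      filter_upwards [(isOpen_lt continuous_const Complex.continuous_re.neg).mem_nhds hw]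
        with z hz using (hf.mellinConvergent_and_hasDerivAt hz).2.deriv
    rw [iteratedDeriv_succ', hderiv.iteratedDeriv_eq]
    exact ih hf.log_mul (hf.log_mul_nonneg hf₀)

/- Landau's lemma: the Taylor coefficients of `w ↦ F (-w)` at a point of the half plane of
convergence are nonnegative, so nonnegativity propagates along the real axis. -/
lemma nonneg_of_mellin_eq (hf : HasOrderLE σ f) (hf₀ : ∀ t, 0 ≤ f t) {F : ℂ → ℂ}
    {U : Set ℂ} (hU : IsOpen U) (hF : DifferentiableOn ℂ F U)
    (hFf : ∀ s : ℂ, σ < s.re → mellin (fun t ↦ (f t : ℂ)) (-s) = F s)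
    {x : ℝ} (hx : ∀ y : ℝ, x ≤ y → (y : ℂ) ∈ U) : 0 ≤ F x := by
  obtain ⟨x₀, hx₀⟩ := exists_gt (max x σ)
  have hxx₀ := (le_max_left x σ).trans_lt hx₀
  have hσx₀ := (le_max_right x σ).trans_lt hx₀
  have heq : mellin (fun t ↦ (f t : ℂ)) =ᶠ[𝓝 ((-x₀ : ℝ) : ℂ)] fun w ↦ F (-w) := by
    have hmem : σ < -((-x₀ : ℝ) : ℂ).re := by simpa using hσx₀
    filter_upwards [(isOpen_lt continuous_const Complex.continuous_re.neg).mem_nhds hmem] with w hw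
    rw [← hFf (-w) hw, neg_neg]
  have := iteratedDeriv_nonneg_of_le (F := fun w ↦ F (-w)) (hU.preimage continuous_neg)
    (hF.comp differentiable_neg.differentiableOn fun _ ↦ id) (neg_le_neg hxx₀.le)
    (fun t ht ↦ by simpa using hx (-t) (by linarith [ht.2]))
    (fun n ↦ heq.iteratedDeriv_eq n ▸ hf.iteratedDeriv_mellin_nonneg hf₀ (by simpa using hσx₀) n) 0
  simpa using this

end HasOrderLE

end Landau

section MellinComputations

namespace HasOrderLE

variable {σ : ℝ} {f g : ℝ → ℝ}

lemma mellinConvergent (hf : HasOrderLE σ f) {s : ℂ} (hs : σ < s.re) :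
    MellinConvergent (fun t ↦ (f t : ℂ)) (-s) :=
  (hf.mellinConvergent_and_hasDerivAt (by rwa [Complex.neg_re, neg_neg])).1

lemma mellin_sub (hf : HasOrderLE σ f) (hg : HasOrderLE σ g) {s : ℂ} (hs : σ < s.re) :
    mellin (fun t ↦ ((f - g) t : ℂ)) (-s) =
      mellin (fun t ↦ (f t : ℂ)) (-s) - mellin (fun t ↦ (g t : ℂ)) (-s) := by
  simpa only [Pi.sub_apply, Complex.ofReal_sub] using
    (hasMellin_sub (hf.mellinConvergent hs) (hg.mellinConvergent hs)).2

end HasOrderLE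

lemma mellin_ofReal_const_smul (c : ℝ) (f : ℝ → ℝ) (s : ℂ) :
    mellin (fun t ↦ ((c • f) t : ℂ)) s = c * mellin (fun t ↦ (f t : ℂ)) s := by
  simpa only [Pi.smul_apply, smul_eq_mul, Complex.ofReal_mul] using
    mellin_const_smul (fun t ↦ (f t : ℂ)) s (c : ℂ)

/-- The power function `t ↦ t ^ a` cut off to `[1, ∞)`. -/
noncomputable def tailPow (a : ℝ) : ℝ → ℝ := (Ici 1).indicator (· ^ a)

lemma tailPow_of_lt {t : ℝ} (ht : t < 1) (a : ℝ) : tailPow a t = 0 :=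
  indicator_of_notMem (notMem_Ici.mpr ht) _

lemma tailPow_of_le {t : ℝ} (ht : 1 ≤ t) (a : ℝ) : tailPow a t = t ^ a :=
  indicator_of_mem (mem_Ici.mpr ht) _

lemma hasOrderLE_tailPow (a : ℝ) : HasOrderLE a (tailPow a) where
  locallyIntegrableOn := by
    have : LocallyIntegrableOn (· ^ a : ℝ → ℝ) (Ioi 0) := ContinuousOn.locallyIntegrableOn
      (fun t ht ↦ (Real.continuousAt_rpow_const t a (.inl (ne_of_gt ht))).continuousWithinAt)
      measurableSet_Ioi
    exact fun t ht ↦ let ⟨u, hu, hint⟩ := this t ht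
      ⟨u, hu, hint.indicator measurableSet_Ici⟩
  eq_zero_of_lt_one _ ht := tailPow_of_lt ht a
  isBigO σ' hσ' := by
    refine IsBigO.of_bound 1 ?_
    filter_upwards [eventually_ge_atTop 1] with t ht
    rw [tailPow_of_le ht, one_mul, Real.norm_of_nonneg (by positivity),
      Real.norm_of_nonneg (by positivity)]
    exact Real.rpow_le_rpow_of_exponent_le ht hσ'.le

lemma mellin_neg_eq_setIntegral_Ioi_one {f : ℝ → ℝ} (hf : ∀ t < 1, f t = 0) (s : ℂ) :
    mellin (fun t ↦ (f t : ℂ)) (-s) = ∫ t in Ioi (1 : ℝ), (f t : ℂ) * (t : ℂ) ^ (-(s + 1)) := by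
  have hsub : Ici (1 : ℝ) ⊆ Ioi 0 := Ici_subset_Ioi.mpr one_pos
  rw [mellin, setIntegral_eq_of_subset_of_forall_sdiff_eq_zero measurableSet_Ioi hsub,
    integral_Ici_eq_integral_Ioi]
  · simp only [smul_eq_mul, neg_add', mul_comm]
  · intro t ht
    simp only [hf t (not_le.mp ht.2), Complex.ofReal_zero, smul_zero]

lemma mellin_tailPow {a : ℝ} {s : ℂ} (hs : a < s.re) :
    mellin (fun t ↦ (tailPow a t : ℂ)) (-s) = (s - a)⁻¹ := by
  have hintegrand : ∀ t ∈ Ioi (1 : ℝ),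
      (tailPow a t : ℂ) * (t : ℂ) ^ (-(s + 1)) = (t : ℂ) ^ (a - s - 1) := fun t ht ↦ by
    have ht₀ : (0 : ℝ) < t := one_pos.trans ht
    rw [tailPow_of_le (le_of_lt ht), Complex.ofReal_cpow ht₀.le,
      ← Complex.cpow_add _ _ (Complex.ofReal_ne_zero.mpr ht₀.ne')]
    ring_nf
  rw [mellin_neg_eq_setIntegral_Ioi_one fun t ht ↦ tailPow_of_lt ht a,
    setIntegral_congr_fun measurableSet_Ioi hintegrand,
    integral_Ioi_cpow_of_lt (by simpa [sub_lt_iff_lt_add] using hs) one_pos, Complex.ofReal_one,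
    Complex.one_cpow, show (a : ℂ) - s - 1 + 1 = -(s - a) by ring, neg_div_neg_eq, one_div]

/-- The summatory function `t ↦ ∑ 1 ≤ k ≤ t, a k`. -/
noncomputable def summatory (a : ℕ → ℝ) (t : ℝ) : ℝ := ∑ k ∈ Finset.Icc 1 ⌊t⌋₊, a k

section Summatory

variable {a : ℕ → ℝ} {r : ℝ}

lemma summatory_mono (ha : ∀ n, 0 ≤ a n) : Monotone (summatory a) := fun _ _ h ↦
  Finset.sum_le_sum_of_subset_of_nonneg
    (Finset.Icc_subset_Icc_right (Nat.floor_mono h)) fun n _ _ ↦ ha n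

lemma summatory_of_lt_one {t : ℝ} (ht : t < 1) : summatory a t = 0 := by
  rw [summatory, Nat.floor_eq_zero.mpr ht, Finset.Icc_eq_empty (by decide), Finset.sum_empty]

lemma hasOrderLE_summatory (hr : 0 ≤ r) (ha : ∀ n, 0 ≤ a n)
    (hO : (fun n : ℕ ↦ ∑ k ∈ Finset.Icc 1 n, a k) =O[atTop] fun n ↦ (n : ℝ) ^ r) :
    HasOrderLE r (summatory a) where
  locallyIntegrableOn := (summatory_mono ha).locallyIntegrable.locallyIntegrableOn _
  eq_zero_of_lt_one _ := summatory_of_lt_one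
  isBigO σ' hσ' := by
    refine (hO.comp_tendsto tendsto_nat_floor_atTop).trans (IsBigO.of_bound 1 ?_)
    filter_upwards [eventually_ge_atTop 1] with t ht
    rw [one_mul, Function.comp_apply, Real.norm_of_nonneg (by positivity),
      Real.norm_of_nonneg (by positivity)]
    exact (Real.rpow_le_rpow (by positivity) (Nat.floor_le (by positivity)) hr).trans
      (Real.rpow_le_rpow_of_exponent_le ht (le_of_lt hσ'))

lemma mellin_summatory (hr : 0 ≤ r) (ha : ∀ n, 0 ≤ a n)
    (hO : (fun n : ℕ ↦ ∑ k ∈ Finset.Icc 1 n, a k) =O[atTop] fun n ↦ (n : ℝ) ^ r)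
    {s : ℂ} (hs : r < s.re) :
    mellin (fun t ↦ (summatory a t : ℂ)) (-s) = LSeries (fun n ↦ a n) s / s := by
  have hs₀ : s ≠ 0 := Complex.ne_zero_of_re_pos (hr.trans_lt hs)
  rw [LSeries_eq_mul_integral_of_nonneg a hr hs hO ha, mul_div_cancel_left₀ _ hs₀,
    mellin_neg_eq_setIntegral_Ioi_one fun t ↦ summatory_of_lt_one]
  simp only [summatory, Complex.ofReal_sum]

end Summatory

end MellinComputations

section Zeta

lemma riemannZeta₁_eq_mul {s : ℂ} (hs : s ≠ 1) : riemannZeta₁ s = (s - 1) * riemannZeta s := by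
  rw [riemannZeta_eq_inv_sub_mul hs, mul_inv_cancel_left₀ (sub_ne_zero_of_ne hs)]

lemma riemannZeta₁_ne_zero_of_one_le_re {s : ℂ} (hs : 1 ≤ s.re) : riemannZeta₁ s ≠ 0 := by
  rcases eq_or_ne s 1 with rfl | h
  · rw [riemannZeta₁_one]
    exact one_ne_zero
  · rw [riemannZeta₁_eq_mul h]
    exact mul_ne_zero (sub_ne_zero_of_ne h) (riemannZeta_ne_zero_of_one_le_re hs)

lemma summatory_one (t : ℝ) : summatory 1 t = ⌊t⌋₊ := by simp [summatory]

lemma isBigO_sum_one :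
    (fun n : ℕ ↦ ∑ k ∈ Finset.Icc 1 n, (1 : ℕ → ℝ) k) =O[atTop] fun n ↦ (n : ℝ) ^ (1 : ℝ) := by
  simpa using isBigO_refl _ _

lemma hasOrderLE_summatory_one : HasOrderLE 1 (summatory 1) :=
  hasOrderLE_summatory zero_le_one (fun _ ↦ zero_le_one) isBigO_sum_one

lemma mellin_summatory_one {s : ℂ} (hs : 1 < s.re) :
    mellin (fun t ↦ (summatory 1 t : ℂ)) (-s) = riemannZeta s / s := by
  have hone : (fun n ↦ ((1 : ℕ → ℝ) n : ℂ)) = 1 := funext fun _ ↦ Complex.ofReal_one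
  rw [mellin_summatory (a := 1) zero_le_one (fun _ ↦ zero_le_one) isBigO_sum_one hs, hone,
    LSeries_one_eq_riemannZeta hs]

/- The quotient `dslope` is the entire continuation of `(s - ζ₁ s) / (s - 1)`. -/
lemma mellin_tailPow_one_sub_summatory_one {s : ℂ} (hs : 1 < s.re) :
    mellin (fun t ↦ ((tailPow 1 - summatory 1) t : ℂ)) (-s) =
      dslope (fun z ↦ z - riemannZeta₁ z) 1 s / s := by
  have hs₁ : s ≠ 1 := fun h ↦ by simp [h] at hs
  have hs₀ : s ≠ 0 := Complex.ne_zero_of_re_pos (one_pos.trans hs)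
  have hsub : s - 1 ≠ 0 := sub_ne_zero_of_ne hs₁
  rw [(hasOrderLE_tailPow 1).mellin_sub hasOrderLE_summatory_one hs, mellin_tailPow hs,
    mellin_summatory_one hs, dslope_of_ne _ hs₁, slope_def_field, riemannZeta₁_eq_mul hs₁,
    riemannZeta₁_one, Complex.ofReal_one]
  field_simp
  ring

/- Otherwise Landau's lemma, applied to the fractional part `t - ⌊t⌋` on `[1, ∞)`, would give
`0 ≤ 1 / (x - 1)`. -/
lemma riemannZeta₁_ofReal_ne_zero_of_lt_one {x : ℝ} (hx₀ : 0 < x) (hx₁ : x < 1) :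
    riemannZeta₁ x ≠ 0 := by
  have hfract := (hasOrderLE_tailPow 1).sub hasOrderLE_summatory_one
  have hfract₀ (t : ℝ) : 0 ≤ (tailPow 1 - summatory 1) t := by
    rcases lt_or_ge t 1 with ht | ht
    · rw [hfract.eq_zero_of_lt_one t ht]
    · rw [Pi.sub_apply, tailPow_of_le ht, summatory_one, Real.rpow_one, sub_nonneg]
      exact Nat.floor_le (zero_le_one.trans ht)
  have hdiff : DifferentiableOn ℂ (fun s ↦ dslope (fun z ↦ z - riemannZeta₁ z) 1 s / s) {0}ᶜ := by
    refine .div (.mono ?_ (subset_univ _)) differentiableOn_id fun _ ↦ id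
    exact (Complex.differentiableOn_dslope univ_mem).mpr
      (differentiable_id.sub differentiable_riemannZeta₁).differentiableOn
  have hnonneg := hfract.nonneg_of_mellin_eq hfract₀ isOpen_compl_singleton hdiff
    (fun _ ↦ mellin_tailPow_one_sub_summatory_one) (x := x)
    fun y hy ↦ Complex.ofReal_ne_zero.mpr (hx₀.trans_le hy).ne'
  intro hzero
  rw [dslope_of_ne _ (by exact_mod_cast hx₁.ne), slope_def_field, hzero, riemannZeta₁_one, sub_self,
    sub_zero, sub_zero, div_div_cancel_left' (Complex.ofReal_ne_zero.mpr hx₀.ne')] at hnonneg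
  have : 0 ≤ (x - 1)⁻¹ := by exact_mod_cast hnonneg
  exact (inv_lt_zero.mpr (sub_neg.mpr hx₁)).not_ge this

lemma riemannZeta₁_ofReal_ne_zero {x : ℝ} (hx : 0 < x) : riemannZeta₁ x ≠ 0 := by
  rcases lt_or_ge x 1 with hx₁ | hx₁
  · exact riemannZeta₁_ofReal_ne_zero_of_lt_one hx hx₁
  · exact riemannZeta₁_ne_zero_of_one_le_re (by rwa [Complex.ofReal_re])

end Zeta

section ChebyshevPsi

open scoped ComplexOrder

open Chebyshev ArithmeticFunction

lemma summatory_vonMangoldt : summatory (fun n ↦ Λ n) = ψ := rfl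

lemma isBigO_sum_vonMangoldt :
    (fun n : ℕ ↦ ∑ k ∈ Finset.Icc 1 n, Λ k) =O[atTop] fun n ↦ (n : ℝ) ^ (1 : ℝ) := by
  refine .of_bound (Real.log 4 + 4) (.of_forall fun n ↦ ?_)
  have hsum : ∑ k ∈ Finset.Icc 1 n, Λ k = ψ n := by
    rw [← summatory_vonMangoldt, summatory, Nat.floor_natCast]
  rw [hsum, Real.rpow_one, Real.norm_of_nonneg (psi_nonneg _), Real.norm_of_nonneg n.cast_nonneg]
  exact psi_le_const_mul_self n.cast_nonneg

lemma hasOrderLE_psi : HasOrderLE 1 ψ :=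
  hasOrderLE_summatory zero_le_one (fun _ ↦ vonMangoldt_nonneg) isBigO_sum_vonMangoldt

lemma mellin_psi {s : ℂ} (hs : 1 < s.re) :
    mellin (fun t ↦ (ψ t : ℂ)) (-s) =
      ((s - 1)⁻¹ - deriv riemannZeta₁ s / riemannZeta₁ s) / s := by
  have hs₁ : s ≠ 1 := fun h ↦ by simp [h] at hs
  have hsub : s - 1 ≠ 0 := sub_ne_zero_of_ne hs₁
  have hζ := riemannZeta₁_ne_zero_of_one_le_re hs.le
  rw [← summatory_vonMangoldt, mellin_summatory zero_le_one (fun _ ↦ vonMangoldt_nonneg)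
    isBigO_sum_vonMangoldt hs, LSeries_vonMangoldt_eq_deriv_riemannZeta_div hs,
    riemannZeta_eq_inv_sub_mul hs₁, deriv_riemannZeta_eq_neg_inv_sub_sq_mul_add hs₁]
  congr 1
  field_simp
  ring

section PsiError

variable (δ C : ℝ)

/-- The error term `ψ t - t - δ * √t - C` for `1 ≤ t`, continued by `0`. -/
noncomputable def psiError : ℝ → ℝ :=
  ψ - tailPow 1 - δ • tailPow (1 / 2) - C • tailPow 0

lemma psiError_of_one_le {t : ℝ} (ht : 1 ≤ t) : psiError δ C t = ψ t - t - δ * √t - C := by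
  simp only [psiError, Pi.sub_apply, Pi.smul_apply, smul_eq_mul, tailPow_of_le ht, Real.rpow_one,
    ← Real.sqrt_eq_rpow, Real.rpow_zero, mul_one]

lemma hasOrderLE_psiError : HasOrderLE 1 (psiError δ C) :=
  ((hasOrderLE_psi.sub (hasOrderLE_tailPow 1)).sub
    (((hasOrderLE_tailPow (1 / 2)).mono (by norm_num)).const_smul δ)).sub
    (((hasOrderLE_tailPow 0).mono zero_le_one).const_smul C)

/-- The analytic continuation of the Mellin transform of `psiError δ C` at `-s`. -/
noncomputable def psiErrorMellin (s : ℂ) : ℂ :=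
  -(deriv riemannZeta₁ s / riemannZeta₁ s + 1 + C) / s - δ / (s - 1 / 2)

lemma mellin_psiError {s : ℂ} (hs : 1 < s.re) :
    mellin (fun t ↦ (psiError δ C t : ℂ)) (-s) = psiErrorMellin δ C s := by
  have hs₁ : s - 1 ≠ 0 := sub_ne_zero_of_ne fun h ↦ by simp [h] at hs
  have hs₀ : s ≠ 0 := Complex.ne_zero_of_re_pos (one_pos.trans hs)
  have hsub := (hasOrderLE_psi.sub (hasOrderLE_tailPow 1))
  have hhalf := ((hasOrderLE_tailPow (1 / 2)).mono (by norm_num : (1 / 2 : ℝ) ≤ 1)).const_smul δ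
  have hzero := ((hasOrderLE_tailPow 0).mono zero_le_one).const_smul C
  rw [psiError, (hsub.sub hhalf).mellin_sub hzero hs, hsub.mellin_sub hhalf hs,
    hasOrderLE_psi.mellin_sub (hasOrderLE_tailPow 1) hs, mellin_psi hs, mellin_tailPow hs,
    mellin_ofReal_const_smul, mellin_ofReal_const_smul, mellin_tailPow (by linarith),
    mellin_tailPow (by linarith), psiErrorMellin]
  push_cast
  field_simp
  ring

lemma differentiableOn_psiErrorMellin :
    DifferentiableOn ℂ (psiErrorMellin δ C) {s | 1 / 2 < s.re ∧ riemannZeta₁ s ≠ 0} := by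
  rintro s ⟨hs, hζ⟩
  have hs₀ : s ≠ 0 := Complex.ne_zero_of_re_pos (by linarith)
  have hhalf : s - 1 / 2 ≠ 0 := fun h ↦ by
    rw [sub_eq_zero.mp h] at hs
    norm_num at hs
  have hζ' : DifferentiableAt ℂ (deriv riemannZeta₁) s :=
    (differentiable_riemannZeta₁.analyticAt s).deriv.differentiableAt
  unfold psiErrorMellin
  refine DifferentiableAt.differentiableWithinAt ?_
  fun_prop (disch := assumption)

lemma tendsto_sub_half_mul_psiErrorMellin :
    Tendsto (fun x : ℝ ↦ ((x - 1 / 2 : ℝ) : ℂ) * psiErrorMellin δ C x) (𝓝[>] (1 / 2)) (𝓝 (-δ)) := by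
  have hζ := riemannZeta₁_ofReal_ne_zero one_half_pos
  have hζ' : Continuous (deriv riemannZeta₁) :=
    (differentiable_riemannZeta₁.contDiff (n := 1)).continuous_deriv le_rfl
  have hζ₁ : Continuous riemannZeta₁ := differentiable_riemannZeta₁.continuous
  let G : ℝ → ℂ := fun x ↦
    ((x - 1 / 2 : ℝ) : ℂ) * (-(deriv riemannZeta₁ x / riemannZeta₁ x + 1 + C) / x) - δ
  have hG : ContinuousAt G (1 / 2) := by
    have h₀ : ((1 / 2 : ℝ) : ℂ) ≠ 0 := Complex.ofReal_ne_zero.mpr one_half_pos.ne'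
    fun_prop (disch := assumption)
  have hG_half : G (1 / 2) = -δ := by simp [G]
  refine (hG_half ▸ hG.tendsto.mono_left nhdsWithin_le_nhds).congr' ?_
  filter_upwards [self_mem_nhdsWithin] with x (hx : 1 / 2 < x)
  have hsub : ((x - 1 / 2 : ℝ) : ℂ) ≠ 0 := Complex.ofReal_ne_zero.mpr (sub_pos.mpr hx).ne'
  have hcast : (x : ℂ) - 1 / 2 = ((x - 1 / 2 : ℝ) : ℂ) := by push_cast; rfl
  rw [psiErrorMellin, hcast, mul_sub, mul_div_cancel₀ _ hsub]

end PsiError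

lemma exists_psiError_nonneg {δ : ℝ} (hδ : 0 ≤ δ) (h : ∀ᶠ t in atTop, t + δ * √t ≤ ψ t) :
    ∃ C, ∀ t, 0 ≤ psiError δ C t := by
  obtain ⟨T, hT⟩ := eventually_atTop.mp h
  refine ⟨-(max T 0 + δ * √(max T 0)), fun t ↦ ?_⟩
  rcases lt_or_ge t 1 with ht | ht
  · rw [(hasOrderLE_psiError δ _).eq_zero_of_lt_one t ht]
  · rw [psiError_of_one_le δ _ ht]
    rcases le_total T t with hTt | htT
    · have : 0 ≤ max T 0 + δ * √(max T 0) := by positivity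
      linarith [hT t hTt]
    · have : t + δ * √t ≤ max T 0 + δ * √(max T 0) := by
        gcongr <;> exact le_max_of_le_left htT
      linarith [psi_nonneg t]

/- The Mellin transform of a nonnegative error term would be nonnegative on `(1 / 2, ∞)`, where `ζ`
has no zeros, contradicting the sign of its residue at `1 / 2`. -/
lemma frequently_psi_lt_add_mul_sqrt {δ : ℝ} (hδ : 0 < δ) : ∃ᶠ t in atTop, ψ t < t + δ * √t := by
  intro hev
  obtain ⟨C, herror₀⟩ := exists_psiError_nonneg hδ.le (hev.mono fun _ ↦ not_lt.mp)
  have hnonneg (x : ℝ) (hx : 1 / 2 < x) : 0 ≤ psiErrorMellin δ C x := by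
    have hopen : IsOpen {s : ℂ | 1 / 2 < s.re ∧ riemannZeta₁ s ≠ 0} :=
      (isOpen_lt continuous_const Complex.continuous_re).inter
        (isOpen_ne_fun differentiable_riemannZeta₁.continuous continuous_const)
    refine (hasOrderLE_psiError δ C).nonneg_of_mellin_eq herror₀ hopen
      (differentiableOn_psiErrorMellin δ C) (fun _ ↦ mellin_psiError δ C) fun y hy ↦ ?_
    have hy' := hx.trans_le hy
    exact ⟨by rwa [Complex.ofReal_re], riemannZeta₁_ofReal_ne_zero (one_half_pos.trans hy')⟩
  have hlim : 0 ≤ (-δ : ℂ) := by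
    refine ge_of_tendsto (tendsto_sub_half_mul_psiErrorMellin δ C) ?_
    filter_upwards [self_mem_nhdsWithin] with x (hx : 1 / 2 < x)
    exact mul_nonneg (Complex.zero_le_real.mpr (sub_pos.mpr hx).le) (hnonneg x hx)
  rw [← Complex.ofReal_neg, Complex.zero_le_real] at hlim
  linarith

end ChebyshevPsi

section ChebyshevTheta

open Chebyshev

lemma theta_add_theta_sqrt_le_psi {x : ℝ} (hx : 0 ≤ x) : θ x + θ √x ≤ ψ x := by
  have hψ := psi_sub_theta_ge_psi_add_psi_add_psi hx
  rw [← one_div, ← Real.sqrt_eq_rpow] at hψ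
  linarith [theta_le_psi √x, psi_nonneg (x ^ (3 : ℝ)⁻¹), psi_nonneg (x ^ (7 : ℝ)⁻¹)]

/- `θ` undershoots because `ψ - θ` contains the term `θ √x ~ √x`. -/
lemma frequently_theta_lt_sub_mul_sqrt {c : ℝ} (hc : c < 1) :
    ∃ᶠ x in atTop, θ x < x - c * √x := by
  intro hev
  have hθ : ∀ᶠ x in atTop, x - c * √x ≤ θ x := hev.mono fun _ ↦ not_lt.mp
  have hδ : 0 < (1 - c) / 2 := by linarith
  have hfourth : Tendsto (fun x : ℝ ↦ √√x) atTop atTop :=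
    Real.tendsto_sqrt_atTop.comp Real.tendsto_sqrt_atTop
  refine frequently_psi_lt_add_mul_sqrt hδ ?_
  filter_upwards [hθ, Real.tendsto_sqrt_atTop.eventually hθ, eventually_ge_atTop 0,
    hfourth.eventually_ge_atTop (c / ((1 - c) / 2))] with x hx hsqrt hx₀ hlarge
  have herr : c * √√x ≤ (1 - c) / 2 * √x := calc
    c * √√x ≤ √√x * ((1 - c) / 2) * √√x := by gcongr; exact (div_le_iff₀ hδ).mp hlarge
    _ = (1 - c) / 2 * (√√x * √√x) := by ring
    _ = (1 - c) / 2 * √x := by rw [Real.mul_self_sqrt (Real.sqrt_nonneg x)]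
  linarith [theta_add_theta_sqrt_le_psi hx₀]

lemma theta_le_theta_add_log {x : ℝ} {q : ℕ} (hx : 0 ≤ x) (hxq : x < q)
    (hmin : ∀ p : ℕ, p.Prime → x < p → q ≤ p) : θ q ≤ θ x + Real.log q := by
  have hnotMem : q ∉ (Finset.Ioc 0 ⌊x⌋₊).filter Nat.Prime := fun h ↦
    ((Nat.le_floor_iff hx).mp (Finset.mem_Ioc.mp (Finset.mem_filter.mp h).1).2).not_gt hxq
  rw [theta, theta, Nat.floor_natCast, add_comm,
    ← Finset.sum_insert (f := fun p : ℕ ↦ Real.log p) hnotMem]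
  refine Finset.sum_le_sum_of_subset_of_nonneg (fun p hp ↦ ?_) fun p _ _ ↦ Real.log_natCast_nonneg p
  simp only [Finset.mem_insert, Finset.mem_filter, Finset.mem_Ioc] at hp ⊢
  rcases lt_or_ge x p with hxp | hpx
  · exact .inl (hp.1.2.antisymm (hmin p hp.2 hxp))
  · exact .inr ⟨⟨hp.2.pos, Nat.le_floor hpx⟩, hp.2⟩

lemma exists_prime_gt_forall_le (x : ℝ) :
    ∃ q : ℕ, x < q ∧ q.Prime ∧ ∀ p : ℕ, p.Prime → x < p → q ≤ p := by
  classical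
  have hex : ∃ p : ℕ, p.Prime ∧ x < p := by
    obtain ⟨p, hxp, hp⟩ := Nat.exists_infinite_primes (⌊x⌋₊ + 1)
    exact ⟨p, hp, (Nat.lt_floor_add_one x).trans_le (by exact_mod_cast hxp)⟩
  exact ⟨Nat.find hex, (Nat.find_spec hex).2, (Nat.find_spec hex).1,
    fun p hp hxp ↦ Nat.find_min' hex ⟨hp, hxp⟩⟩

lemma sub_mul_sqrt_le_sub_mul_sqrt {c x y : ℝ} (hc : c ≤ 1) (hx : 1 ≤ x) (hxy : x ≤ y) :
    x - c * √x ≤ y - c * √y := by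
  have hx₁ : 1 ≤ √x := Real.one_le_sqrt.mpr hx
  have hsqrt : √x ≤ √y := Real.sqrt_le_sqrt hxy
  have hsub : y - x = (√y - √x) * (√y + √x) := by
    linear_combination -Real.mul_self_sqrt (zero_le_one.trans (hx.trans hxy)) +
      Real.mul_self_sqrt (zero_le_one.trans hx)
  nlinarith

/- Between `x` and the next prime `q`, `θ` only increases by `log q`. -/
lemma frequently_prime_theta_lt {c : ℝ} (hc : c < 1) :
    ∃ᶠ q : ℕ in atTop, q.Prime ∧ θ q < q - c * √q := by
  obtain ⟨c', hcc', hc'⟩ := exists_between hc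
  have hlog : ∀ᶠ y : ℝ in atTop, Real.log y ≤ (c' - c) * √y := by
    filter_upwards [(isLittleO_log_rpow_atTop one_half_pos).bound (sub_pos.mpr hcc'),
      eventually_ge_atTop 1] with y hy hy₁
    rwa [← Real.sqrt_eq_rpow, Real.norm_of_nonneg (Real.log_nonneg hy₁),
      Real.norm_of_nonneg (Real.sqrt_nonneg y)] at hy
  obtain ⟨Y, hY⟩ := eventually_atTop.mp hlog
  refine frequently_atTop.mpr fun B ↦ ?_
  obtain ⟨x, hx, hθx⟩ :=
    frequently_atTop.mp (frequently_theta_lt_sub_mul_sqrt hc') (max (max Y B) 1)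
  obtain ⟨⟨hYx, hBx⟩, hx₁⟩ := by simpa only [max_le_iff] using hx
  obtain ⟨q, hxq, hq, hmin⟩ := exists_prime_gt_forall_le x
  refine ⟨q, by exact_mod_cast hBx.trans hxq.le, hq, ?_⟩
  linarith [theta_le_theta_add_log (zero_le_one.trans hx₁) hxq hmin, hY q (hYx.trans hxq.le),
    sub_mul_sqrt_le_sub_mul_sqrt hc'.le hx₁ hxq.le]

end ChebyshevTheta

section PrimePowerSum

/-- The contribution of `p ^ k` to `primePowSum`: the prime power itself, except that the trivial
power `p ^ 0` costs nothing. -/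
def primePowCost (p k : ℕ) : ℕ := if k = 0 then 0 else p ^ k

/-- The function `ℓ`: the sum of the prime powers exactly dividing `M`. It is the least `n` such
that some permutation of `n` letters has order `M`. -/
noncomputable def primePowSum (M : ℕ) : ℕ := M.factorization.sum primePowCost

@[simp]
lemma primePowCost_zero (p : ℕ) : primePowCost p 0 = 0 := rfl

lemma primePowCost_of_ne_zero (p : ℕ) {k : ℕ} (hk : k ≠ 0) : primePowCost p k = p ^ k :=
  if_neg hk

lemma primePowSum_eq_sum {M : ℕ} {T : Finset ℕ} (hT : M.primeFactors ⊆ T) :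
    primePowSum M = ∑ p ∈ T, primePowCost p (M.factorization p) :=
  Finsupp.sum_of_support_subset _ hT _ fun p _ ↦ primePowCost_zero p

lemma factorization_ne_zero_of_mem_primeFactors {M p : ℕ} (hp : p ∈ M.primeFactors) :
    M.factorization p ≠ 0 := by
  rwa [← Finsupp.mem_support_iff, Nat.support_factorization]

lemma primePowSum_eq_sum_primeFactors (M : ℕ) :
    primePowSum M = ∑ p ∈ M.primeFactors, p ^ M.factorization p :=
  (primePowSum_eq_sum subset_rfl).trans <| Finset.sum_congr rfl fun p hp ↦
    primePowCost_of_ne_zero p (factorization_ne_zero_of_mem_primeFactors hp)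

lemma le_primePowSum {q N : ℕ} (hq : q ∈ N.primeFactors) : q ≤ primePowSum N := by
  rw [primePowSum_eq_sum_primeFactors]
  exact (Nat.le_self_pow (factorization_ne_zero_of_mem_primeFactors hq) q).trans
    (Finset.single_le_sum (f := fun p ↦ p ^ N.factorization p) (fun _ _ ↦ Nat.zero_le _) hq)

lemma primePowSum_lcm_le {a b : ℕ} (ha : a ≠ 0) (hb : b ≠ 0) :
    primePowSum (a.lcm b) ≤ primePowSum a + primePowSum b := by
  have hlcm : (a.lcm b).primeFactors ⊆ a.primeFactors ∪ b.primeFactors := by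
    rw [← Nat.primeFactors_mul ha hb]
    exact Nat.primeFactors_mono (Nat.lcm_dvd_mul a b) (mul_ne_zero ha hb)
  rw [primePowSum_eq_sum hlcm, primePowSum_eq_sum Finset.subset_union_left,
    primePowSum_eq_sum Finset.subset_union_right, ← Finset.sum_add_distrib]
  refine Finset.sum_le_sum fun p _ ↦ ?_
  rw [Nat.factorization_lcm ha hb, Finsupp.sup_apply]
  rcases max_choice (a.factorization p) (b.factorization p) with h | h <;> rw [h]
  exacts [Nat.le_add_right _ _, Nat.le_add_left _ _]

lemma primePowSum_prime_pow {p k : ℕ} (hp : p.Prime) :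
    primePowSum (p ^ k) = primePowCost p k := by
  rw [primePowSum, hp.factorization_pow, Finsupp.sum_single_index (primePowCost_zero p)]

lemma primePowSum_le_self (M : ℕ) : primePowSum M ≤ M := by
  induction M using Nat.recOnPosPrimePosCoprime with
  | prime_pow p k hp hk =>
    rw [primePowSum_prime_pow hp, primePowCost_of_ne_zero p hk.ne']
  | zero => simp [primePowSum]
  | one => simp [primePowSum]
  | coprime a b ha hb hab iha ihb =>
    rw [← hab.lcm_eq_mul]
    refine (primePowSum_lcm_le (by lia) (by lia)).trans ?_
    rw [hab.lcm_eq_mul]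
    nlinarith

lemma primePowSum_multisetLcm_le {s : Multiset ℕ} (hs : 0 ∉ s) : primePowSum s.lcm ≤ s.sum := by
  induction s using Multiset.induction_on with
  | empty => simp [primePowSum]
  | cons a s ih =>
    rw [Multiset.mem_cons, not_or] at hs
    rw [Multiset.lcm_cons, Multiset.sum_cons]
    exact (primePowSum_lcm_le (Ne.symm hs.1) ((Multiset.lcm_eq_zero_iff s).not.mpr hs.2)).trans
      (add_le_add (primePowSum_le_self a) (ih hs.2))

lemma primePowSum_orderOf_le {α : Type*} [Fintype α] (σ : Equiv.Perm α) :
    primePowSum (orderOf σ) ≤ Fintype.card α := by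
  classical
  rw [← Equiv.Perm.lcm_cycleType]
  refine (primePowSum_multisetLcm_le fun h ↦ ?_).trans ?_
  · simpa using Equiv.Perm.two_le_of_mem_cycleType h
  · exact σ.sum_cycleType.trans_le (Finset.card_le_univ _)

lemma lcm_primeFactors_pow_factorization {N : ℕ} (hN : N ≠ 0) :
    N.primeFactors.lcm (fun p ↦ p ^ N.factorization p) = N := by
  refine Nat.dvd_antisymm (Finset.lcm_dvd fun p _ ↦ Nat.ordProj_dvd N p) ?_
  conv_lhs => rw [← Nat.prod_factorization_pow_eq_self hN]
  refine Finset.prod_dvd_of_isRelPrime (fun p hp r hr hpr ↦ ?_) fun p hp ↦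
    Finset.dvd_lcm (f := fun p ↦ p ^ N.factorization p) hp
  exact Nat.coprime_iff_isRelPrime.mp <| .pow _ _ <|
    (Nat.coprime_primes (Nat.prime_of_mem_primeFactors hp) (Nat.prime_of_mem_primeFactors hr)).mpr
      hpr

lemma exists_orderOf_eq {α : Type*} [Fintype α] {N : ℕ} (hN : N ≠ 0)
    (h : primePowSum N ≤ Fintype.card α) : ∃ σ : Equiv.Perm α, orderOf σ = N := by
  classical
  obtain ⟨σ, hσ⟩ := (Equiv.Perm.exists_with_cycleType_iff α
    (m := N.primeFactors.val.map fun p ↦ p ^ N.factorization p)).mpr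
    ⟨(primePowSum_eq_sum_primeFactors N).symm.trans_le h, fun a ha ↦ by
      obtain ⟨p, hp, rfl⟩ := Multiset.mem_map.mp ha
      exact (Nat.prime_of_mem_primeFactors hp).two_le.trans
        (Nat.le_self_pow (factorization_ne_zero_of_mem_primeFactors hp) p)⟩
  refine ⟨σ, ?_⟩
  rw [← Equiv.Perm.lcm_cycleType, hσ]
  exact lcm_primeFactors_pow_factorization hN

end PrimePowerSum

section Superchampion

/-- The contribution of `p ^ k` to the Lagrangian `ℓ M - ρ * log M`. -/
noncomputable def penalizedCost (ρ : ℝ) (p k : ℕ) : ℝ := primePowCost p k - ρ * (k * Real.log p)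

/-- `N` is a superchampion with parameter `ρ`: it minimizes `ℓ M - ρ * log M` over all `M ≠ 0`.
As this quantity is additive over the primes, minimality is imposed one prime at a time. -/
structure IsSuperchampion (ρ : ℝ) (N : ℕ) : Prop where
  ne_zero : N ≠ 0
  penalizedCost_le : ∀ p : ℕ, p.Prime → ∀ k : ℕ,
    penalizedCost ρ p (N.factorization p) ≤ penalizedCost ρ p k

variable {ρ : ℝ} {p q N : ℕ}

@[simp]
lemma penalizedCost_zero (ρ : ℝ) (p : ℕ) : penalizedCost ρ p 0 = 0 := by simp [penalizedCost]

lemma penalizedCost_of_ne_zero (ρ : ℝ) (p : ℕ) {k : ℕ} (hk : k ≠ 0) :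
    penalizedCost ρ p k = p ^ k - ρ * (k * Real.log p) := by
  simp [penalizedCost, primePowCost_of_ne_zero p hk]

lemma sum_penalizedCost (ρ : ℝ) {M : ℕ} {T : Finset ℕ} (hT : M.primeFactors ⊆ T) :
    ∑ p ∈ T, penalizedCost ρ p (M.factorization p) = primePowSum M - ρ * Real.log M := by
  rw [Real.log_nat_eq_sum_factorization, primePowSum_eq_sum hT,
    Finsupp.sum_of_support_subset _ hT _ fun p _ ↦ by simp, Finset.mul_sum, Nat.cast_sum,
    ← Finset.sum_sub_distrib]
  rfl

lemma IsSuperchampion.primePowSum_sub_le (hN : IsSuperchampion ρ N) (M : ℕ) :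
    primePowSum N - ρ * Real.log N ≤ primePowSum M - ρ * Real.log M := by
  rw [← sum_penalizedCost ρ (Finset.subset_union_left (s₂ := M.primeFactors)),
    ← sum_penalizedCost ρ (Finset.subset_union_right (s₁ := N.primeFactors))]
  refine Finset.sum_le_sum fun p hp ↦ hN.penalizedCost_le p ?_ _
  exact (Finset.mem_union.mp hp).elim Nat.prime_of_mem_primeFactors Nat.prime_of_mem_primeFactors

lemma IsSuperchampion.landau_primePowSum (hρ : 0 < ρ) (hN : IsSuperchampion ρ N) :
    landau (primePowSum N) = N := by
  refine le_antisymm (Finset.sup_le fun σ _ ↦ ?_) ?_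
  · have hℓ : (primePowSum (orderOf σ) : ℝ) ≤ primePowSum N := by
      exact_mod_cast (primePowSum_orderOf_le σ).trans_eq (Fintype.card_fin _)
    have hlog : ρ * Real.log (orderOf σ) ≤ ρ * Real.log N := by
      linarith [hN.primePowSum_sub_le (orderOf σ)]
    have hcast := (Real.log_le_log_iff (Nat.cast_pos.mpr (orderOf_pos σ))
      (Nat.cast_pos.mpr (Nat.pos_of_ne_zero hN.ne_zero))).mp (le_of_mul_le_mul_left hlog hρ)
    exact_mod_cast hcast
  · obtain ⟨σ, hσ⟩ := exists_orderOf_eq hN.ne_zero (Fintype.card_fin (primePowSum N)).ge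
    exact hσ.ge.trans (Finset.le_sup (f := fun σ ↦ orderOf σ) (Finset.mem_univ σ))

lemma exists_forall_penalizedCost_le (ρ : ℝ) (hp : 1 < p) :
    ∃ k, ∀ j, penalizedCost ρ p k ≤ penalizedCost ρ p j := by
  have hlim := (tendsto_pow_const_div_const_pow_of_one_lt 1
    (Nat.one_lt_cast.mpr hp : (1 : ℝ) < p)).const_mul (ρ * Real.log p)
  rw [mul_zero] at hlim
  obtain ⟨K, hK⟩ := eventually_atTop.mp (hlim.eventually (gt_mem_nhds zero_lt_one))
  obtain ⟨k, -, hmin⟩ :=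
    (Finset.range (K + 1)).exists_min_image (penalizedCost ρ p) ⟨0, by simp⟩
  refine ⟨k, fun j ↦ ?_⟩
  rcases lt_or_ge j (K + 1) with hj | hj
  · exact hmin j (Finset.mem_range.mpr hj)
  · have hlt := hK j (by lia)
    rw [pow_one, ← mul_div_assoc, div_lt_one (by positivity)] at hlt
    calc penalizedCost ρ p k ≤ penalizedCost ρ p 0 := hmin 0 (by simp)
      _ = 0 := penalizedCost_zero ρ p
      _ ≤ penalizedCost ρ p j := by
        rw [penalizedCost_of_ne_zero ρ p (by lia)]
        linarith

lemma mul_le_pow_of_two_le (hp : 2 ≤ p) (k : ℕ) : k * p ≤ p ^ k := by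
  cases k with
  | zero => simp
  | succ j =>
    rw [pow_succ]
    exact Nat.mul_le_mul_right p (j.lt_pow_self hp)

lemma penalizedCost_nonneg (hp : 2 ≤ p) (hρ : ρ * Real.log p ≤ p) (k : ℕ) :
    0 ≤ penalizedCost ρ p k := by
  rcases eq_or_ne k 0 with rfl | hk
  · rw [penalizedCost_zero]
  · have hpow : (k : ℝ) * p ≤ p ^ k := by exact_mod_cast mul_le_pow_of_two_le hp k
    have hmul : k * (ρ * Real.log p) ≤ k * p := by gcongr
    rw [penalizedCost_of_ne_zero ρ p hk]
    linarith

lemma div_log_mul_log_le {x y : ℝ} (hx : Real.exp 1 ≤ x) (hxy : x ≤ y) :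
    x / Real.log x * Real.log y ≤ y := by
  have hx₁ : 1 < x := (Real.one_lt_exp_iff.mpr one_pos).trans_le hx
  have hanti := Real.log_div_self_antitoneOn hx (hx.trans hxy) hxy
  rw [div_le_div_iff₀ (by linarith) (by linarith)] at hanti
  rw [div_mul_eq_mul_div, div_le_iff₀ (Real.log_pos hx₁)]
  linarith

/- `q / log q` is the parameter at which the exponents `0` and `1` of `q` tie. -/
lemma penalizedCost_self_one (hq : 1 < q) : penalizedCost (q / Real.log q) q 1 = 0 := by
  have hlog : Real.log q ≠ 0 := (Real.log_pos (Nat.one_lt_cast.mpr hq)).ne'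
  rw [penalizedCost_of_ne_zero _ q one_ne_zero]
  field_simp
  simp

lemma exists_factorization_eq {α : ℕ → ℕ} (hα : ∀ p, α p ≠ 0 → p.Prime ∧ p ≤ q) :
    ∃ N : ℕ, N ≠ 0 ∧ ∀ p, N.factorization p = α p := by
  let f : ℕ →₀ ℕ := .onFinset (Finset.range (q + 1)) α fun p hp ↦
    Finset.mem_range_succ_iff.mpr (hα p hp).2
  have hf : ∀ p ∈ f.support, p.Prime := fun p hp ↦ (hα p (Finsupp.mem_support_iff.mp hp)).1
  refine ⟨f.prod (· ^ ·), ?_, fun p ↦ by rw [Nat.prod_pow_factorization_eq_self hf]; rfl⟩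
  exact Finset.prod_ne_zero_iff.mpr fun p hp ↦ pow_ne_zero _ (hf p hp).ne_zero

lemma exists_isSuperchampion (hq : q.Prime) (hq₃ : 3 ≤ q) :
    ∃ N, IsSuperchampion (q / Real.log q) N ∧ q ∈ N.primeFactors ∧
      ∀ p ∈ N.primeFactors, p ≤ q := by
  have hexp : Real.exp 1 ≤ q := Real.exp_one_lt_three.le.trans (by exact_mod_cast hq₃)
  have hnonneg : ∀ p, q ≤ p → ∀ k, 0 ≤ penalizedCost (q / Real.log q) p k := fun p hqp ↦
    penalizedCost_nonneg (by lia) (div_log_mul_log_le hexp (Nat.cast_le.mpr hqp))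
  have hexponent : ∀ p, ∃ k, (k ≠ 0 → p.Prime ∧ p ≤ q) ∧ (p = q → k ≠ 0) ∧
      (p.Prime → ∀ j, penalizedCost (q / Real.log q) p k ≤ penalizedCost (q / Real.log q) p j) := by
    intro p
    rcases lt_trichotomy p q with hpq | rfl | hqp
    · by_cases hp : p.Prime
      · obtain ⟨k, hk⟩ := exists_forall_penalizedCost_le (q / Real.log q) hp.one_lt
        exact ⟨k, fun _ ↦ ⟨hp, hpq.le⟩, fun h ↦ absurd h hpq.ne, fun _ ↦ hk⟩
      · exact ⟨0, fun h ↦ absurd rfl h, fun h ↦ absurd h hpq.ne, fun h ↦ absurd h hp⟩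
    · exact ⟨1, fun _ ↦ ⟨hq, le_rfl⟩, fun _ ↦ one_ne_zero, fun _ j ↦
        (penalizedCost_self_one hq.one_lt).trans_le (hnonneg p le_rfl j)⟩
    · exact ⟨0, fun h ↦ absurd rfl h, fun h ↦ absurd h hqp.ne', fun _ j ↦
        (penalizedCost_zero _ p).trans_le (hnonneg p hqp.le j)⟩
  choose α hα hαq hmin using hexponent
  obtain ⟨N, hN, hfac⟩ := exists_factorization_eq hα
  have hmem : ∀ p, p ∈ N.primeFactors ↔ α p ≠ 0 := fun p ↦ by
    rw [← hfac, ← Nat.support_factorization, Finsupp.mem_support_iff]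
  exact ⟨N, ⟨hN, fun p hp ↦ hfac p ▸ hmin p hp⟩, (hmem q).mpr (hαq q rfl),
    fun p hp ↦ (hα p ((hmem p).mp hp)).2⟩

lemma maxPrimeFac_eq (hq : q ∈ N.primeFactors) (hle : ∀ p ∈ N.primeFactors, p ≤ q) :
    maxPrimeFac N = q :=
  le_antisymm (Finset.sup_le hle) (Finset.le_sup (f := id) hq)

/- Compare the exponent of `p` with the next smaller one. -/
lemma IsSuperchampion.pow_mul_sub_one_le (hN : IsSuperchampion ρ N) (hp : p.Prime) {k : ℕ}
    (hk : N.factorization p = k + 2) : (p : ℝ) ^ (k + 1) * (p - 1) ≤ ρ * Real.log p := by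
  have hle := hN.penalizedCost_le p hp (k + 1)
  rw [hk, penalizedCost_of_ne_zero ρ p (by lia), penalizedCost_of_ne_zero ρ p (by lia)] at hle
  push_cast at hle
  linear_combination hle

end Superchampion

section LogBound

open Chebyshev

lemma sum_log_le_theta {s : Finset ℕ} {x : ℝ} (hs : ∀ p ∈ s, p.Prime ∧ p ≤ x) :
    ∑ p ∈ s, Real.log p ≤ θ x := by
  refine Finset.sum_le_sum_of_subset_of_nonneg (fun p hp ↦ ?_) fun p _ _ ↦ Real.log_natCast_nonneg p
  rw [Finset.mem_filter, Finset.mem_Ioc]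
  exact ⟨⟨(hs p hp).1.pos, Nat.le_floor (hs p hp).2⟩, (hs p hp).1⟩

lemma card_le_of_forall_prime_le {s : Finset ℕ} {z : ℝ} (hz : 0 ≤ z)
    (hs : ∀ p ∈ s, p.Prime ∧ p ≤ z) : (s.card : ℝ) ≤ z := by
  have hsub : s ⊆ Finset.Ioc 0 ⌊z⌋₊ := fun p hp ↦
    Finset.mem_Ioc.mpr ⟨(hs p hp).1.pos, Nat.le_floor (hs p hp).2⟩
  calc (s.card : ℝ) ≤ (Finset.Ioc 0 ⌊z⌋₊).card := by exact_mod_cast Finset.card_le_card hsub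
    _ = ⌊z⌋₊ := by simp
    _ ≤ z := Nat.floor_le hz

/- Primes with exponent `1`, `2` and at least `3` are charged to the first term, the first two terms
and all three terms, respectively. -/
lemma log_le_theta_add_theta_add_mul_log {N : ℕ} {x y z w : ℝ} (hz : 0 ≤ z) (hw : 1 ≤ w)
    (hx : ∀ p ∈ N.primeFactors, p ≤ x)
    (hy : ∀ p ∈ N.primeFactors, 2 ≤ N.factorization p → p ≤ y)
    (hzw : ∀ p ∈ N.primeFactors, 3 ≤ N.factorization p →
      p ≤ z ∧ (p : ℝ) ^ N.factorization p ≤ w) :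
    Real.log N ≤ θ x + θ y + z * Real.log w := by
  have hterm : ∀ p ∈ N.primeFactors, N.factorization p * Real.log p ≤ Real.log p +
      (if 2 ≤ N.factorization p then Real.log p else 0) +
      (if 3 ≤ N.factorization p then Real.log w else 0) := by
    intro p hp
    have hlog := Real.log_natCast_nonneg p
    have hp₀ : (0 : ℝ) < p := Nat.cast_pos.mpr (Nat.pos_of_mem_primeFactors hp)
    rcases lt_trichotomy (N.factorization p) 2 with h | h | h
    · have hone : (N.factorization p : ℝ) ≤ 1 := by exact_mod_cast Nat.lt_succ_iff.mp h
      rw [if_neg (by lia), if_neg (by lia), add_zero, add_zero]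
      exact mul_le_of_le_one_left hlog hone
    · rw [if_pos h.ge, if_neg (by lia), h, add_zero, Nat.cast_ofNat, two_mul]
    · rw [if_pos h.le, if_pos (Nat.succ_le_of_lt h), ← Real.log_pow]
      linarith [Real.log_le_log (by positivity) (hzw p hp h).2]
  have hsum := Finset.sum_le_sum hterm
  rw [Finset.sum_add_distrib, Finset.sum_add_distrib, ← Finset.sum_filter, ← Finset.sum_filter,
    Finset.sum_const, nsmul_eq_mul] at hsum
  have hlogN : Real.log N = ∑ p ∈ N.primeFactors, N.factorization p * Real.log p :=
    Real.log_nat_eq_sum_factorization N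
  have hfst : ∑ p ∈ N.primeFactors, Real.log p ≤ θ x :=
    sum_log_le_theta fun p hp ↦ ⟨Nat.prime_of_mem_primeFactors hp, hx p hp⟩
  have hsnd : ∑ p ∈ N.primeFactors with 2 ≤ N.factorization p, Real.log p ≤ θ y := by
    refine sum_log_le_theta fun p hp ↦ ?_
    rw [Finset.mem_filter] at hp
    exact ⟨Nat.prime_of_mem_primeFactors hp.1, hy p hp.1 hp.2⟩
  have hcard : ((N.primeFactors.filter (3 ≤ N.factorization ·)).card : ℝ) ≤ z := by
    refine card_le_of_forall_prime_le hz fun p hp ↦ ?_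
    rw [Finset.mem_filter] at hp
    exact ⟨Nat.prime_of_mem_primeFactors hp.1, (hzw p hp.1 hp.2).1⟩
  linarith [mul_le_mul_of_nonneg_right hcard (Real.log_nonneg hw)]

variable {N p : ℕ} {x : ℝ}

lemma IsSuperchampion.pow_mul_sub_one_le_of_le (hN : IsSuperchampion (x / Real.log x) N)
    (hp : p.Prime) (hpx : p ≤ x) {k : ℕ} (hk : N.factorization p = k + 2) :
    (p : ℝ) ^ (k + 1) * (p - 1) ≤ x := by
  have hx : 1 < x := (Nat.one_lt_cast.mpr hp.one_lt).trans_le hpx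
  have hlog : Real.log p ≤ Real.log x := Real.log_le_log (Nat.cast_pos.mpr hp.pos) hpx
  refine (hN.pow_mul_sub_one_le hp hk).trans ?_
  rw [div_mul_eq_mul_div, div_le_iff₀ (Real.log_pos hx)]
  gcongr

lemma IsSuperchampion.pow_factorization_le (hN : IsSuperchampion (x / Real.log x) N)
    (hp : p.Prime) (hpx : p ≤ x) (hv : 2 ≤ N.factorization p) :
    (p : ℝ) ^ N.factorization p ≤ 2 * x := by
  obtain ⟨k, hk⟩ := Nat.exists_eq_add_of_le' hv
  have hp₂ : (2 : ℝ) ≤ p := by exact_mod_cast hp.two_le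
  rw [hk]
  calc (p : ℝ) ^ (k + 2) = p ^ (k + 1) * p := pow_succ _ _
    _ ≤ p ^ (k + 1) * (2 * (p - 1)) := by gcongr; linarith
    _ = 2 * (p ^ (k + 1) * (p - 1)) := by ring
    _ ≤ 2 * x := by gcongr; exact hN.pow_mul_sub_one_le_of_le hp hpx hk

lemma IsSuperchampion.le_rpow_one_third (hN : IsSuperchampion (x / Real.log x) N)
    (hp : p.Prime) (hpx : p ≤ x) (hv : 3 ≤ N.factorization p) :
    (p : ℝ) ≤ (2 * x) ^ (1 / 3 : ℝ) := by
  have hx : 0 ≤ x := p.cast_nonneg.trans hpx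
  have hcube : (p : ℝ) ^ 3 ≤ 2 * x :=
    (pow_le_pow_right₀ (Nat.one_le_cast.mpr hp.one_le) hv).trans
      (hN.pow_factorization_le hp hpx (by lia))
  rw [one_div, Real.le_rpow_inv_iff_of_pos (by positivity) (by positivity) (by norm_num)]
  exact_mod_cast hcube

/- If `p ^ 2 ∣ N`, then `p ^ 2 ≤ 2 * x`, so that `log p` is about `log x / 2` at most, which in turn
improves the bound on `p * (p - 1)` from `x` to about `x / 2`. The constants `0.505` and `0.7107`
stand for `1 / 2` and `√(1 / 2)`. -/
lemma IsSuperchampion.le_one_add_mul_sqrt (hN : IsSuperchampion (x / Real.log x) N)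
    (hx : 100 * Real.log 2 ≤ Real.log x) (hp : p.Prime) (hpx : p ≤ x)
    (hv : 2 ≤ N.factorization p) : (p : ℝ) ≤ 1 + 0.7107 * √x := by
  obtain ⟨k, hk⟩ := Nat.exists_eq_add_of_le' hv
  have hp₂ : (2 : ℝ) ≤ p := by exact_mod_cast hp.two_le
  have hlogx : 0 < Real.log x := Real.log_pos (by linarith)
  have hsq : (p : ℝ) ^ 2 ≤ 2 * x :=
    (pow_le_pow_right₀ (by linarith) hv).trans (hN.pow_factorization_le hp hpx hv)
  have hlog : Real.log p ≤ 0.505 * Real.log x := by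
    have hlog₂ := Real.log_le_log (by positivity) hsq
    rw [Real.log_pow, Real.log_mul two_ne_zero (by linarith), Nat.cast_ofNat] at hlog₂
    linarith
  have hmul : (p : ℝ) * (p - 1) ≤ 0.505 * x := calc
    (p : ℝ) * (p - 1) ≤ p ^ (k + 1) * (p - 1) := by
      gcongr
      · linarith
      · exact le_self_pow₀ (by linarith) k.succ_ne_zero
    _ ≤ x / Real.log x * Real.log p := hN.pow_mul_sub_one_le hp hk
    _ ≤ x / Real.log x * (0.505 * Real.log x) := by gcongr; exact div_nonneg (by linarith) hlogx.le
    _ = 0.505 * x := by field_simp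
  have hsub : (p : ℝ) - 1 ≤ 0.7107 * √x := by
    refine le_of_sq_le_sq ?_ (by positivity)
    rw [mul_pow, Real.sq_sqrt (by linarith)]
    nlinarith
  linarith

lemma isLittleO_rpow_mul_log_rpow_atTop {a b : ℝ} (hab : a < b) :
    (fun x : ℝ ↦ x ^ a * Real.log x) =o[atTop] fun x ↦ x ^ b := by
  refine ((isBigO_refl (fun x : ℝ ↦ x ^ a) atTop).mul_isLittleO
    (isLittleO_log_rpow_atTop (sub_pos.mpr hab))).congr' .rfl ?_
  filter_upwards [eventually_gt_atTop 0] with x hx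
  rw [← Real.rpow_add hx, add_sub_cancel]

lemma eventually_rpow_one_third_mul_log_le {ε : ℝ} (hε : 0 < ε) :
    ∀ᶠ x : ℝ in atTop, (2 * x) ^ (1 / 3 : ℝ) * Real.log (2 * x) ≤ ε * √x := by
  have hlog : ∀ᶠ y : ℝ in atTop, y ^ (1 / 3 : ℝ) * Real.log y ≤ ε / 2 * √y := by
    filter_upwards [(isLittleO_rpow_mul_log_rpow_atTop
      (by norm_num : (1 / 3 : ℝ) < 1 / 2)).bound (half_pos hε)] with y hy
    rw [← Real.sqrt_eq_rpow, Real.norm_of_nonneg (Real.sqrt_nonneg y)] at hy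
    exact (Real.le_norm_self _).trans hy
  filter_upwards [(tendsto_id.const_mul_atTop two_pos).eventually hlog, eventually_ge_atTop 0]
    with x hlogx hx
  have hsqrt : √(2 * x) ≤ 2 * √x :=
    Real.sqrt_le_iff.mpr ⟨by positivity, by rw [mul_pow, Real.sq_sqrt hx]; linarith⟩
  calc (2 * x) ^ (1 / 3 : ℝ) * Real.log (2 * x) ≤ ε / 2 * √(2 * x) := hlogx
    _ ≤ ε / 2 * (2 * √x) := by gcongr
    _ = ε * √x := by ring

lemma eventually_log_isSuperchampion_le :
    ∀ᶠ x : ℝ in atTop, ∀ N, IsSuperchampion (x / Real.log x) N → (∀ p ∈ N.primeFactors, p ≤ x) →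
      Real.log N ≤ θ x + 0.995 * √x := by
  filter_upwards [eventually_ge_atTop 1,
    eventually_rpow_one_third_mul_log_le (by norm_num : (0 : ℝ) < 0.001),
    Real.tendsto_sqrt_atTop.eventually_ge_atTop 1000,
    Real.tendsto_log_atTop.eventually_ge_atTop (100 * Real.log 2)]
    with x hx herr hsqrt hlog N hN hle
  have hbound : Real.log N ≤ θ x + θ (1 + 0.7107 * √x) + (2 * x) ^ (1 / 3 : ℝ) * Real.log (2 * x) :=
    log_le_theta_add_theta_add_mul_log (by positivity) (by linarith) hle
      (fun p hp ↦ hN.le_one_add_mul_sqrt hlog (Nat.prime_of_mem_primeFactors hp) (hle p hp))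
      fun p hp hv ↦ ⟨hN.le_rpow_one_third (Nat.prime_of_mem_primeFactors hp) (hle p hp) hv,
        hN.pow_factorization_le (Nat.prime_of_mem_primeFactors hp) (hle p hp) (by lia)⟩
  have hlog₄ : Real.log 4 ≤ 1.3863 := by
    rw [show (4 : ℝ) = 2 ^ 2 by norm_num, Real.log_pow]
    push_cast
    linarith [Real.log_two_lt_d9]
  have hθ : θ (1 + 0.7107 * √x) ≤ 1.3863 * (1 + 0.7107 * √x) :=
    (theta_le_log4_mul_x (by positivity)).trans (by gcongr)
  linarith

end LogBound

/-- There are infinitely many positive integers n with P⁺(g(n)) > log g(n). -/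
theorem stmt4 :
    {n : ℕ | 0 < n ∧ Real.log (landau n) < (maxPrimeFac (landau n) : ℝ)}.Infinite := by
  refine infinite_of_forall_exists_gt fun B ↦ ?_
  obtain ⟨q, ⟨hq, hθ⟩, hlog, hqB⟩ :=
    ((frequently_prime_theta_lt (c := 0.995) (by norm_num)).and_eventually
      ((tendsto_natCast_atTop_atTop.eventually eventually_log_isSuperchampion_le).and
        (eventually_gt_atTop (max B 3)))).exists
  obtain ⟨hBq, hq₃⟩ := max_lt_iff.mp hqB
  obtain ⟨N, hN, hqN, hle⟩ := exists_isSuperchampion hq hq₃.le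
  have hρ : 0 < q / Real.log q :=
    div_pos (Nat.cast_pos.mpr hq.pos) (Real.log_pos (Nat.one_lt_cast.mpr hq.one_lt))
  have hlogN : Real.log N < q := by linarith [hlog N hN fun p hp ↦ Nat.cast_le.mpr (hle p hp)]
  refine ⟨primePowSum N, ⟨hq.pos.trans_le (le_primePowSum hqN), ?_⟩,
    hBq.trans_le (le_primePowSum hqN)⟩
  rwa [hN.landau_primePowSum hρ, maxPrimeFac_eq hqN hle]
end

section
/- There exist infinitely many positive integers n such that P⁺(g(n)) < log g(n). -/
/-!
For `ρ > 0` the minimizers of `ℓ(M) - ρ log M`, where `ℓ(M)` is the sum of the prime powers exactly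
dividing `M`, are values of Landau's function. Taking `ρ = x / log x`, they have no prime factor
beyond `x`, while the largest of them is divisible by all primes up to `x` and so has logarithm at
least `θ(x)`. It therefore suffices that `θ(x) > x` for arbitrarily large `x`.

If this fails, then `x + C √x - ψ(x) ≥ 0` for all `x > 1` and some `C`. By Landau's theorem the
Mellin transform of this function converges for `Re s > 1/2`, and all zeros of the Riemann `ξ`
function lie on the critical line. As the transform of a nonnegative function, it restricts to
functions of positive type on vertical lines; hence so do its residues at the points `1/2 + i l`,
as a function of `l` on the discrete additive group `ℝ`. Multiplying by `1 / (a + i l)`, which is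
also of positive type, and averaging over Følner sets bounds `∑ m(γ) a / (a² + γ²)` over the zeros
`1/2 + i γ` of multiplicity `m(γ)`, uniformly in `a`. This makes `|ξ(1/2 + r)|` at most exponential
in `r`, contradicting the factorial growth of the Gamma factor.
-/

/-! ### Landau's function and the Chebyshev function -/

section LandauFunction

open Finset Chebyshev

/-- The additive function `ℓ(M) = ∑ p ^ v_p(M)` of Landau and Nicolas, summed over the primes
dividing `M`: the least `n` such that `S_n` contains a permutation of order `M`. -/
def primePowerSum (M : ℕ) : ℕ := ∑ p ∈ M.primeFactors, p ^ M.factorization p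

theorem primePowerSum_one : primePowerSum 1 = 0 := by simp [primePowerSum]

theorem primePowerSum_prime_pow {p k : ℕ} (hp : p.Prime) (hk : k ≠ 0) :
    primePowerSum (p ^ k) = p ^ k := by
  simp [primePowerSum, Nat.primeFactors_prime_pow hk hp, hp.factorization_pow]

theorem primePowerSum_mul {a b : ℕ} (h : a.Coprime b) :
    primePowerSum (a * b) = primePowerSum a + primePowerSum b := by
  unfold primePowerSum
  rw [h.primeFactors_mul, sum_union h.disjoint_primeFactors]
  congr 1 <;> refine sum_congr rfl fun p hp ↦ ?_
  · rw [Nat.factorization_eq_of_coprime_left h (by simpa using hp)]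
  · rw [Nat.factorization_eq_of_coprime_right h (by simpa using hp)]

theorem primePowerSum_le_self (a : ℕ) : primePowerSum a ≤ a := by
  induction a using Nat.recOnPosPrimePosCoprime with
  | zero => simp [primePowerSum]
  | one => simp [primePowerSum_one]
  | prime_pow p n hp hn => rw [primePowerSum_prime_pow hp hn.ne']
  | coprime a b ha hb hab iha ihb =>
    rw [primePowerSum_mul hab]
    nlinarith

theorem primePowerSum_le_of_dvd {a b : ℕ} (hb : b ≠ 0) (h : a ∣ b) :
    primePowerSum a ≤ primePowerSum b := by
  refine (sum_le_sum fun p hp ↦ ?_).trans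
    (sum_le_sum_of_subset (Nat.primeFactors_mono h hb))
  exact Nat.pow_le_pow_right (Nat.pos_of_mem_primeFactors hp)
    ((Nat.factorization_le_iff_dvd (ne_zero_of_dvd_ne_zero hb h) hb).2 h p)

theorem primePowerSum_lcm_le {a b : ℕ} (ha : a ≠ 0) (hb : b ≠ 0) :
    primePowerSum (a.lcm b) ≤ primePowerSum a + primePowerSum b := by
  rw [← Nat.factorizationLCMLeft_mul_factorizationLCMRight ha hb,
    primePowerSum_mul (Nat.coprime_factorizationLCMLeft_factorizationLCMRight a b)]
  exact add_le_add (primePowerSum_le_of_dvd ha (Nat.factorizationLCMLeft_dvd_left a b))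
    (primePowerSum_le_of_dvd hb (Nat.factorizationLCMRight_dvd_right a b))

theorem primePowerSum_multiset_lcm_le (S : Multiset ℕ) (h : 0 ∉ S) :
    primePowerSum S.lcm ≤ S.sum := by
  induction S using Multiset.induction_on with
  | empty => simp [primePowerSum_one]
  | cons a S ih =>
    obtain ⟨ha, hS⟩ : 0 ≠ a ∧ 0 ∉ S := by simpa using h
    have hlcm : S.lcm ≠ 0 := by rwa [ne_eq, Multiset.lcm_eq_zero_iff]
    rw [Multiset.lcm_cons, Multiset.sum_cons]
    exact (primePowerSum_lcm_le ha.symm hlcm).trans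
      (add_le_add (primePowerSum_le_self a) (ih hS))

theorem log_eq_sum_log_primeFactors_pow (M : ℕ) :
    Real.log M = ∑ p ∈ M.primeFactors, Real.log (p ^ M.factorization p : ℕ) := by
  rw [Real.log_nat_eq_sum_factorization, Finsupp.sum, Nat.support_factorization]
  simp only [Nat.cast_pow, Real.log_pow]

theorem log_le_primePowerSum (M : ℕ) : Real.log M ≤ primePowerSum M := by
  rw [log_eq_sum_log_primeFactors_pow, primePowerSum, Nat.cast_sum]
  exact sum_le_sum fun p _ ↦ Real.log_le_self (Nat.cast_nonneg _)

theorem mul_log_le_primePowerSum_add {c : ℝ} (hc : 0 ≤ c) :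
    ∃ b : ℝ, ∀ M : ℕ, c * Real.log M ≤ primePowerSum M + b := by
  obtain ⟨N, hN⟩ : ∃ N : ℕ, ∀ q : ℕ, N ≤ q → c * Real.log q ≤ q := by
    have h := ((Real.isLittleO_log_id_atTop.const_mul_left c).comp_tendsto
      tendsto_natCast_atTop_atTop).bound one_pos
    obtain ⟨N, hN⟩ := Filter.eventually_atTop.1 h
    refine ⟨N, fun q hq ↦ (le_abs_self _).trans ?_⟩
    simpa using hN q hq
  have hcN : 0 ≤ c * Real.log N := mul_nonneg hc (Real.log_natCast_nonneg N)
  have hterm (M p : ℕ) (hp : p ∈ M.primeFactors) :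
      c * Real.log (p ^ M.factorization p : ℕ) ≤
        (p ^ M.factorization p : ℕ) + if p ∈ range N then c * Real.log N else 0 := by
    obtain hlt | hle := lt_or_ge (p ^ M.factorization p) N
    · have hpN : p < N := (Nat.le_self_pow (Finsupp.mem_support_iff.1 hp) p).trans_lt hlt
      have hq : 0 < p ^ M.factorization p := pow_pos (Nat.pos_of_mem_primeFactors hp) _
      rw [if_pos (mem_range.2 hpN)]
      refine le_add_of_nonneg_of_le (Nat.cast_nonneg _) ?_
      gcongr
    · exact le_add_of_le_of_nonneg (hN _ hle) (by split_ifs <;> simp [hcN])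
  refine ⟨N * (c * Real.log N), fun M ↦ ?_⟩
  rw [log_eq_sum_log_primeFactors_pow, primePowerSum, Nat.cast_sum, mul_sum]
  calc _ ≤ _ := sum_le_sum (hterm M)
    _ ≤ _ := by
      rw [sum_add_distrib, ← sum_filter, sum_const, nsmul_eq_mul]
      gcongr
      simpa using card_le_card
        (show M.primeFactors.filter (· ∈ range N) ⊆ range N from fun p hp ↦ (mem_filter.1 hp).2)

theorem landau_ne_zero (n : ℕ) : landau n ≠ 0 := by
  have h : orderOf (1 : Equiv.Perm (Fin n)) ≤ landau n := le_sup (f := orderOf) (mem_univ _)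
  rw [orderOf_one] at h
  omega

theorem primePowerSum_landau_le (n : ℕ) : primePowerSum (landau n) ≤ n := by
  obtain ⟨σ, -, hσ⟩ := exists_mem_eq_sup (univ : Finset (Equiv.Perm (Fin n))) univ_nonempty orderOf
  have hlandau : landau n = σ.cycleType.lcm := hσ.trans σ.lcm_cycleType.symm
  rw [hlandau]
  refine (primePowerSum_multiset_lcm_le _ fun h0 ↦ ?_).trans ?_
  · exact absurd (Equiv.Perm.two_le_of_mem_cycleType h0) (by norm_num)
  · simpa using σ.sum_cycleType_le

theorem le_landau {M n : ℕ} (hM : M ≠ 0) (h : primePowerSum M ≤ n) : M ≤ landau n := by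
  obtain ⟨σ, hσ⟩ := (Equiv.Perm.exists_with_cycleType_iff (α := Fin n)
    (m := M.primeFactors.val.map fun p ↦ p ^ M.factorization p)).2
    ⟨by rwa [Fintype.card_fin], fun a ha ↦ by
      obtain ⟨p, hp, rfl⟩ := Multiset.mem_map.1 ha
      have hp' : p ∈ M.primeFactors := hp
      exact (Nat.prime_of_mem_primeFactors hp').two_le.trans
        (Nat.le_self_pow (Finsupp.mem_support_iff.1 hp') p)⟩
  have hlcm : (M.primeFactors.lcm fun p ↦ p ^ M.factorization p) = M := by
    rw [lcm_eq_prod fun p hp q hq hpq ↦ Nat.coprime_pow_primes _ _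
      (Nat.prime_of_mem_primeFactors hp) (Nat.prime_of_mem_primeFactors hq) hpq]
    exact Nat.prod_factorization_pow_eq_self hM
  calc M = orderOf σ := by rw [← Equiv.Perm.lcm_cycleType, hσ]; exact hlcm.symm
    _ ≤ landau n := le_sup (f := orderOf) (mem_univ σ)

/-- The functional `ℓ(M) - ρ log M`, whose minimizers (the `ℓ`-superchampion numbers of Massias and
Nicolas) are values of Landau's function. -/
noncomputable def penalizedSum (ρ : ℝ) (M : ℕ) : ℝ := primePowerSum M - ρ * Real.log M

theorem penalizedSum_mul (ρ : ℝ) {a b : ℕ} (ha : a ≠ 0) (hb : b ≠ 0) (h : a.Coprime b) :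
    penalizedSum ρ (a * b) = penalizedSum ρ a + penalizedSum ρ b := by
  simp only [penalizedSum, primePowerSum_mul h, Nat.cast_add, Nat.cast_mul,
    Real.log_mul (Nat.cast_ne_zero.2 ha) (Nat.cast_ne_zero.2 hb)]
  ring

theorem finite_setOf_penalizedSum_nonpos {ρ : ℝ} (hρ : 0 ≤ ρ) :
    {M : ℕ | M ≠ 0 ∧ penalizedSum ρ M ≤ 0}.Finite := by
  obtain ⟨b, hb⟩ := mul_log_le_primePowerSum_add (c := ρ + 1) (by linarith)
  refine (Set.finite_Iic ⌊Real.exp b⌋₊).subset fun M ⟨hM, hle⟩ ↦ Nat.le_floor ?_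
  rw [← Real.log_le_iff_le_exp (by positivity)]
  have := hb M
  unfold penalizedSum at hle
  linarith

theorem exists_greatest_isMinOn_penalizedSum {ρ : ℝ} (hρ : 0 ≤ ρ) :
    ∃ N ≠ 0, IsMinOn (penalizedSum ρ) {0}ᶜ N ∧
      ∀ M ≠ 0, penalizedSum ρ M ≤ penalizedSum ρ N → M ≤ N := by
  have hfin := finite_setOf_penalizedSum_nonpos hρ
  obtain ⟨N₀, ⟨hN₀, hN₀le⟩, hmin⟩ := Set.exists_min_image _ (penalizedSum ρ) hfin
    ⟨1, one_ne_zero, by simp [penalizedSum, primePowerSum_one]⟩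
  obtain ⟨N, ⟨hN, hNle⟩, hmax⟩ := Set.exists_max_image
    {M : ℕ | M ≠ 0 ∧ penalizedSum ρ M ≤ penalizedSum ρ N₀} id
    (hfin.subset fun M hM ↦ ⟨hM.1, hM.2.trans hN₀le⟩) ⟨N₀, hN₀, le_rfl⟩
  refine ⟨N, hN, fun M hM ↦ hNle.trans ?_, fun M hM h ↦ hmax M ⟨hM, h.trans hNle⟩⟩
  obtain h | h := le_total (penalizedSum ρ M) 0
  · exact hmin M ⟨hM, h⟩
  · exact hN₀le.trans h

theorem isMinOn_penalizedSum_landau {ρ : ℝ} (hρ : 0 ≤ ρ) {N : ℕ} (hN : N ≠ 0)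
    (hmin : IsMinOn (penalizedSum ρ) {0}ᶜ N) :
    IsMinOn (penalizedSum ρ) {0}ᶜ (landau (primePowerSum N)) := by
  intro M hM
  refine le_trans (b := penalizedSum ρ N) ?_ (hmin hM)
  have hle : (primePowerSum (landau (primePowerSum N)) : ℝ) ≤ primePowerSum N :=
    mod_cast primePowerSum_landau_le _
  have hlog : Real.log N ≤ Real.log (landau (primePowerSum N)) :=
    Real.log_le_log (by positivity) (mod_cast le_landau hN le_rfl)
  unfold penalizedSum
  gcongr

theorem prime_dvd_of_penalizedSum_nonpos {ρ : ℝ} {N q : ℕ} (hN : N ≠ 0) (hq : q.Prime)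
    (hmax : ∀ M ≠ 0, penalizedSum ρ M ≤ penalizedSum ρ N → M ≤ N) (hle : penalizedSum ρ q ≤ 0) :
    q ∣ N := by
  by_contra hndvd
  have hmul := penalizedSum_mul ρ hN hq.ne_zero ((Nat.Prime.coprime_iff_not_dvd hq).2 hndvd).symm
  have := hmax (N * q) (mul_ne_zero hN hq.ne_zero) (by linarith)
  have := hq.two_le
  have := Nat.pos_of_ne_zero hN
  nlinarith

theorem penalizedSum_prime_pow_factorization_nonpos {ρ : ℝ} {M q : ℕ} (hM : M ≠ 0)
    (hmin : IsMinOn (penalizedSum ρ) {0}ᶜ M) (hq : q.Prime) :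
    penalizedSum ρ (q ^ M.factorization q) ≤ 0 := by
  have hmul := penalizedSum_mul ρ (pow_pos hq.pos (M.factorization q)).ne'
    (Nat.ordCompl_pos q hM).ne' (Nat.Coprime.pow_left _ (Nat.coprime_ordCompl hq hM))
  rw [Nat.ordProj_mul_ordCompl_eq_self] at hmul
  have hle : penalizedSum ρ M ≤ penalizedSum ρ (M / q ^ M.factorization q) :=
    hmin (Nat.ordCompl_pos q hM).ne'
  linarith

theorem mul_log_lt_mul_log {x y : ℝ} (hx : 3 ≤ x) (hxy : x < y) :
    x * Real.log y < y * Real.log x := by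
  have hlog : 1 < Real.log x := by
    rw [Real.lt_log_iff_exp_lt (by linarith)]
    exact (Real.exp_one_lt_d9.trans (by norm_num)).trans_le hx
  have hdiv : Real.log (y / x) < y / x - 1 :=
    Real.log_lt_sub_one_of_pos (div_pos (by linarith) (by linarith))
      ((one_lt_div (by linarith)).2 hxy).ne'
  rw [Real.log_div (by linarith) (by linarith), lt_sub_iff_add_lt,
    lt_div_iff₀ (by linarith)] at hdiv
  nlinarith

theorem prime_mul_log_le {x : ℝ} (hx : 4 ≤ x) {q : ℕ} (hq : q.Prime) (hqx : (q : ℝ) ≤ x) :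
    q * Real.log x ≤ x * Real.log q := by
  obtain rfl | hqx := hqx.eq_or_lt
  · rfl
  obtain rfl | hq3 := hq.two_le.eq_or_lt
  · have hlog4 : Real.log 4 = 2 * Real.log 2 := by
      rw [show (4 : ℝ) = 2 ^ 2 by norm_num, Real.log_pow, Nat.cast_ofNat]
    -- At `q = 2` the two sides agree for `x = 4`, since `log 2 / 2 = log 4 / 4`.
    obtain rfl | hx := hx.eq_or_lt
    · rw [hlog4]; push_cast; linarith
    · have := mul_log_lt_mul_log (by norm_num) hx
      rw [hlog4] at this
      push_cast
      linarith
  · exact (mul_log_lt_mul_log (mod_cast hq3) hqx).le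

theorem primorial_dvd_of_penalizedSum_le_imp_le {x : ℝ} (hx : 4 ≤ x) {N : ℕ} (hN : N ≠ 0)
    (hmax : ∀ M ≠ 0, penalizedSum (x / Real.log x) M ≤ penalizedSum (x / Real.log x) N → M ≤ N) :
    primorial ⌊x⌋₊ ∣ N := by
  refine prod_primes_dvd _ (fun p hp ↦ (mem_filter.1 hp).2.prime) fun q hq ↦ ?_
  obtain ⟨hqx, hqp⟩ := mem_filter.1 hq
  rw [mem_range, Nat.lt_succ_iff, Nat.le_floor_iff (by linarith)] at hqx
  refine prime_dvd_of_penalizedSum_nonpos hN hqp hmax ?_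
  have hsum : primePowerSum q = q := by simpa using primePowerSum_prime_pow hqp one_ne_zero
  rw [penalizedSum, hsum, sub_nonpos, div_mul_eq_mul_div,
    le_div_iff₀ (Real.log_pos (by linarith))]
  exact prime_mul_log_le hx hqp hqx

theorem maxPrimeFac_le_of_isMinOn_penalizedSum {x : ℝ} (hx : 3 ≤ x) {M : ℕ} (hM : M ≠ 0)
    (hmin : IsMinOn (penalizedSum (x / Real.log x)) {0}ᶜ M) : (maxPrimeFac M : ℝ) ≤ x := by
  rw [← Nat.le_floor_iff (by linarith)]
  refine Finset.sup_le fun q hq ↦ (Nat.le_floor_iff (by linarith)).2 ?_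
  rw [id]
  by_contra! hlt
  have hqp := Nat.prime_of_mem_primeFactors hq
  have hk : M.factorization q ≠ 0 := Finsupp.mem_support_iff.1 hq
  have hle := penalizedSum_prime_pow_factorization_nonpos hM hmin hqp
  rw [penalizedSum, primePowerSum_prime_pow hqp hk, sub_nonpos, div_mul_eq_mul_div,
    le_div_iff₀ (Real.log_pos (by linarith))] at hle
  have hqk : (q : ℝ) ≤ (q ^ M.factorization q : ℕ) := mod_cast Nat.le_self_pow hk q
  linarith [mul_log_lt_mul_log hx (hlt.trans_le hqk)]

/-- For `ρ = x / log x` the functional `penalizedSum ρ` is `≤ 0` at primes `q ≤ x` and `> 0` at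
prime powers `> x`, so its greatest minimizer is divisible by the primorial of `x`, while no
minimizer has a prime factor exceeding `x`. -/
theorem exists_gt_maxPrimeFac_landau_lt_log {x : ℝ} (hx : 4 ≤ x) (hθ : x < θ x) :
    ∃ n : ℕ, x < n ∧ (maxPrimeFac (landau n) : ℝ) < Real.log (landau n) := by
  have hρ : 0 ≤ x / Real.log x := div_nonneg (by linarith) (Real.log_nonneg (by linarith))
  obtain ⟨N, hN, hmin, hmax⟩ := exists_greatest_isMinOn_penalizedSum hρ
  have hlogN : x < Real.log N := by
    refine hθ.trans_le ?_
    rw [theta_eq_log_primorial]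
    exact Real.log_le_log (mod_cast primorial_pos _) (mod_cast Nat.le_of_dvd
      (Nat.pos_of_ne_zero hN) (primorial_dvd_of_penalizedSum_le_imp_le hx hN hmax))
  refine ⟨primePowerSum N, hlogN.trans_le (log_le_primePowerSum N), ?_⟩
  calc (maxPrimeFac (landau (primePowerSum N)) : ℝ) ≤ x :=
        maxPrimeFac_le_of_isMinOn_penalizedSum (by linarith) (landau_ne_zero _)
          (isMinOn_penalizedSum_landau hρ hN hmin)
    _ < Real.log N := hlogN
    _ ≤ Real.log (landau (primePowerSum N)) :=
        Real.log_le_log (by positivity) (mod_cast le_landau hN le_rfl)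

theorem infinite_of_frequently_lt_theta (h : ∃ᶠ x in Filter.atTop, x < θ x) :
    {n : ℕ | 0 < n ∧ (maxPrimeFac (landau n) : ℝ) < Real.log (landau n)}.Infinite := by
  rw [Set.infinite_iff_exists_gt]
  intro a
  obtain ⟨x, hx, hθ⟩ := Filter.frequently_atTop.1 h (max 4 a)
  obtain ⟨n, hn, hlt⟩ := exists_gt_maxPrimeFac_landau_lt_log ((le_max_left _ _).trans hx) hθ
  have han : a < n := mod_cast ((le_max_right _ _).trans hx).trans_lt hn
  exact ⟨n, ⟨by omega, hlt⟩, han⟩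

end LandauFunction

section MellinMeasure

open MeasureTheory ProbabilityTheory Complex Set

/-! ### Mellin transforms of nonnegative functions as moment generating functions -/

/-- The measure `h(x) dx / x` on `(1, ∞)`. Its moment generating function with respect to `log`,
evaluated at `-s`, is the Mellin transform `∫₁^∞ h(x) x^(-s-1) dx`, so the analyticity theory of
moment generating functions applies to the latter. -/
noncomputable def mellinMeasure (h : ℝ → ℝ) : Measure ℝ :=
  (volume.restrict (Ioi 1)).withDensity fun x ↦ ENNReal.ofReal (h x / x)

variable {h : ℝ → ℝ}

theorem integral_mellinMeasure (hm : Measurable h) (h0 : ∀ x, 1 < x → 0 ≤ h x) (g : ℝ → ℂ) :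
    ∫ x, g x ∂(mellinMeasure h) = ∫ x in Ioi 1, ((h x / x : ℝ) : ℂ) * g x := by
  rw [mellinMeasure, integral_withDensity_eq_integral_toReal_smul (by fun_prop) (by simp)]
  refine setIntegral_congr_fun measurableSet_Ioi fun x hx ↦ ?_
  have hx : 1 < x := hx
  simp only [ENNReal.toReal_ofReal (div_nonneg (h0 x hx) (by positivity : 0 ≤ x))]
  rfl

theorem integrable_mellinMeasure_iff (hm : Measurable h) (h0 : ∀ x, 1 < x → 0 ≤ h x)
    (g : ℝ → ℝ) :
    Integrable g (mellinMeasure h) ↔ IntegrableOn (fun x ↦ h x / x * g x) (Ioi 1) := by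
  rw [mellinMeasure, integrable_withDensity_iff_integrable_smul' (by fun_prop) (by simp)]
  refine integrable_congr ?_
  filter_upwards [ae_restrict_mem measurableSet_Ioi] with x hx
  have hx : 1 < x := hx
  simp only [ENNReal.toReal_ofReal (div_nonneg (h0 x hx) (by positivity : 0 ≤ x))]
  rfl

theorem mem_integrableExpSet_mellinMeasure (hm : Measurable h) (h0 : ∀ x, 1 < x → 0 ≤ h x)
    {K r : ℝ} (hK : ∀ x, 1 < x → h x ≤ K * x ^ r) {t : ℝ} (ht : t < -r) :
    t ∈ integrableExpSet Real.log (mellinMeasure h) := by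
  refine (integrable_mellinMeasure_iff hm h0 _).2 ?_
  refine ((integrableOn_Ioi_rpow_of_lt (a := r - 1 + t) (by linarith) one_pos).const_mul K).mono'
    (by fun_prop) ?_
  filter_upwards [ae_restrict_mem measurableSet_Ioi] with x hx
  have hx1 : 1 < x := hx
  have hx0 : 0 < x := by positivity
  have hhx := h0 x hx1
  calc ‖h x / x * Real.exp (t * Real.log x)‖
      = h x / x * x ^ t := by
        rw [Real.rpow_def_of_pos hx0, mul_comm t, Real.norm_of_nonneg (by positivity)]
    _ ≤ K * x ^ r / x * x ^ t := by gcongr; exact hK x hx1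
    _ = K * x ^ (r - 1 + t) := by
        rw [Real.rpow_add hx0, Real.rpow_sub hx0, Real.rpow_one]; ring

theorem complexMGF_log_mellinMeasure (hm : Measurable h) (h0 : ∀ x, 1 < x → 0 ≤ h x) (s : ℂ) :
    complexMGF Real.log (mellinMeasure h) (-s) =
      ∫ x in Ioi (1 : ℝ), (h x : ℂ) * (x : ℂ) ^ (-(s + 1)) := by
  rw [complexMGF, integral_mellinMeasure hm h0]
  refine setIntegral_congr_fun measurableSet_Ioi fun x hx ↦ ?_
  have hx0 : 0 < x := one_pos.trans hx
  have hx0' : (x : ℂ) ≠ 0 := ofReal_ne_zero.2 hx0.ne'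
  have hexp : cexp (-s * (Real.log x : ℂ)) = (x : ℂ) ^ (-s) := by
    rw [cpow_def_of_ne_zero hx0', ofReal_log hx0.le, mul_comm]
  simp only [hexp, neg_add, cpow_add _ _ hx0', cpow_neg_one]
  push_cast
  ring

theorem integrableOn_ofReal_mul_cpow (hm : Measurable h) (h0 : ∀ x, 1 < x → 0 ≤ h x)
    {K r : ℝ} (hK : ∀ x, 1 < x → h x ≤ K * x ^ r) {s : ℂ} (hs : r < s.re) :
    IntegrableOn (fun x : ℝ ↦ (h x : ℂ) * (x : ℂ) ^ (-(s + 1))) (Ioi 1) := by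
  refine ((integrableOn_Ioi_rpow_of_lt (a := r - s.re - 1) (by linarith) one_pos).const_mul K).mono'
    (by fun_prop) ?_
  filter_upwards [ae_restrict_mem measurableSet_Ioi] with x hx
  have hx1 : 1 < x := hx
  have hx0 : 0 < x := by positivity
  calc ‖(h x : ℂ) * (x : ℂ) ^ (-(s + 1))‖
      = h x * x ^ (-s.re - 1) := by
        rw [norm_mul, norm_real, Real.norm_of_nonneg (h0 x hx1), norm_cpow_eq_rpow_re_of_pos hx0]
        congr 2
        simp only [neg_re, add_re, one_re]
        ring
    _ ≤ K * x ^ r * x ^ (-s.re - 1) := by gcongr; exact hK x hx1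
    _ = K * x ^ (r - s.re - 1) := by rw [mul_assoc, ← Real.rpow_add hx0]; congr 2; ring

theorem integrableOn_rpow_mul_cpow {s : ℂ} {a : ℝ} (hs : a < s.re) :
    IntegrableOn (fun x : ℝ ↦ ((x ^ a : ℝ) : ℂ) * (x : ℂ) ^ (-(s + 1))) (Ioi 1) :=
  integrableOn_ofReal_mul_cpow (by fun_prop) (fun x hx ↦ by positivity)
    (fun x _ ↦ (one_mul (x ^ a)).ge) hs

theorem integral_rpow_mul_cpow {s : ℂ} {a : ℝ} (hs : a < s.re) :
    ∫ x in Ioi (1 : ℝ), ((x ^ a : ℝ) : ℂ) * (x : ℂ) ^ (-(s + 1)) = 1 / (s - a) := by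
  calc ∫ x in Ioi (1 : ℝ), ((x ^ a : ℝ) : ℂ) * (x : ℂ) ^ (-(s + 1))
      = ∫ x in Ioi (1 : ℝ), (x : ℂ) ^ ((a : ℂ) - s - 1) := by
        refine setIntegral_congr_fun measurableSet_Ioi fun x hx ↦ ?_
        have hx0 : 0 < x := one_pos.trans hx
        simp only [ofReal_cpow hx0.le, ← cpow_add _ _ (ofReal_ne_zero.2 hx0.ne')]
        congr 1
        ring
    _ = 1 / (s - a) := by
        rw [integral_Ioi_cpow_of_lt (by simp; linarith) one_pos, ofReal_one, one_cpow,
          sub_add_cancel, ← neg_sub s, div_neg, neg_div, neg_neg]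

theorem isOpen_setOf_lt_re (a : ℝ) : IsOpen {s : ℂ | a < s.re} :=
  isOpen_lt continuous_const continuous_re

theorem analyticOnNhd_complexMGF_neg {Ω : Type*} {mΩ : MeasurableSpace Ω} {X : Ω → ℝ}
    {μ : Measure Ω} {a : ℝ} (hX : Iio (-a) ⊆ integrableExpSet X μ) :
    AnalyticOnNhd ℂ (fun s ↦ complexMGF X μ (-s)) {s : ℂ | a < s.re} := by
  intro s hs
  have hs' : (-s).re ∈ interior (integrableExpSet X μ) :=
    interior_maximal hX isOpen_Iio (by simpa using hs)
  exact (analyticAt_complexMGF hs').comp (by fun_prop : AnalyticAt ℂ (fun s : ℂ ↦ -s) s)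

end MellinMeasure

section RiemannXi

open MeasureTheory ProbabilityTheory Complex Set

/-! ### The functions `ξ(s)` and `(s - 1) ζ(s)` -/

/-- The Riemann xi function, normalized as the entire function `s (s - 1) Λ(s)`, which is twice
Riemann's `ξ`. The formula in terms of `Λ₀` has no junk values at `s = 0, 1`. -/
noncomputable def riemannXi (s : ℂ) : ℂ := s * (s - 1) * completedRiemannZeta₀ s + 1

theorem differentiable_riemannXi : Differentiable ℂ riemannXi := by
  have := differentiable_completedZeta₀
  unfold riemannXi
  fun_prop

theorem riemannXi_one_sub (s : ℂ) : riemannXi (1 - s) = riemannXi s := by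
  rw [riemannXi, riemannXi, completedRiemannZeta₀_one_sub]
  ring

theorem riemannXi_one : riemannXi 1 = 1 := by simp [riemannXi]

theorem riemannXi_eq_mul_riemannZeta₁ {s : ℂ} (hs : 0 < s.re) :
    riemannXi s = s * Gammaℝ s * riemannZeta₁ s := by
  rcases eq_or_ne s 1 with rfl | h1
  · simp [riemannXi_one, Gammaℝ_one]
  have h0 : s ≠ 0 := by rintro rfl; simp at hs
  have h1' : s - 1 ≠ 0 := sub_ne_zero.2 h1
  have h1'' : 1 - s ≠ 0 := sub_ne_zero.2 h1.symm
  have hΓ := Gammaℝ_ne_zero_of_re_pos hs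
  have hζ : riemannZeta₁ s = (s - 1) * riemannZeta s := by
    rw [riemannZeta_eq_inv_sub_mul h1, mul_inv_cancel_left₀ h1']
  rw [hζ, riemannZeta_def_of_ne_zero h0, completedRiemannZeta_eq, riemannXi]
  field_simp
  ring

theorem riemannZeta_eq_mul_integral_floor {s : ℂ} (hs : 1 < s.re) :
    riemannZeta s = s * ∫ x in Ioi (1 : ℝ), ((⌊x⌋₊ : ℝ) : ℂ) * (x : ℂ) ^ (-(s + 1)) := by
  have h := LSeries_eq_mul_integral_of_nonneg (fun _ ↦ 1) (r := 1) zero_le_one (s := s) hs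
    (by simpa using Asymptotics.isBigO_refl _ _) (by simp)
  rw [← LSeries_one_eq_riemannZeta hs]
  simpa [Pi.one_def] using h

theorem fract_le_one_mul_rpow_zero (x : ℝ) : Int.fract x ≤ 1 * x ^ (0 : ℝ) := by
  simpa using (Int.fract_lt_one x).le

theorem riemannZeta₁_eq_of_one_lt_re {s : ℂ} (hs : 1 < s.re) :
    riemannZeta₁ s =
      s - s * (s - 1) * complexMGF Real.log (mellinMeasure Int.fract) (-s) := by
  have h1 : s - 1 ≠ 0 := by rintro h; simp [sub_eq_zero.1 h] at hs
  have hfract : IntegrableOn (fun x : ℝ ↦ ((Int.fract x : ℝ) : ℂ) * (x : ℂ) ^ (-(s + 1))) (Ioi 1) :=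
    integrableOn_ofReal_mul_cpow measurable_fract (fun x _ ↦ Int.fract_nonneg x)
      (fun x _ ↦ fract_le_one_mul_rpow_zero x) (by linarith)
  have hfloor : ∀ x ∈ Ioi (1 : ℝ), ((⌊x⌋₊ : ℝ) : ℂ) * (x : ℂ) ^ (-(s + 1)) =
      ((x ^ (1 : ℝ) : ℝ) : ℂ) * (x : ℂ) ^ (-(s + 1)) -
        ((Int.fract x : ℝ) : ℂ) * (x : ℂ) ^ (-(s + 1)) := fun x hx ↦ by
    rw [← sub_mul, Real.rpow_one, Int.fract,
      natCast_floor_eq_intCast_floor (one_pos.trans hx).le]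
    push_cast
    ring
  have hζ := riemannZeta_eq_mul_integral_floor hs
  rw [setIntegral_congr_fun measurableSet_Ioi hfloor,
    integral_sub (integrableOn_rpow_mul_cpow hs) hfract, integral_rpow_mul_cpow hs,
    riemannZeta_eq_inv_sub_mul (sub_ne_zero.1 h1), inv_mul_eq_iff_eq_mul₀ h1] at hζ
  rw [hζ, complexMGF_log_mellinMeasure measurable_fract fun x _ ↦ Int.fract_nonneg x]
  push_cast
  field_simp

theorem riemannZeta₁_eq_of_re_pos {s : ℂ} (hs : 0 < s.re) :
    riemannZeta₁ s =
      s - s * (s - 1) * complexMGF Real.log (mellinMeasure Int.fract) (-s) := by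
  have hM : AnalyticOnNhd ℂ (fun s ↦ complexMGF Real.log (mellinMeasure Int.fract) (-s))
      {s : ℂ | 0 < s.re} :=
    analyticOnNhd_complexMGF_neg fun t ht ↦
      mem_integrableExpSet_mellinMeasure measurable_fract (fun x _ ↦ Int.fract_nonneg x)
        (fun x _ ↦ fract_le_one_mul_rpow_zero x) ht
  refine AnalyticOnNhd.eqOn_of_preconnected_of_eventuallyEq
    (fun s _ ↦ differentiable_riemannZeta₁.analyticAt s)
    (g := fun s ↦ s - s * (s - 1) * complexMGF Real.log (mellinMeasure Int.fract) (-s))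
    (fun z hz ↦ by have := hM z hz; fun_prop)
    (convex_halfSpace_re_gt 0).isPreconnected (z₀ := 2) (by simp) ?_ hs
  filter_upwards [(isOpen_setOf_lt_re 1).mem_nhds (by simp)] with s hs
  exact riemannZeta₁_eq_of_one_lt_re hs

theorem riemannZeta₁_ofReal_ne_zero_s5 {σ : ℝ} (h0 : 0 < σ) (h1 : σ ≤ 1) :
    riemannZeta₁ σ ≠ 0 := by
  have hM : complexMGF Real.log (mellinMeasure Int.fract) (-(σ : ℂ)) =
      (mgf Real.log (mellinMeasure Int.fract) (-σ) : ℝ) := by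
    rw [← complexMGF_ofReal, ofReal_neg]
  have hpos : 0 < σ + σ * (1 - σ) * mgf Real.log (mellinMeasure Int.fract) (-σ) :=
    add_pos_of_pos_of_nonneg h0
      (mul_nonneg (mul_nonneg h0.le (by linarith)) mgf_nonneg)
  rw [riemannZeta₁_eq_of_re_pos (by simpa using h0), hM]
  intro h
  refine hpos.ne' ?_
  rw [← ofReal_eq_zero, ← h]
  push_cast
  ring

end RiemannXi

section LandauTheorem

open MeasureTheory ProbabilityTheory Complex Set Filter Topology
open scoped Nat

/-! ### Landau's theorem on the abscissa of convergence -/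

variable {Ω : Type*} {mΩ : MeasurableSpace Ω} {X : Ω → ℝ} {μ : Measure Ω}

theorem hasSum_pow_div_factorial_mul_pow_mul_exp (t δ x : ℝ) :
    HasSum (fun n : ℕ ↦ δ ^ n / n ! * (x ^ n * Real.exp (t * x))) (Real.exp ((t + δ) * x)) := by
  have h : HasSum (fun n : ℕ ↦ (δ * x) ^ n / n !) (Real.exp (δ * x)) := by
    simpa [Real.exp_eq_exp_ℝ] using NormedSpace.expSeries_div_hasSum_exp (𝔸 := ℝ) (δ * x)
  rw [add_mul, add_comm, Real.exp_add]
  refine (h.mul_right (Real.exp (t * x))).congr_fun fun n ↦ ?_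
  rw [mul_pow]
  ring

theorem add_mem_integrableExpSet_of_summable (hX : AEMeasurable X μ) (hX0 : 0 ≤ᵐ[μ] X) {t δ : ℝ}
    (hδ : 0 ≤ δ) (hint : ∀ n : ℕ, Integrable (fun ω ↦ X ω ^ n * Real.exp (t * X ω)) μ)
    (hsum : Summable fun n : ℕ ↦ ∫ ω, δ ^ n / n ! * (X ω ^ n * Real.exp (t * X ω)) ∂μ) :
    t + δ ∈ integrableExpSet X μ := by
  have hnonneg (n : ℕ) : 0 ≤ᵐ[μ] fun ω ↦ δ ^ n / n ! * (X ω ^ n * Real.exp (t * X ω)) := by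
    filter_upwards [hX0] with ω hω
    simp only [Pi.zero_apply] at hω ⊢
    positivity
  refine ⟨by fun_prop, ?_⟩
  rw [hasFiniteIntegral_iff_ofReal (.of_forall fun ω ↦ (Real.exp_pos _).le)]
  calc ∫⁻ ω, ENNReal.ofReal (Real.exp ((t + δ) * X ω)) ∂μ
      = ∫⁻ ω, ∑' n : ℕ, ENNReal.ofReal (δ ^ n / n ! * (X ω ^ n * Real.exp (t * X ω))) ∂μ := by
        refine lintegral_congr_ae ?_
        filter_upwards [ae_all_iff.2 hnonneg] with ω hω
        have h := hasSum_pow_div_factorial_mul_pow_mul_exp t δ (X ω)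
        rw [← h.tsum_eq, ENNReal.ofReal_tsum_of_nonneg hω h.summable]
    _ = ∑' n : ℕ, ENNReal.ofReal (∫ ω, δ ^ n / n ! * (X ω ^ n * Real.exp (t * X ω)) ∂μ) := by
        rw [lintegral_tsum fun n ↦ by fun_prop]
        exact tsum_congr fun n ↦
          (ofReal_integral_eq_lintegral_ofReal ((hint n).const_mul _) (hnonneg n)).symm
    _ = ENNReal.ofReal (∑' n : ℕ, ∫ ω, δ ^ n / n ! * (X ω ^ n * Real.exp (t * X ω)) ∂μ) :=
        (ENNReal.ofReal_tsum_of_nonneg (fun n ↦ integral_nonneg_of_ae (hnonneg n)) hsum).symm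
    _ < ⊤ := ENNReal.ofReal_lt_top

theorem add_mem_integrableExpSet_of_differentiableOn_ball (hX : AEMeasurable X μ)
    (hX0 : 0 ≤ᵐ[μ] X) {t r δ : ℝ} (ht : t ∈ interior (integrableExpSet X μ)) {G : ℂ → ℂ}
    (hG : DifferentiableOn ℂ G (Metric.ball (t : ℂ) r)) (hGX : G =ᶠ[𝓝 (t : ℂ)] complexMGF X μ)
    (hδ : 0 ≤ δ) (hδr : δ < r) :
    t + δ ∈ integrableExpSet X μ := by
  have hcoeff (n : ℕ) :
      iteratedDeriv n G t = ((∫ ω, X ω ^ n * Real.exp (t * X ω) ∂μ : ℝ) : ℂ) := by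
    rw [hGX.iteratedDeriv_eq n, iteratedDeriv_complexMGF (by simpa using ht),
      ← integral_complex_ofReal]
    push_cast
    rfl
  have htaylor := (Complex.hasSum_taylorSeries_on_ball hG (z := ((t + δ : ℝ) : ℂ))
    (by simpa [abs_of_nonneg hδ] using hδr)).summable
  refine add_mem_integrableExpSet_of_summable hX hX0 hδ
    (integrable_pow_mul_exp_of_mem_interior_integrableExpSet ht) (Complex.summable_ofReal.1 ?_)
  refine htaylor.congr fun n ↦ ?_
  rw [hcoeff, integral_const_mul]
  push_cast
  rw [add_sub_cancel_left, smul_eq_mul, smul_eq_mul]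
  ring

theorem Iio_subset_integrableExpSet_of_mem {t u : ℝ} (ht : Iio t ⊆ integrableExpSet X μ)
    (hu : u ∈ integrableExpSet X μ) : Iio u ⊆ integrableExpSet X μ := by
  intro v hv
  rcases lt_or_ge v t with hvt | hvt
  · exact ht hvt
  · exact convex_integrableExpSet.ordConnected.out (ht (sub_one_lt t)) hu
      ⟨by linarith, (mem_Iio.1 hv).le⟩

theorem exists_Iio_subset_integrableExpSet_of_analyticAt (hX : AEMeasurable X μ)
    (hX0 : 0 ≤ᵐ[μ] X) {t : ℝ} (ht : Iio t ⊆ integrableExpSet X μ) {G : ℂ → ℂ}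
    (hG : AnalyticAt ℂ G t) (hGX : ∀ᶠ s in 𝓝 (t : ℂ), s.re < t → G s = complexMGF X μ s) :
    ∃ u > t, Iio u ⊆ integrableExpSet X μ := by
  obtain ⟨r, hr, hball⟩ := Metric.eventually_nhds_iff.1 (hG.eventually_analyticAt.and hGX)
  have hdist : dist ((t - r / 3 : ℝ) : ℂ) t = r / 3 := by
    rw [dist_eq, ← ofReal_sub, norm_real, sub_sub_cancel_left, norm_neg,
      Real.norm_of_nonneg (by positivity)]
  refine ⟨t - r / 3 + r / 2, by linarith, Iio_subset_integrableExpSet_of_mem ht ?_⟩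
  refine add_mem_integrableExpSet_of_differentiableOn_ball hX hX0 (r := 2 * r / 3) (G := G)
    (interior_maximal ht isOpen_Iio (by simpa using hr)) (fun s hs ↦ ?_) ?_ (by positivity)
    (by linarith)
  · have hs' : dist s t < r := by
      linarith [dist_triangle s ((t - r / 3 : ℝ) : ℂ) t, Metric.mem_ball.1 hs]
    exact (hball hs').1.differentiableAt.differentiableWithinAt
  · filter_upwards [Metric.ball_mem_nhds _ (by positivity : 0 < 2 * r / 3),
      (isOpen_lt continuous_re continuous_const).mem_nhds
        (by simpa using hr : ((t - r / 3 : ℝ) : ℂ).re < t)] with s hs hst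
    have hs' : dist s t < r := by
      linarith [dist_triangle s ((t - r / 3 : ℝ) : ℂ) t, Metric.mem_ball.1 hs]
    exact (hball hs').2 hst

theorem Iio_subset_integrableExpSet_of_forall_analyticAt (hX : AEMeasurable X μ)
    (hX0 : 0 ≤ᵐ[μ] X) {a b : ℝ} (ha : Iio a ⊆ integrableExpSet X μ) {G : ℂ → ℂ}
    (hG : ∀ t ∈ Ico a b, AnalyticAt ℂ G t)
    (hGX : ∀ t ∈ Ico a b, Iio t ⊆ integrableExpSet X μ →
      ∀ᶠ s in 𝓝 (t : ℂ), s.re < t → G s = complexMGF X μ s) :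
    Iio b ⊆ integrableExpSet X μ := by
  intro u hub
  by_contra hu
  set S := {t | Iio t ⊆ integrableExpSet X μ}
  have hbdd : BddAbove S := ⟨u, fun t ht ↦ not_lt.1 fun hut ↦ hu (ht hut)⟩
  have hτu : sSup S ≤ u := csSup_le ⟨a, ha⟩ fun t ht ↦ not_lt.1 fun hut ↦ hu (ht hut)
  have hτ : sSup S ∈ Ico a b := ⟨le_csSup hbdd ha, hτu.trans_lt hub⟩
  have hτS : Iio (sSup S) ⊆ integrableExpSet X μ := fun v hv ↦ by
    obtain ⟨t, ht, hvt⟩ := exists_lt_of_lt_csSup ⟨a, ha⟩ hv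
    exact ht hvt
  obtain ⟨v, hτv, hv⟩ := exists_Iio_subset_integrableExpSet_of_analyticAt hX hX0 hτS
    (hG _ hτ) (hGX _ hτ hτS)
  exact hτv.not_ge (le_csSup hbdd hv)

end LandauTheorem

section PsiGap

open MeasureTheory ProbabilityTheory Complex Set Filter Topology

/-! ### The Riemann hypothesis from a one-sided bound on `ψ` -/

/-- The function `x + C √x - ψ(x)`, which is nonnegative on `(1, ∞)` for a suitable `C` as soon as
`θ(x) ≤ x` for all large `x`. -/
noncomputable def psiGap (C x : ℝ) : ℝ := x + C * x ^ (1 / 2 : ℝ) - Chebyshev.psi x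

/-- The Mellin transform `∫₁^∞ (x + C √x - ψ(x)) x^(-s-1) dx`. -/
noncomputable def psiGapTransform (C : ℝ) (s : ℂ) : ℂ :=
  complexMGF Real.log (mellinMeasure (psiGap C)) (-s)

theorem measurable_psiGap (C : ℝ) : Measurable (psiGap C) := by
  have := Chebyshev.psi_mono.measurable
  unfold psiGap
  fun_prop

theorem psiGap_le (C : ℝ) {x : ℝ} (hx : 1 < x) : psiGap C x ≤ (1 + |C|) * x ^ (1 : ℝ) := by
  have hsqrt : x ^ (1 / 2 : ℝ) ≤ x := by
    simpa using Real.rpow_le_rpow_of_exponent_le hx.le (by norm_num : (1 / 2 : ℝ) ≤ 1)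
  have hC : C * x ^ (1 / 2 : ℝ) ≤ |C| * x :=
    mul_le_mul (le_abs_self C) hsqrt (by positivity) (abs_nonneg C)
  rw [psiGap, Real.rpow_one]
  linarith [Chebyshev.psi_nonneg x]

theorem neg_deriv_riemannZeta_div_eq_mul_integral_psi {s : ℂ} (hs : 1 < s.re) :
    -deriv riemannZeta s / riemannZeta s =
      s * ∫ x in Ioi (1 : ℝ), (Chebyshev.psi x : ℂ) * (x : ℂ) ^ (-(s + 1)) := by
  have hψ (x : ℝ) : ∑ k ∈ Finset.Icc 1 ⌊x⌋₊, ArithmeticFunction.vonMangoldt k =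
      Chebyshev.psi x := by
    rw [Chebyshev.psi_eq_sum_Icc, ← Finset.add_sum_Ioc_eq_sum_Icc (Nat.zero_le _),
      ArithmeticFunction.map_zero, zero_add]
    rfl
  have hψ_nat (n : ℕ) : ∑ k ∈ Finset.Icc 1 n, ArithmeticFunction.vonMangoldt k =
      Chebyshev.psi n := by simpa using hψ n
  rw [← ArithmeticFunction.LSeries_vonMangoldt_eq_deriv_riemannZeta_div hs,
    LSeries_eq_mul_integral_of_nonneg (fun n ↦ ArithmeticFunction.vonMangoldt n) (r := 1)
      zero_le_one hs _ fun n ↦ ArithmeticFunction.vonMangoldt_nonneg]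
  · simp only [← ofReal_sum, hψ]
  · refine Asymptotics.IsBigO.of_bound (Real.log 4 + 4) (.of_forall fun n ↦ ?_)
    rw [hψ_nat, Real.rpow_one, Real.norm_of_nonneg (Chebyshev.psi_nonneg _), Real.norm_natCast]
    exact Chebyshev.psi_le_const_mul_self (Nat.cast_nonneg n)

theorem riemannZeta₁_ne_zero_of_one_lt_re {s : ℂ} (hs : 1 < s.re) : riemannZeta₁ s ≠ 0 := by
  have h1 : s ≠ 1 := by rintro rfl; simp at hs
  have h := riemannZeta_ne_zero_of_one_lt_re hs
  rw [riemannZeta_eq_inv_sub_mul h1] at h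
  exact right_ne_zero_of_mul h

variable {C : ℝ}

theorem psiGapTransform_eq_of_one_lt_re (hgap : ∀ x, 1 < x → 0 ≤ psiGap C x) {s : ℂ}
    (hs : 1 < s.re) :
    psiGapTransform C s =
      1 / (s - 1) + C / (s - 1 / 2) + deriv riemannZeta s / riemannZeta s / s := by
  have hs0 : s ≠ 0 := by rintro rfl; norm_num at hs
  have h1 := integrableOn_rpow_mul_cpow hs
  have h2 : IntegrableOn (fun x : ℝ ↦ ((x ^ (1 / 2 : ℝ) : ℝ) : ℂ) * (x : ℂ) ^ (-(s + 1))) (Ioi 1) :=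
    integrableOn_rpow_mul_cpow (by linarith)
  have hψ : IntegrableOn (fun x : ℝ ↦ (Chebyshev.psi x : ℂ) * (x : ℂ) ^ (-(s + 1))) (Ioi 1) :=
    integrableOn_ofReal_mul_cpow Chebyshev.psi_mono.measurable (fun x _ ↦ Chebyshev.psi_nonneg x)
      (fun x hx ↦ (Chebyshev.psi_le_const_mul_self (by linarith)).trans_eq
        (by rw [Real.rpow_one])) hs
  have h12 : IntegrableOn (fun x : ℝ ↦ ((x ^ (1 : ℝ) : ℝ) : ℂ) * (x : ℂ) ^ (-(s + 1)) +
      C * (((x ^ (1 / 2 : ℝ) : ℝ) : ℂ) * (x : ℂ) ^ (-(s + 1)))) (Ioi 1) := h1.add (h2.const_mul _)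
  calc psiGapTransform C s
      = ∫ x in Ioi (1 : ℝ), (((x ^ (1 : ℝ) : ℝ) : ℂ) * (x : ℂ) ^ (-(s + 1)) +
          C * (((x ^ (1 / 2 : ℝ) : ℝ) : ℂ) * (x : ℂ) ^ (-(s + 1))) -
          (Chebyshev.psi x : ℂ) * (x : ℂ) ^ (-(s + 1))) := by
        rw [psiGapTransform, complexMGF_log_mellinMeasure (measurable_psiGap C) hgap]
        congr 1 with x
        rw [psiGap, Real.rpow_one]
        push_cast
        ring
    _ = 1 / (s - 1) + C / (s - 1 / 2) + deriv riemannZeta s / riemannZeta s / s := by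
        rw [integral_sub h12 hψ, integral_add h1 (h2.const_mul _),
          integral_const_mul, integral_rpow_mul_cpow hs, integral_rpow_mul_cpow (by linarith),
          eq_div_of_mul_eq hs0 ((mul_comm _ s).trans
            (neg_deriv_riemannZeta_div_eq_mul_integral_psi hs).symm)]
        push_cast
        ring

theorem sub_one_half_ne_zero_of_lt_re {s : ℂ} (hs : 1 / 2 < s.re) : s - 1 / 2 ≠ 0 := by
  intro h
  have := congrArg re h
  norm_num at this
  linarith

theorem deriv_riemannZeta₁_eq_of_one_lt_re (hgap : ∀ x, 1 < x → 0 ≤ psiGap C x) {s : ℂ}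
    (hs : 1 < s.re) :
    deriv riemannZeta₁ s =
      riemannZeta₁ s * (s * psiGapTransform C s - C * s / (s - 1 / 2) - 1) := by
  have h1 : s ≠ 1 := by rintro rfl; simp at hs
  have h1' := sub_ne_zero.2 h1
  have h0 : s ≠ 0 := by rintro rfl; norm_num at hs
  have hζ := riemannZeta₁_ne_zero_of_one_lt_re hs
  have h2 := sub_one_half_ne_zero_of_lt_re (one_half_lt_one.trans hs)
  rw [psiGapTransform_eq_of_one_lt_re hgap hs, deriv_riemannZeta_eq_neg_inv_sub_sq_mul_add h1,
    riemannZeta_eq_inv_sub_mul h1]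
  generalize s - 1 / 2 = u at *
  field_simp
  ring

theorem deriv_riemannZeta₁_eq (hgap : ∀ x, 1 < x → 0 ≤ psiGap C x) {a : ℝ} (ha : 1 / 2 ≤ a)
    (hint : Iio (-a) ⊆ integrableExpSet Real.log (mellinMeasure (psiGap C))) {s : ℂ}
    (hs : a < s.re) :
    deriv riemannZeta₁ s =
      riemannZeta₁ s * (s * psiGapTransform C s - C * s / (s - 1 / 2) - 1) := by
  have hζ (z : ℂ) : AnalyticAt ℂ riemannZeta₁ z := differentiable_riemannZeta₁.analyticAt z
  have hM : AnalyticOnNhd ℂ (psiGapTransform C) {s : ℂ | a < s.re} :=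
    analyticOnNhd_complexMGF_neg hint
  refine AnalyticOnNhd.eqOn_of_preconnected_of_eventuallyEq
    (fun z _ ↦ (hζ z).deriv)
    (g := fun s ↦ riemannZeta₁ s * (s * psiGapTransform C s - C * s / (s - 1 / 2) - 1))
    (fun z hz ↦ ?_) (convex_halfSpace_re_gt a).isPreconnected (z₀ := ((a + 1 : ℝ) : ℂ))
    (by simp) ?_ hs
  · have hz' := sub_one_half_ne_zero_of_lt_re (ha.trans_lt hz)
    have := hζ z
    have := hM z hz
    fun_prop (disch := assumption)
  · filter_upwards [(isOpen_setOf_lt_re 1).mem_nhds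
      (by simp; linarith : ((a + 1 : ℝ) : ℂ) ∈ {s : ℂ | 1 < s.re})] with z hz
    exact deriv_riemannZeta₁_eq_of_one_lt_re hgap hz

theorem psiGapTransform_eq (hgap : ∀ x, 1 < x → 0 ≤ psiGap C x) {a : ℝ} (ha : 1 / 2 ≤ a)
    (hint : Iio (-a) ⊆ integrableExpSet Real.log (mellinMeasure (psiGap C))) {s : ℂ}
    (hs : a < s.re) (hζ : riemannZeta₁ s ≠ 0) :
    psiGapTransform C s = (1 + logDeriv riemannZeta₁ s) / s + C / (s - 1 / 2) := by
  have h0 : s ≠ 0 := by rintro rfl; norm_num at hs; linarith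
  have h2 := sub_one_half_ne_zero_of_lt_re (ha.trans_lt hs)
  rw [logDeriv_apply, deriv_riemannZeta₁_eq hgap ha hint hs]
  generalize s - 1 / 2 = u at *
  field_simp
  ring

theorem ae_nonneg_log_mellinMeasure (h : ℝ → ℝ) : 0 ≤ᵐ[mellinMeasure h] Real.log := by
  refine (withDensity_absolutelyContinuous _ _).ae_le ?_
  filter_upwards [ae_restrict_mem measurableSet_Ioi] with x hx
  exact Real.log_nonneg (le_of_lt hx)

theorem Iio_neg_one_half_subset_integrableExpSet (hgap : ∀ x, 1 < x → 0 ≤ psiGap C x) :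
    Iio (-(1 / 2)) ⊆ integrableExpSet Real.log (mellinMeasure (psiGap C)) := by
  let G : ℂ → ℂ := fun w ↦ (1 + logDeriv riemannZeta₁ (-w)) / (-w) + C / (-w - 1 / 2)
  have hζ (t : ℝ) (ht : t ∈ Ico (-1) (-(1 / 2))) : riemannZeta₁ (-t) ≠ 0 := by
    exact_mod_cast riemannZeta₁_ofReal_ne_zero_s5 (σ := -t) (by linarith [ht.2]) (by linarith [ht.1])
  refine Iio_subset_integrableExpSet_of_forall_analyticAt (a := -1) (G := G)
    Real.measurable_log.aemeasurable (ae_nonneg_log_mellinMeasure _)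
    (fun t ht ↦ mem_integrableExpSet_mellinMeasure (measurable_psiGap C) hgap
      (fun x hx ↦ psiGap_le C hx) ht) (fun t ht ↦ ?_) fun t ht hint ↦ ?_
  · have hneg : AnalyticAt ℂ (fun w : ℂ ↦ -w) t := by fun_prop
    have h1 : AnalyticAt ℂ (fun w : ℂ ↦ riemannZeta₁ (-w)) t :=
      (differentiable_riemannZeta₁.analyticAt _).comp hneg
    have h2 : AnalyticAt ℂ (fun w : ℂ ↦ deriv riemannZeta₁ (-w)) t :=
      (differentiable_riemannZeta₁.analyticAt _).deriv.comp hneg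
    have h3 : -(t : ℂ) ≠ 0 := by exact_mod_cast (by linarith [ht.2] : 0 < -t).ne'
    have h4 : -(t : ℂ) - 1 / 2 ≠ 0 :=
      sub_one_half_ne_zero_of_lt_re (by simpa using lt_neg.2 ht.2)
    have h5 := hζ t ht
    simp only [G, logDeriv_apply]
    fun_prop (disch := assumption)
  · have hcont : Continuous fun w : ℂ ↦ riemannZeta₁ (-w) :=
      differentiable_riemannZeta₁.continuous.comp continuous_neg
    filter_upwards [hcont.continuousAt.eventually_ne (hζ t ht)] with w hw hwt
    have h := psiGapTransform_eq hgap (a := -t) (by linarith [ht.2]) (by simpa using hint)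
      (s := -w) (by simpa using hwt) hw
    rw [psiGapTransform, neg_neg] at h
    exact h.symm

theorem analyticOnNhd_psiGapTransform (hgap : ∀ x, 1 < x → 0 ≤ psiGap C x) :
    AnalyticOnNhd ℂ (psiGapTransform C) {s : ℂ | 1 / 2 < s.re} :=
  analyticOnNhd_complexMGF_neg (Iio_neg_one_half_subset_integrableExpSet hgap)

theorem analyticOrderAt_riemannZeta₁_ne_top (s : ℂ) : analyticOrderAt riemannZeta₁ s ≠ ⊤ := by
  refine fun h ↦ one_ne_zero (α := ℂ) ?_
  rw [← riemannZeta₁_one]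
  exact AnalyticOnNhd.eqOn_zero_of_preconnected_of_eventuallyEq_zero
    (fun z _ ↦ differentiable_riemannZeta₁.analyticAt z) isPreconnected_univ (mem_univ s)
    (analyticOrderAt_eq_top.1 h) (mem_univ 1)

theorem ne_zero_of_deriv_eq_mul {f b : ℂ → ℂ} {z : ℂ} (hf : AnalyticAt ℂ f z)
    (hb : AnalyticAt ℂ b z) (hfb : deriv f =ᶠ[𝓝 z] f * b) (hord : analyticOrderAt f z ≠ ⊤) :
    f z ≠ 0 := by
  intro hz
  have h := hf.analyticOrderAt_deriv_add_one
  simp only [hz, sub_zero] at h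
  rw [analyticOrderAt_congr hfb, analyticOrderAt_mul hf hb, add_assoc] at h
  have h' := (ENat.add_right_injective_of_ne_top hord).eq_iff.1 (h.trans (add_zero _).symm)
  simp at h'

theorem riemannZeta₁_ne_zero_of_psiGap_nonneg (hgap : ∀ x, 1 < x → 0 ≤ psiGap C x) {ρ : ℂ}
    (hρ : 1 / 2 < ρ.re) : riemannZeta₁ ρ ≠ 0 := by
  have hM := analyticOnNhd_psiGapTransform hgap ρ hρ
  have hρ' := sub_one_half_ne_zero_of_lt_re hρ
  refine ne_zero_of_deriv_eq_mul (differentiable_riemannZeta₁.analyticAt ρ)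
    (b := fun s ↦ s * psiGapTransform C s - C * s / (s - 1 / 2) - 1)
    (by fun_prop (disch := assumption)) ?_ (analyticOrderAt_riemannZeta₁_ne_top ρ)
  filter_upwards [(isOpen_setOf_lt_re (1 / 2)).mem_nhds hρ] with s hs
  exact deriv_riemannZeta₁_eq hgap le_rfl (Iio_neg_one_half_subset_integrableExpSet hgap) hs

theorem riemannXi_ne_zero_of_one_half_lt_re (hgap : ∀ x, 1 < x → 0 ≤ psiGap C x) {ρ : ℂ}
    (hρ : 1 / 2 < ρ.re) : riemannXi ρ ≠ 0 := by
  have hpos : 0 < ρ.re := by linarith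
  have h0 : ρ ≠ 0 := by rintro rfl; simp at hpos
  rw [riemannXi_eq_mul_riemannZeta₁ hpos]
  exact mul_ne_zero (mul_ne_zero h0 (Gammaℝ_ne_zero_of_re_pos hpos))
    (riemannZeta₁_ne_zero_of_psiGap_nonneg hgap hρ)

theorem re_eq_one_half_of_riemannXi_eq_zero (hgap : ∀ x, 1 < x → 0 ≤ psiGap C x) {ρ : ℂ}
    (hρ : riemannXi ρ = 0) : ρ.re = 1 / 2 := by
  refine le_antisymm (not_lt.1 fun h ↦ riemannXi_ne_zero_of_one_half_lt_re hgap h hρ)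
    (not_lt.1 fun h ↦ riemannXi_ne_zero_of_one_half_lt_re hgap (ρ := 1 - ρ) ?_ ?_)
  · rw [sub_re, one_re]
    linarith
  · rw [riemannXi_one_sub, hρ]

end PsiGap

section BoundaryResidue

open Complex Set Filter Topology

/-! ### Residues of the Mellin transform on the critical line -/

theorem tendsto_sub_mul_logDeriv {f : ℂ → ℂ} {ρ : ℂ} (hf : AnalyticAt ℂ f ρ)
    (hord : analyticOrderAt f ρ ≠ ⊤) :
    Tendsto (fun s ↦ (s - ρ) * logDeriv f s) (𝓝[≠] ρ) (𝓝 (analyticOrderNatAt f ρ)) := by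
  obtain ⟨g, hg, hg0, hfg⟩ := hf.analyticOrderAt_ne_top.1 hord
  set m := analyticOrderNatAt f ρ
  have hlim : Tendsto (fun s ↦ m + (s - ρ) * logDeriv g s) (𝓝 ρ) (𝓝 m) := by
    have hcont : ContinuousAt (fun s ↦ m + (s - ρ) * (deriv g s / g s)) ρ := by
      have := hg.deriv.continuousAt
      have := hg.continuousAt
      fun_prop (disch := assumption)
    simpa [ContinuousAt, logDeriv_apply] using hcont
  refine (hlim.mono_left nhdsWithin_le_nhds).congr' ?_
  filter_upwards [nhdsWithin_le_nhds hfg.eventually_nhds,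
    nhdsWithin_le_nhds hg.eventually_analyticAt,
    nhdsWithin_le_nhds (hg.continuousAt.eventually_ne hg0), self_mem_nhdsWithin]
    with s hfs hgs hgs0 hsρ
  have hsρ' : s - ρ ≠ 0 := sub_ne_zero.2 hsρ
  have hpow : logDeriv (fun z ↦ (z - ρ) ^ m) s = m / (s - ρ) := by
    rw [logDeriv_fun_pow (by fun_prop), logDeriv_apply, deriv_sub_const, deriv_id'', mul_one_div]
  rw [(logDeriv_congr_nhds hfs).eq_of_nhds]
  simp only [smul_eq_mul]
  rw [logDeriv_mul (f := fun x ↦ (x - ρ) ^ m) (g := g) s (pow_ne_zero m hsρ') hgs0 (by fun_prop)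
    hgs.differentiableAt, hpow, mul_add, mul_div_cancel₀ _ hsρ']

theorem analyticOrderAt_riemannZeta₁ {s : ℂ} (hs : 0 < s.re) :
    analyticOrderAt riemannZeta₁ s = analyticOrderAt riemannXi s := by
  have h0 : s ≠ 0 := by rintro rfl; simp at hs
  have hE : AnalyticAt ℂ (fun z ↦ z⁻¹ * (Gammaℝ z)⁻¹) s :=
    (analyticAt_inv h0).mul (differentiable_Gammaℝ_inv.analyticAt s)
  have hE0 : analyticOrderAt (fun z ↦ z⁻¹ * (Gammaℝ z)⁻¹) s = 0 :=
    hE.analyticOrderAt_eq_zero.2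
      (mul_ne_zero (inv_ne_zero h0) (inv_ne_zero (Gammaℝ_ne_zero_of_re_pos hs)))
  have heq : riemannZeta₁ =ᶠ[𝓝 s] riemannXi * fun z ↦ z⁻¹ * (Gammaℝ z)⁻¹ := by
    filter_upwards [(isOpen_setOf_lt_re 0).mem_nhds hs] with z hz
    have hz0 : z ≠ 0 := by rintro rfl; simp at hz
    have hΓ := Gammaℝ_ne_zero_of_re_pos hz
    rw [Pi.mul_apply, riemannXi_eq_mul_riemannZeta₁ hz]
    field_simp
  rw [analyticOrderAt_congr heq, analyticOrderAt_mul (differentiable_riemannXi.analyticAt s) hE,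
    hE0, add_zero]

/-- The multiplicity of `1/2 + i l` as a zero of the Riemann xi function; it is `0` when this point
is not a zero. -/
noncomputable def xiMultiplicity (l : ℝ) : ℕ := analyticOrderNatAt riemannXi (1 / 2 + l * I)

/-- The residue at `1/2 + i l` of the meromorphic continuation of `psiGapTransform C`. -/
noncomputable def boundaryResidue (C l : ℝ) : ℂ :=
  (if l = 0 then (C : ℂ) else 0) + xiMultiplicity l / (1 / 2 + l * I)

theorem tendsto_mul_logDeriv_riemannZeta₁ (l : ℝ) :
    Tendsto (fun σ : ℝ ↦ (σ : ℂ) * logDeriv riemannZeta₁ (1 / 2 + σ + l * I)) (𝓝[>] 0)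
      (𝓝 (xiMultiplicity l)) := by
  have hmap : Tendsto (fun σ : ℝ ↦ (1 / 2 + σ + l * I : ℂ)) (𝓝[>] 0) (𝓝[≠] (1 / 2 + l * I)) := by
    refine tendsto_nhdsWithin_of_tendsto_nhds_of_eventually_within _ ?_ ?_
    · have hcont : Continuous fun σ : ℝ ↦ (1 / 2 + σ + l * I : ℂ) := by fun_prop
      simpa using (hcont.tendsto 0).mono_left nhdsWithin_le_nhds
    · filter_upwards [self_mem_nhdsWithin] with σ hσ h
      rw [mem_singleton_iff] at h
      simpa using (ofReal_ne_zero.2 (ne_of_gt (mem_Ioi.1 hσ))) (by linear_combination h)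
  have h := (tendsto_sub_mul_logDeriv (differentiable_riemannZeta₁.analyticAt _)
    (analyticOrderAt_riemannZeta₁_ne_top (1 / 2 + l * I))).comp hmap
  rw [analyticOrderNatAt, analyticOrderAt_riemannZeta₁ (by simp)] at h
  refine h.congr fun σ ↦ ?_
  rw [Function.comp_apply, add_right_comm, add_sub_cancel_left]

theorem tendsto_div_add_mul_I (l : ℝ) :
    Tendsto (fun σ : ℝ ↦ (σ : ℂ) / (σ + l * I)) (𝓝[>] 0) (𝓝 (if l = 0 then 1 else 0)) := by
  split_ifs with hl
  · refine tendsto_const_nhds.congr' ?_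
    filter_upwards [self_mem_nhdsWithin] with σ hσ
    have hσ0 : (σ : ℂ) ≠ 0 := ofReal_ne_zero.2 (ne_of_gt (mem_Ioi.1 hσ))
    simp [hl, hσ0]
  · have hl' : ((0 : ℝ) : ℂ) + l * I ≠ 0 := by simp [hl]
    have hcont : ContinuousAt (fun σ : ℝ ↦ (σ : ℂ) / (σ + l * I)) 0 := by
      fun_prop (disch := assumption)
    simpa [ContinuousAt] using hcont.tendsto.mono_left (nhdsWithin_le_nhds (s := Ioi 0))

theorem tendsto_mul_psiGapTransform {C : ℝ} (hgap : ∀ x, 1 < x → 0 ≤ psiGap C x) (l : ℝ) :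
    Tendsto (fun σ : ℝ ↦ (σ : ℂ) * psiGapTransform C (1 / 2 + σ + l * I)) (𝓝[>] 0)
      (𝓝 (boundaryResidue C l)) := by
  have hρ : (1 / 2 + l * I : ℂ) ≠ 0 := fun h ↦ by simpa using congrArg re h
  have hs : Tendsto (fun σ : ℝ ↦ (1 / 2 + σ + l * I : ℂ)) (𝓝[>] 0) (𝓝 (1 / 2 + l * I)) := by
    have hcont : Continuous fun σ : ℝ ↦ (1 / 2 + σ + l * I : ℂ) := by fun_prop
    simpa using (hcont.tendsto 0).mono_left nhdsWithin_le_nhds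
  have hσ : Tendsto (fun σ : ℝ ↦ (σ : ℂ)) (𝓝[>] 0) (𝓝 0) := by
    simpa using (continuous_ofReal.tendsto 0).mono_left nhdsWithin_le_nhds
  have hlim := ((hσ.add (tendsto_mul_logDeriv_riemannZeta₁ l)).div hs hρ).add
    ((tendsto_div_add_mul_I l).const_mul (C : ℂ))
  rw [zero_add, mul_ite, mul_one, mul_zero, add_comm, ← boundaryResidue] at hlim
  refine hlim.congr' ?_
  filter_upwards [self_mem_nhdsWithin] with σ hσ
  have hre : 1 / 2 < (1 / 2 + σ + l * I : ℂ).re := by simpa using hσ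
  rw [psiGapTransform_eq hgap le_rfl (Iio_neg_one_half_subset_integrableExpSet hgap) hre
    (riemannZeta₁_ne_zero_of_psiGap_nonneg hgap hre), Pi.div_apply]
  ring

end BoundaryResidue

section Folner

open Finset Filter Topology

/-! ### Følner sets and functions of positive type -/

variable {G : Type*} [AddCommGroup G]

/-- The sums `∑ s ∈ S, n s • s` with natural coefficients `n s ≤ N`; they serve as Følner sets. -/
def boxSums [DecidableEq G] (S : Finset G) (N : ℕ) : Finset G :=
  (Fintype.piFinset fun _ : S ↦ range (N + 1)).image fun n ↦ ∑ s : S, n s • (s : G)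

section BoxSums

variable [DecidableEq G]

theorem mem_boxSums {S : Finset G} {N : ℕ} {x : G} :
    x ∈ boxSums S N ↔ ∃ n : S → ℕ, (∀ s, n s ≤ N) ∧ ∑ s, n s • (s : G) = x := by
  simp only [boxSums, mem_image, Fintype.mem_piFinset, mem_range, Nat.lt_succ_iff]

theorem card_boxSums_le (S : Finset G) (N : ℕ) : #(boxSums S N) ≤ (N + 1) ^ #S :=
  card_image_le.trans (by simp)

theorem boxSums_nonempty (S : Finset G) (N : ℕ) : (boxSums S N).Nonempty :=
  ⟨0, mem_boxSums.2 ⟨0, by simp⟩⟩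

theorem boxSums_subset_succ (S : Finset G) (N : ℕ) : boxSums S N ⊆ boxSums S (N + 1) := by
  intro x hx
  obtain ⟨n, hn, hnx⟩ := mem_boxSums.1 hx
  exact mem_boxSums.2 ⟨n, fun s ↦ (hn s).trans N.le_succ, hnx⟩

theorem add_mem_boxSums_succ {S : Finset G} {N : ℕ} {x s : G} (hx : x ∈ boxSums S N)
    (hs : s ∈ S) : x + s ∈ boxSums S (N + 1) := by
  obtain ⟨n, hn, rfl⟩ := mem_boxSums.1 hx
  refine mem_boxSums.2 ⟨n + Pi.single ⟨s, hs⟩ 1, fun t ↦ add_le_add (hn t) ?_, ?_⟩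
  · rw [Pi.single_apply]
    split_ifs <;> simp
  · simp [add_smul, sum_add_distrib, Pi.single_apply, ite_smul]

end BoxSums

theorem exists_succ_le_mul_of_le_pow {b : ℕ → ℕ} {d : ℕ} (hb0 : 0 < b 0)
    (hb : ∀ N, b N ≤ (N + 1) ^ d) {ε : ℝ} (hε : 0 < ε) :
    ∃ N, (b (N + 1) : ℝ) ≤ (1 + ε) * b N := by
  by_contra! hlt
  have hgrow (N : ℕ) : (1 + ε) ^ N ≤ b N := by
    induction N with
    | zero => simpa [Nat.one_le_iff_ne_zero] using hb0.ne'
    | succ N ih =>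
      rw [pow_succ']
      exact (mul_le_mul_of_nonneg_left ih (by positivity)).trans (hlt N).le
  have hlim : Tendsto (fun N : ℕ ↦ ((N + 1 : ℕ) : ℝ) ^ d / (1 + ε) ^ (N + 1)) atTop (𝓝 0) :=
    (tendsto_pow_const_div_const_pow_of_one_lt d (by linarith)).comp (tendsto_add_atTop_nat 1)
  obtain ⟨N, hN⟩ := (hlim.eventually_lt_const (inv_pos.2 (by positivity : 0 < 1 + ε))).exists
  rw [div_lt_iff₀ (by positivity), pow_succ', inv_mul_cancel_left₀ (by positivity)] at hN
  exact absurd ((hgrow N).trans (by exact_mod_cast hb N)) hN.not_ge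

theorem card_add_card_le_card_add_card_filter_sub_mem [DecidableEq G] {A B : Finset G} {s : G}
    (hAB : A ⊆ B) (hs : ∀ x ∈ A, x + s ∈ B) : #A + #A ≤ #B + #{x ∈ A | x - s ∈ A} := by
  have hinter : A ∩ A.image (· + s) = {x ∈ A | x - s ∈ A} := by
    ext x
    simp only [mem_inter, mem_image, mem_filter, ← eq_sub_iff_add_eq, exists_eq_right]
  have hunion : A ∪ A.image (· + s) ⊆ B := union_subset hAB (image_subset_iff.2 hs)
  have hcard := card_union_add_card_inter A (A.image (· + s))
  rw [hinter, card_image_of_injective _ (add_left_injective s)] at hcard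
  exact hcard.symm.le.trans (by gcongr)

theorem exists_folner [DecidableEq G] (S : Finset G) {ε : ℝ} (hε : 0 < ε) :
    ∃ A : Finset G, A.Nonempty ∧ ∀ s ∈ S, (1 - ε) * #A ≤ #{x ∈ A | x - s ∈ A} := by
  obtain ⟨N, hN⟩ := exists_succ_le_mul_of_le_pow (b := fun N ↦ #(boxSums S N))
    (boxSums_nonempty S 0).card_pos (card_boxSums_le S) hε
  refine ⟨boxSums S N, boxSums_nonempty S N, fun s hs ↦ ?_⟩
  have h := card_add_card_le_card_add_card_filter_sub_mem (boxSums_subset_succ S N)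
    fun x hx ↦ add_mem_boxSums_succ hx hs
  have h' : (#(boxSums S N) + #(boxSums S N) : ℝ) ≤
      #(boxSums S (N + 1)) + #{x ∈ boxSums S N | x - s ∈ boxSums S N} := by exact_mod_cast h
  linarith

theorem sum_sum_sub_le_sum_card_mul [DecidableEq G] {β : G → ℝ}
    {S : Finset G} (hS : ∀ s ∉ S, β s ≤ 0) (A : Finset G) :
    ∑ j ∈ A, ∑ k ∈ A, β (j - k) ≤ ∑ s ∈ S, #{x ∈ A | x - s ∈ A} * β s := by
  have hterm (j k : G) : β (j - k) ≤ ∑ s ∈ S, if j - s = k then β s else 0 := by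
    have hcomm (s : G) : j - s = k ↔ j - k = s := by rw [sub_eq_iff_eq_add, sub_eq_iff_eq_add']
    simp only [hcomm, sum_ite_eq]
    split_ifs with h
    · rfl
    · exact hS _ h
  calc ∑ j ∈ A, ∑ k ∈ A, β (j - k)
      ≤ ∑ j ∈ A, ∑ k ∈ A, ∑ s ∈ S, if j - s = k then β s else 0 :=
        sum_le_sum fun j _ ↦ sum_le_sum fun k _ ↦ hterm j k
    _ = ∑ j ∈ A, ∑ s ∈ S, if j - s ∈ A then β s else 0 :=
        sum_congr rfl fun j _ ↦ by simp only [sum_comm (s := A) (t := S), sum_ite_eq]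
    _ = ∑ s ∈ S, #{x ∈ A | x - s ∈ A} * β s := by
        rw [sum_comm]
        exact sum_congr rfl fun s _ ↦ by rw [← sum_filter, sum_const, nsmul_eq_mul]

end Folner

section PositiveType

open Finset Filter Topology MeasureTheory ProbabilityTheory Complex ComplexConjugate

/-- Functions of positive type on an additive group: those whose quadratic forms
`∑ c j * conj (c k) * f (j - k)` have nonnegative real part. This is weaker than the usual notion,
in which the forms are required to be real, and is all that is needed for averaging `Re f`. -/
def IsPositiveType {G : Type*} [AddCommGroup G] (f : G → ℂ) : Prop :=
  ∀ (A : Finset G) (c : G → ℂ), 0 ≤ (∑ j ∈ A, ∑ k ∈ A, c j * conj (c k) * f (j - k)).re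

namespace IsPositiveType

section Group

variable {G : Type*} [AddCommGroup G] {f : G → ℂ}

theorem const {r : ℝ} (hr : 0 ≤ r) : IsPositiveType fun _ : G ↦ (r : ℂ) := by
  intro A c
  simp only [← sum_mul, ← sum_mul_sum, ← map_sum, mul_conj, ← ofReal_mul, ofReal_re]
  exact mul_nonneg (normSq_nonneg _) hr

theorem of_tendsto {ι : Type*} {l : Filter ι} [l.NeBot] {F : ι → G → ℂ}
    (hF : ∀ᶠ i in l, IsPositiveType (F i)) (hlim : ∀ x, Tendsto (fun i ↦ F i x) l (𝓝 (f x))) :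
    IsPositiveType f := fun A c ↦
  ge_of_tendsto ((continuous_re.tendsto _).comp <| tendsto_finsetSum A fun j _ ↦
    tendsto_finsetSum A fun k _ ↦ (hlim (j - k)).const_mul (c j * conj (c k)))
    (hF.mono fun _ hi ↦ hi A c)

theorem sum_re_sub_nonneg (hf : IsPositiveType f) (A : Finset G) :
    0 ≤ ∑ j ∈ A, ∑ k ∈ A, (f (j - k)).re := by
  simpa only [one_mul, map_one, re_sum] using hf A fun _ ↦ 1

/-- Averaging over Følner sets gives every point of `S` asymptotically the same weight. -/
theorem sum_re_nonneg (hf : IsPositiveType f)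
    {S : Finset G} (hS : ∀ s ∉ S, (f s).re ≤ 0) : 0 ≤ ∑ s ∈ S, (f s).re := by
  classical
  set T := ∑ s ∈ S, |(f s).re|
  have hT : 0 ≤ T := sum_nonneg fun _ _ ↦ abs_nonneg _
  have key {ε : ℝ} (hε : 0 < ε) : 0 ≤ ∑ s ∈ S, (f s).re + ε * T := by
    obtain ⟨A, hA, hAS⟩ := exists_folner S hε
    refine nonneg_of_mul_nonneg_right (a := (#A : ℝ)) ?_ (by exact_mod_cast hA.card_pos)
    calc (0 : ℝ) ≤ ∑ s ∈ S, #{x ∈ A | x - s ∈ A} * (f s).re :=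
          (hf.sum_re_sub_nonneg A).trans (sum_sum_sub_le_sum_card_mul hS A)
      _ ≤ ∑ s ∈ S, #A * ((f s).re + ε * |(f s).re|) := sum_le_sum fun s hs ↦ ?_
      _ = #A * (∑ s ∈ S, (f s).re + ε * T) := by rw [← mul_sum, sum_add_distrib, mul_sum]
    have hle : (#{x ∈ A | x - s ∈ A} : ℝ) ≤ #A := by exact_mod_cast card_filter_le _ _
    nlinarith [hAS s hs, neg_abs_le (f s).re, le_abs_self (f s).re]
  refine le_of_forall_pos_le_add fun ε hε ↦ (key (div_pos hε (by linarith : 0 < T + 1))).trans ?_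
  gcongr
  rw [div_mul_eq_mul_div, div_le_iff₀ (by linarith)]
  nlinarith

end Group

/-- The form of the product is the average over `Ω` of the form of `f` with coefficients
`c j * exp (-i j X ω)`. -/
theorem mul_complexMGF {Ω : Type*} [MeasurableSpace Ω] {μ : Measure Ω} {X : Ω → ℝ} {f : ℝ → ℂ}
    (hf : IsPositiveType f) (hX : AEMeasurable X μ) {σ : ℝ} (hσ : -σ ∈ integrableExpSet X μ) :
    IsPositiveType fun l ↦ f l * complexMGF X μ (-(σ + l * I)) := by
  intro A c
  have hint (l : ℝ) : Integrable (fun ω ↦ cexp (-(σ + l * I) * X ω)) μ :=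
    integrable_cexp_mul_of_re_mem_integrableExpSet hX (by simpa using hσ)
  have hform (ω : Ω) :
      ∑ j ∈ A, ∑ k ∈ A, c j * conj (c k) * f (j - k) * cexp (-(σ + (j - k : ℝ) * I) * X ω) =
      (Real.exp (-σ * X ω) : ℂ) * ∑ j ∈ A, ∑ k ∈ A, c j * cexp (-(j * I * X ω)) *
        conj (c k * cexp (-(k * I * X ω))) * f (j - k) := by
    simp only [mul_sum]
    refine sum_congr rfl fun j _ ↦ sum_congr rfl fun k _ ↦ ?_
    have hexp : cexp (-(σ + (j - k : ℝ) * I) * X ω) =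
        cexp (-σ * X ω) * cexp (-(j * I * X ω)) * cexp (k * I * X ω) := by
      rw [← Complex.exp_add, ← Complex.exp_add]
      push_cast
      ring_nf
    rw [hexp, map_mul, ← Complex.exp_conj]
    simp only [map_neg, map_mul, conj_ofReal, conj_I]
    push_cast
    ring_nf
  have hintegral : ∑ j ∈ A, ∑ k ∈ A, c j * conj (c k) *
      (f (j - k) * complexMGF X μ (-(σ + (j - k : ℝ) * I))) =
      ∫ ω, ∑ j ∈ A, ∑ k ∈ A, c j * conj (c k) * f (j - k) *
        cexp (-(σ + (j - k : ℝ) * I) * X ω) ∂μ := by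
    rw [integral_finsetSum _ fun j _ ↦ integrable_finsetSum _ fun k _ ↦ (hint _).const_mul _]
    refine sum_congr rfl fun j _ ↦ ?_
    rw [integral_finsetSum _ fun k _ ↦ (hint _).const_mul _]
    simp only [integral_const_mul, complexMGF, mul_assoc]
  have hre := integral_re (integrable_finsetSum A fun j _ ↦ integrable_finsetSum A fun k _ ↦
    (hint (j - k)).const_mul (c j * conj (c k) * f (j - k)))
  simp only [RCLike.re_eq_complex_re] at hre
  rw [hintegral, ← hre]
  refine integral_nonneg fun ω ↦ ?_
  rw [Pi.zero_apply, hform, re_ofReal_mul]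
  exact mul_nonneg (Real.exp_nonneg _) (hf A fun j ↦ c j * cexp (-(j * I * X ω)))

theorem mul_one_div_add_mul_I {f : ℝ → ℂ} (hf : IsPositiveType f) {a : ℝ} (ha : 0 < a) :
    IsPositiveType fun l ↦ f l * (1 / (a + l * I)) := by
  have hmem : -a ∈ integrableExpSet id (volume.restrict (Set.Ioi (0 : ℝ))) :=
    exp_neg_integrableOn_Ioi 0 ha
  convert hf.mul_complexMGF aemeasurable_id hmem using 3 with l
  have hre : (-(a + l * I) : ℂ).re < 0 := by simpa using ha
  simp only [complexMGF, id_eq]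
  rw [integral_exp_mul_complex_Ioi hre]
  rw [ofReal_zero, mul_zero, Complex.exp_zero, neg_div_neg_eq]

end IsPositiveType

theorem isPositiveType_boundaryResidue {C : ℝ} (hgap : ∀ x, 1 < x → 0 ≤ psiGap C x) :
    IsPositiveType (boundaryResidue C) := by
  refine .of_tendsto (l := 𝓝[>] (0 : ℝ)) ?_ (tendsto_mul_psiGapTransform hgap)
  filter_upwards [self_mem_nhdsWithin] with σ hσ
  have hmem : -(1 / 2 + σ) ∈ integrableExpSet Real.log (mellinMeasure (psiGap C)) :=
    Iio_neg_one_half_subset_integrableExpSet hgap (by simpa using hσ)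
  have hMGF := (IsPositiveType.const (le_of_lt hσ)).mul_complexMGF
    Real.measurable_log.aemeasurable hmem
  simpa [psiGapTransform] using hMGF

end PositiveType

section ZeroOrdinates

open Complex Set Filter Topology Finset

/-! ### Sums over the zeros of the Riemann xi function -/

theorem riemannXi_one_half_ne_zero : riemannXi (1 / 2) ≠ 0 := by
  rw [riemannXi_eq_mul_riemannZeta₁ (by norm_num)]
  refine mul_ne_zero (mul_ne_zero (by norm_num) (Gammaℝ_ne_zero_of_re_pos (by norm_num))) ?_
  simpa using riemannZeta₁_ofReal_ne_zero_s5 (σ := 1 / 2) (by norm_num) (by norm_num)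

theorem xiMultiplicity_ne_zero_iff {l : ℝ} :
    xiMultiplicity l ≠ 0 ↔ riemannXi (1 / 2 + l * I) = 0 := by
  have hord : analyticOrderAt riemannXi (1 / 2 + l * I) ≠ ⊤ := by
    rw [← analyticOrderAt_riemannZeta₁ (by simp)]
    exact analyticOrderAt_riemannZeta₁_ne_top _
  rw [← (differentiable_riemannXi.analyticAt _).analyticOrderAt_ne_zero,
    ← Nat.cast_analyticOrderNatAt hord, xiMultiplicity, Nat.cast_ne_zero]

theorem xiMultiplicity_zero : xiMultiplicity 0 = 0 := by
  by_contra h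
  exact riemannXi_one_half_ne_zero (by simpa using xiMultiplicity_ne_zero_iff.1 h)

theorem re_boundaryResidue_zero_div {C : ℝ} (a : ℝ) :
    (boundaryResidue C 0 * (1 / (a + (0 : ℝ) * I))).re = C / a := by
  simp [boundaryResidue, xiMultiplicity_zero, ← ofReal_inv, div_eq_mul_inv]

theorem re_boundaryResidue_div {C a l : ℝ} (hl : l ≠ 0) :
    (boundaryResidue C l * (1 / (a + l * I))).re =
      -(xiMultiplicity l * ((l ^ 2 - a / 2) / ((1 / 4 + l ^ 2) * (a ^ 2 + l ^ 2)))) := by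
  have h2 : a ^ 2 + l ^ 2 ≠ 0 := by positivity
  rw [boundaryResidue, if_neg hl, zero_add, div_mul_div_comm, mul_one, div_re, natCast_re,
    natCast_im, zero_mul, zero_div, add_zero, normSq_mul]
  simp only [one_div, mul_re, add_re, inv_re, re_ofNat, normSq_ofNat, div_self_mul_self', ofReal_re,
    I_re, mul_zero, ofReal_im, I_im, mul_one, sub_self, add_zero, add_im, inv_im, im_ofNat,
    neg_zero, zero_div, mul_im, zero_add, normSq_apply]
  field_simp
  ring

theorem finite_setOf_xiMultiplicity_ne_zero (R : ℝ) :
    {l : ℝ | xiMultiplicity l ≠ 0 ∧ |l| ≤ R}.Finite := by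
  have han : AnalyticOnNhd ℝ (fun l : ℝ ↦ riemannXi (1 / 2 + l * I)) univ := fun l _ ↦
    (differentiable_riemannXi.analyticAt _).restrictScalars.comp
      (analyticAt_const.add ((ofRealCLM.analyticAt l).mul analyticAt_const))
  have hcodisc := han.preimage_zero_mem_codiscrete (x := 0)
    (by simpa using riemannXi_one_half_ne_zero)
  obtain ⟨hclosed, hdiscrete⟩ := compl_mem_codiscrete_iff.1 hcodisc
  refine ((isCompact_Icc (a := -R) (b := R)).inter_left hclosed).finite
    (hdiscrete.mono Set.inter_subset_left) |>.subset fun l hl ↦ ?_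
  exact ⟨xiMultiplicity_ne_zero_iff.1 hl.1, abs_le.1 hl.2⟩

/-- The ordinates `l` with `|l| ≤ R` of the zeros `1/2 + i l` of the Riemann xi function. -/
noncomputable def xiOrdinates (R : ℝ) : Finset ℝ := (finite_setOf_xiMultiplicity_ne_zero R).toFinset

theorem mem_xiOrdinates {R l : ℝ} : l ∈ xiOrdinates R ↔ xiMultiplicity l ≠ 0 ∧ |l| ≤ R := by
  simp [xiOrdinates]

theorem xiOrdinates_mono : Monotone xiOrdinates := fun _ _ hR _ hl ↦
  mem_xiOrdinates.2 ((mem_xiOrdinates.1 hl).imp_right (·.trans hR))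

theorem ne_zero_of_mem_xiOrdinates {R l : ℝ} (hl : l ∈ xiOrdinates R) : l ≠ 0 := by
  rintro rfl
  exact (mem_xiOrdinates.1 hl).1 xiMultiplicity_zero

theorem exists_pos_le_sq_of_mem_xiOrdinates : ∃ δ > 0, ∀ R, ∀ l ∈ xiOrdinates R, δ ≤ l ^ 2 := by
  have h0 : riemannXi (1 / 2 + (0 : ℝ) * I) ≠ 0 := by simpa using riemannXi_one_half_ne_zero
  have hcont : Continuous fun l : ℝ ↦ riemannXi (1 / 2 + l * I) := by
    have := differentiable_riemannXi.continuous
    fun_prop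
  obtain ⟨ε, hε, hball⟩ := Metric.eventually_nhds_iff.1 (hcont.continuousAt.eventually_ne h0)
  refine ⟨ε ^ 2, by positivity, fun R l hl ↦ ?_⟩
  rw [← sq_abs l]
  gcongr
  by_contra! hlt
  exact hball (by simpa using hlt) (xiMultiplicity_ne_zero_iff.1 (mem_xiOrdinates.1 hl).1)

variable {C : ℝ}

theorem sum_xiOrdinates_le (hgap : ∀ x, 1 < x → 0 ≤ psiGap C x) {a R : ℝ} (ha : 0 < a)
    (hR : 0 ≤ R) (haR : a / 2 ≤ R ^ 2) :
    ∑ l ∈ xiOrdinates R, xiMultiplicity l *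
      ((l ^ 2 - a / 2) / ((1 / 4 + l ^ 2) * (a ^ 2 + l ^ 2))) ≤ C / a := by
  have h0 : (0 : ℝ) ∉ xiOrdinates R := fun h ↦ ne_zero_of_mem_xiOrdinates h rfl
  have hpos := ((isPositiveType_boundaryResidue hgap).mul_one_div_add_mul_I ha).sum_re_nonneg
    (S := insert 0 (xiOrdinates R)) fun l hl ↦ ?_
  · rw [sum_insert h0, re_boundaryResidue_zero_div, sum_congr rfl fun l hl ↦
      re_boundaryResidue_div (ne_zero_of_mem_xiOrdinates hl), sum_neg_distrib] at hpos
    linarith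
  · rw [Finset.mem_insert, not_or, mem_xiOrdinates, not_and_or, not_not, not_le] at hl
    rw [re_boundaryResidue_div hl.1, neg_nonpos]
    rcases hl.2 with hm | hlR
    · simp [hm]
    · have hl2 : a / 2 ≤ l ^ 2 := haR.trans (by rw [← sq_abs l]; gcongr)
      have := sub_nonneg.2 hl2
      positivity

theorem sum_xiOrdinates_div_le (hgap : ∀ x, 1 < x → 0 ≤ psiGap C x) :
    ∃ K, ∀ R, ∑ l ∈ xiOrdinates R, xiMultiplicity l / (1 / 4 + l ^ 2) ≤ K := by
  obtain ⟨δ, hδ, hδl⟩ := exists_pos_le_sq_of_mem_xiOrdinates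
  obtain ⟨a, ha, ha1, haδ⟩ : ∃ a : ℝ, 0 < a ∧ a ≤ 1 ∧ a ≤ δ :=
    ⟨min 1 δ, lt_min one_pos hδ, min_le_left _ _, min_le_right _ _⟩
  refine ⟨4 * (C / a), fun R ↦ ?_⟩
  calc ∑ l ∈ xiOrdinates R, xiMultiplicity l / (1 / 4 + l ^ 2)
      ≤ ∑ l ∈ xiOrdinates (max R 1), xiMultiplicity l / (1 / 4 + l ^ 2) :=
        sum_le_sum_of_subset_of_nonneg (xiOrdinates_mono (le_max_left R 1))
          fun l _ _ ↦ by positivity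
    _ ≤ ∑ l ∈ xiOrdinates (max R 1), 4 * (xiMultiplicity l *
          ((l ^ 2 - a / 2) / ((1 / 4 + l ^ 2) * (a ^ 2 + l ^ 2)))) := sum_le_sum fun l hl ↦ ?_
    _ ≤ 4 * (C / a) := by
        rw [← mul_sum]
        gcongr
        have hmax := le_max_right R 1
        exact sum_xiOrdinates_le hgap ha (by linarith) (by nlinarith)
  have hl2 := haδ.trans (hδl _ l hl)
  have hratio : 1 ≤ 4 * ((l ^ 2 - a / 2) / (a ^ 2 + l ^ 2)) := by
    rw [← mul_div_assoc, one_le_div (by positivity)]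
    nlinarith
  calc (xiMultiplicity l / (1 / 4 + l ^ 2) : ℝ)
      ≤ xiMultiplicity l / (1 / 4 + l ^ 2) * (4 * ((l ^ 2 - a / 2) / (a ^ 2 + l ^ 2))) :=
        le_mul_of_one_le_right (by positivity) hratio
    _ = 4 * (xiMultiplicity l * ((l ^ 2 - a / 2) / ((1 / 4 + l ^ 2) * (a ^ 2 + l ^ 2)))) := by
        field_simp

theorem sum_xiOrdinates_poisson_le (hgap : ∀ x, 1 < x → 0 ≤ psiGap C x) :
    ∃ K, ∀ R, ∀ a > 0, ∑ l ∈ xiOrdinates R, xiMultiplicity l * (a / (a ^ 2 + l ^ 2)) ≤ K := by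
  obtain ⟨δ, hδ, hδl⟩ := exists_pos_le_sq_of_mem_xiOrdinates
  obtain ⟨K, hK⟩ := sum_xiOrdinates_div_le hgap
  refine ⟨C + (1 + 1 / δ) * K, fun R a ha ↦ ?_⟩
  set R' := max R (max 1 a)
  have hR' : max 1 a ≤ R' := le_max_right _ _
  have hterm : ∀ l ∈ xiOrdinates R', xiMultiplicity l * (a / (a ^ 2 + l ^ 2)) ≤
      a * (xiMultiplicity l * ((l ^ 2 - a / 2) / ((1 / 4 + l ^ 2) * (a ^ 2 + l ^ 2)))) +
        (1 + 1 / δ) * (xiMultiplicity l / (1 / 4 + l ^ 2)) := fun l hl ↦ by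
    have hl2 : 1 ≤ l ^ 2 / δ := (one_le_div hδ).2 (hδl _ l hl)
    have hratio : a * (a / 2 + 1 / 4) / (a ^ 2 + l ^ 2) ≤ 1 + 1 / δ := by
      rw [div_le_iff₀ (by positivity)]
      have : (1 + 1 / δ) * (a ^ 2 + l ^ 2) = a ^ 2 + l ^ 2 + a ^ 2 / δ + l ^ 2 / δ := by ring
      have : 0 ≤ a ^ 2 / δ := by positivity
      nlinarith [sq_nonneg (a - 1), sq_nonneg l]
    calc (xiMultiplicity l * (a / (a ^ 2 + l ^ 2)) : ℝ)
        = a * (xiMultiplicity l * ((l ^ 2 - a / 2) / ((1 / 4 + l ^ 2) * (a ^ 2 + l ^ 2)))) +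
          a * (a / 2 + 1 / 4) / (a ^ 2 + l ^ 2) * (xiMultiplicity l / (1 / 4 + l ^ 2)) := by
          field_simp
          ring
      _ ≤ _ := by gcongr
  calc ∑ l ∈ xiOrdinates R, xiMultiplicity l * (a / (a ^ 2 + l ^ 2))
      ≤ ∑ l ∈ xiOrdinates R', xiMultiplicity l * (a / (a ^ 2 + l ^ 2)) :=
        sum_le_sum_of_subset_of_nonneg (xiOrdinates_mono (le_max_left _ _))
          fun l _ _ ↦ by positivity
    _ ≤ a * ∑ l ∈ xiOrdinates R', xiMultiplicity l *
          ((l ^ 2 - a / 2) / ((1 / 4 + l ^ 2) * (a ^ 2 + l ^ 2))) +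
        (1 + 1 / δ) * ∑ l ∈ xiOrdinates R', xiMultiplicity l / (1 / 4 + l ^ 2) := by
        rw [mul_sum, mul_sum, ← sum_add_distrib]
        exact sum_le_sum hterm
    _ ≤ a * (C / a) + (1 + 1 / δ) * K := by
        have h1 := (le_max_left 1 a).trans hR'
        have h2 := (le_max_right 1 a).trans hR'
        gcongr
        · exact sum_xiOrdinates_le hgap ha (by linarith) (by nlinarith)
        · exact hK R'
    _ = C + (1 + 1 / δ) * K := by rw [mul_div_cancel₀ _ ha.ne']

end ZeroOrdinates

section XiGrowth

open MeasureTheory ProbabilityTheory Complex Set Filter Topology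
open scoped Nat

/-! ### Growth of the Riemann xi function -/

theorem norm_Gamma_le {s : ℂ} (hs : 0 < s.re) : ‖Gamma s‖ ≤ Real.Gamma s.re := by
  rw [Complex.Gamma_eq_integral hs, Real.Gamma_eq_integral hs]
  refine (norm_integral_le_integral_norm _).trans_eq
    (setIntegral_congr_fun measurableSet_Ioi fun x hx ↦ ?_)
  rw [norm_mul, norm_cpow_eq_rpow_re_of_pos hx, norm_real,
    Real.norm_of_nonneg (Real.exp_pos _).le, sub_re, one_re]

theorem norm_Gammaℝ_le {s : ℂ} (hs : 0 < s.re) : ‖Gammaℝ s‖ ≤ Real.Gamma (s.re / 2) := by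
  have hre : (s / 2).re = s.re / 2 := by simp
  rw [Gammaℝ_def, norm_mul, norm_cpow_eq_rpow_re_of_pos Real.pi_pos, ← hre]
  refine (mul_le_of_le_one_left (norm_nonneg _) ?_).trans (norm_Gamma_le (by simpa using hs))
  exact Real.rpow_le_one_of_one_le_of_nonpos (by linarith [Real.pi_gt_three])
    (by simpa [neg_div] using (half_pos hs).le)

theorem norm_complexMGF_mellinMeasure_fract_le {s : ℂ} (hs : 0 < s.re) :
    ‖complexMGF Real.log (mellinMeasure Int.fract) (-s)‖ ≤ 1 / s.re := by
  rw [complexMGF_log_mellinMeasure measurable_fract fun x _ ↦ Int.fract_nonneg x]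
  have hint : ∫ x in Ioi (1 : ℝ), x ^ (-(s.re + 1)) = 1 / s.re := by
    rw [integral_Ioi_rpow_of_lt (by linarith) one_pos, Real.one_rpow, neg_add,
      neg_add_cancel_right, neg_div_neg_eq]
  rw [← hint]
  refine norm_integral_le_of_norm_le
    (integrableOn_Ioi_rpow_of_lt (by linarith) one_pos) ?_
  filter_upwards [ae_restrict_mem measurableSet_Ioi] with x hx
  have hx0 : 0 < x := one_pos.trans hx
  rw [norm_mul, norm_cpow_eq_rpow_re_of_pos hx0, norm_real,
    Real.norm_of_nonneg (Int.fract_nonneg x)]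
  simpa using mul_le_of_le_one_left (by positivity) (Int.fract_lt_one x).le

theorem norm_riemannZeta₁_le {s : ℂ} (hs : 0 < s.re) :
    ‖riemannZeta₁ s‖ ≤ ‖s‖ + ‖s‖ * ‖s - 1‖ / s.re := by
  rw [riemannZeta₁_eq_of_re_pos hs, ← mul_one_div, ← norm_mul]
  refine (norm_sub_le _ _).trans ?_
  rw [norm_mul]
  gcongr
  exact norm_complexMGF_mellinMeasure_fract_le hs

theorem one_le_norm_riemannZeta₁ {x : ℝ} (hx : 1 ≤ x) : 1 ≤ ‖riemannZeta₁ x‖ := by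
  have hx0 : 0 < x := one_pos.trans_le hx
  have hM : ‖complexMGF Real.log (mellinMeasure Int.fract) (-(x : ℂ))‖ ≤ 1 / x :=
    norm_complexMGF_mellinMeasure_fract_le (s := x) hx0
  have hsub : ‖((x : ℂ) - 1)‖ = x - 1 := by
    rw [← ofReal_one, ← ofReal_sub, norm_real, Real.norm_of_nonneg (sub_nonneg.2 hx)]
  rw [riemannZeta₁_eq_of_re_pos (s := x) hx0]
  calc (1 : ℝ) = x - x * (x - 1) * (1 / x) := by field_simp; ring
    _ ≤ ‖(x : ℂ)‖ - ‖x * ((x : ℂ) - 1) * complexMGF Real.log (mellinMeasure Int.fract) (-x)‖ := by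
      rw [norm_mul, norm_mul, hsub, norm_real, Real.norm_of_nonneg hx0.le]
      have := sub_nonneg.2 hx
      gcongr
    _ ≤ _ := norm_sub_norm_le _ _

theorem Gamma_le_of_mem_Icc {n : ℕ} {x : ℝ} (hx : x ∈ Icc (1 / 4) (n + 1 : ℝ)) :
    Real.Gamma x ≤ (Real.Gamma (1 / 4) + 1) * n ! := by
  have hΓ : 0 < Real.Gamma (1 / 4) := Real.Gamma_pos_of_pos (by norm_num)
  have hfac : (1 : ℝ) ≤ n ! := mod_cast n.factorial_pos
  have hmax : Real.Gamma x ≤ max (Real.Gamma (1 / 4)) (Real.Gamma (n + 1)) :=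
    Real.convexOn_Gamma.le_max_of_mem_Icc (mem_Ioi.2 (by norm_num)) (mem_Ioi.2 (by positivity)) hx
  rw [Real.Gamma_nat_eq_factorial] at hmax
  refine hmax.trans (max_le ?_ ?_) <;> nlinarith

theorem norm_riemannXi_le_of_re_nonneg {n : ℕ} {z : ℂ} (hz : 0 ≤ z.re) (hzn : ‖z‖ ≤ n) :
    ‖riemannXi (1 / 2 + z)‖ ≤ 3 * (Real.Gamma (1 / 4) + 1) * (n + 3)! := by
  have hre : (1 / 2 + z).re = 1 / 2 + z.re := by simp
  have hs : 0 < (1 / 2 + z).re := by rw [hre]; positivity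
  have hs1 : ‖1 / 2 + z‖ ≤ n + 1 := by
    linarith [norm_add_le (1 / 2) z, show ‖(1 / 2 : ℂ)‖ = 1 / 2 by simp]
  have hs2 : ‖1 / 2 + z - 1‖ ≤ n + 1 := by
    rw [show 1 / 2 + z - 1 = z - 1 / 2 by ring]
    linarith [norm_sub_le z (1 / 2), show ‖(1 / 2 : ℂ)‖ = 1 / 2 by simp]
  have hζ : ‖riemannZeta₁ (1 / 2 + z)‖ ≤ 3 * ((n + 2) * (n + 3)) := by
    calc ‖riemannZeta₁ (1 / 2 + z)‖ ≤ _ := norm_riemannZeta₁_le hs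
      _ ≤ (n + 1) + (n + 1) * (n + 1) / (1 / 2) := by
        gcongr
        rw [hre]
        linarith
      _ ≤ 3 * ((n + 2) * (n + 3)) := by nlinarith
  have hΓ : ‖Gammaℝ (1 / 2 + z)‖ ≤ (Real.Gamma (1 / 4) + 1) * n ! := by
    refine (norm_Gammaℝ_le hs).trans (Gamma_le_of_mem_Icc ⟨?_, ?_⟩) <;> rw [hre] <;>
      linarith [(re_le_norm z).trans hzn]
  rw [riemannXi_eq_mul_riemannZeta₁ hs, norm_mul, norm_mul]
  calc ‖1 / 2 + z‖ * ‖Gammaℝ (1 / 2 + z)‖ * ‖riemannZeta₁ (1 / 2 + z)‖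
      ≤ (n + 1) * ((Real.Gamma (1 / 4) + 1) * n !) * (3 * ((n + 2) * (n + 3))) := by gcongr
    _ = 3 * (Real.Gamma (1 / 4) + 1) * (n + 3)! := by
      simp only [Nat.factorial_succ]
      push_cast
      ring

theorem riemannXi_one_half_sub (z : ℂ) : riemannXi (1 / 2 - z) = riemannXi (1 / 2 + z) := by
  rw [← riemannXi_one_sub]
  ring_nf

theorem norm_riemannXi_le {n : ℕ} {z : ℂ} (hzn : ‖z‖ ≤ n) :
    ‖riemannXi (1 / 2 + z)‖ ≤ 3 * (Real.Gamma (1 / 4) + 1) * (n + 3)! := by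
  rcases le_total 0 z.re with hz | hz
  · exact norm_riemannXi_le_of_re_nonneg hz hzn
  · rw [← riemannXi_one_half_sub, sub_eq_add_neg]
    exact norm_riemannXi_le_of_re_nonneg (by simpa using hz) (by simpa using hzn)

theorem norm_Gammaℝ_two_mul_add_two (k : ℕ) :
    ‖Gammaℝ (2 * k + 2)‖ = k ! / Real.pi ^ (k + 1) := by
  have h₁ : (2 * k + 2 : ℂ) / 2 = k + 1 := by ring
  have h₂ : -(2 * k + 2 : ℂ) / 2 = -((k + 1 : ℕ) : ℂ) := by push_cast; ring
  rw [Gammaℝ_def, h₁, h₂, Complex.Gamma_nat_eq_factorial, cpow_neg, cpow_natCast, norm_mul,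
    norm_inv, norm_pow, norm_real, Real.norm_of_nonneg Real.pi_pos.le, norm_natCast,
    inv_mul_eq_div]

theorem factorial_div_pi_pow_le_norm_riemannXi (k : ℕ) :
    k ! / Real.pi ^ (k + 1) ≤ ‖riemannXi (2 * k + 2)‖ := by
  have hs : (2 * k + 2 : ℂ) = ((2 * k + 2 : ℝ) : ℂ) := by push_cast; rfl
  have hnorm : 1 ≤ ‖(2 * k + 2 : ℂ)‖ := by
    rw [hs, norm_real, Real.norm_of_nonneg (by positivity)]
    linarith [k.cast_nonneg (α := ℝ)]
  have hζ : 1 ≤ ‖riemannZeta₁ (2 * k + 2)‖ := by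
    rw [hs]
    exact one_le_norm_riemannZeta₁ (by linarith [k.cast_nonneg (α := ℝ)])
  rw [riemannXi_eq_mul_riemannZeta₁ (by rw [hs, ofReal_re]; positivity), norm_mul, norm_mul,
    norm_Gammaℝ_two_mul_add_two]
  calc k ! / Real.pi ^ (k + 1) = 1 * (k ! / Real.pi ^ (k + 1)) * 1 := by ring
    _ ≤ _ := by gcongr

end XiGrowth

section EntireFunctions

open Complex Set Filter Topology Metric

/-! ### A Hadamard-type inequality for entire functions -/

variable {f g W : ℂ → ℂ} {S : Finset ℂ} {R L M : ℝ}

theorem exists_eq_pow_mul_of_analyticOrderAt_eq (hf : Differentiable ℂ f) {w : ℂ} {n : ℕ}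
    (hn : analyticOrderAt f w = n) :
    ∃ g, Differentiable ℂ g ∧ (∀ z, f z = (z - w) ^ n * g z) ∧ g w ≠ 0 := by
  induction n generalizing f with
  | zero =>
    exact ⟨f, hf, by simp, ((hf.analyticAt w).analyticOrderAt_eq_zero).1 (by simpa using hn)⟩
  | succ n ih =>
    have hfw : f w = 0 := apply_eq_zero_of_analyticOrderAt_ne_zero (by rw [hn]; simp)
    have hd : Differentiable ℂ (dslope f w) := by
      rw [← differentiableOn_univ] at hf ⊢
      exact (differentiableOn_dslope univ_mem).2 hf
    have hfd : f = (· - w) * dslope f w := by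
      ext z
      simpa [hfw] using (sub_smul_dslope f w z).symm
    have horder : analyticOrderAt (dslope f w) w = n := by
      rw [hfd, analyticOrderAt_mul (by fun_prop) (hd.analyticAt w),
        analyticOrderAt_id_sub_const_self, Nat.cast_succ, add_comm] at hn
      exact ENat.add_left_injective_of_ne_top ENat.one_ne_top hn
    obtain ⟨g, hg, hfg, hgw⟩ := ih hd horder
    refine ⟨g, hg, fun z ↦ ?_, hgw⟩
    rw [hfd, Pi.mul_apply, hfg]
    ring

theorem exists_eq_prod_sub_pow_mul (hf : Differentiable ℂ f)
    (hS : ∀ w ∈ S, analyticOrderAt f w ≠ ⊤) :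
    ∃ g, Differentiable ℂ g ∧
      (∀ z, f z = (∏ w ∈ S, (z - w) ^ analyticOrderNatAt f w) * g z) ∧ ∀ w ∈ S, g w ≠ 0 := by
  classical
  induction S using Finset.induction_on with
  | empty => exact ⟨f, hf, by simp, by simp⟩
  | insert w S hw ih =>
    obtain ⟨g, hg, hfg, hg0⟩ := ih fun v hv ↦ hS v (Finset.mem_insert_of_mem hv)
    set P : ℂ → ℂ := fun z ↦ ∏ v ∈ S, (z - v) ^ analyticOrderNatAt f v
    have hP : AnalyticAt ℂ P w := by fun_prop
    have hPw : analyticOrderAt P w = 0 := hP.analyticOrderAt_eq_zero.2 <|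
      Finset.prod_ne_zero_iff.2 fun v hv ↦
        pow_ne_zero _ (sub_ne_zero.2 (ne_of_mem_of_not_mem hv hw).symm)
    have horder : analyticOrderAt g w = analyticOrderNatAt f w := by
      rw [Nat.cast_analyticOrderNatAt (hS w (Finset.mem_insert_self w S)),
        show f = P * g from funext hfg, analyticOrderAt_mul hP (hg.analyticAt w), hPw, zero_add]
    obtain ⟨q, hq, hgq, hqw⟩ := exists_eq_pow_mul_of_analyticOrderAt_eq hg horder
    refine ⟨q, hq, fun z ↦ ?_, fun v hv ↦ ?_⟩
    · rw [hfg z, Finset.prod_insert hw, hgq z]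
      ring
    · rcases Finset.mem_insert.1 hv with rfl | hv
      · exact hqw
      · exact right_ne_zero_of_mul (hgq v ▸ hg0 v hv)

theorem exists_eq_prod_one_sub_div_pow_mul (hf : Differentiable ℂ f)
    (hS : ∀ w ∈ S, w ≠ 0 ∧ analyticOrderAt f w ≠ ⊤) :
    ∃ g, Differentiable ℂ g ∧
      (∀ z, f z = (∏ w ∈ S, (1 - z / w) ^ analyticOrderNatAt f w) * g z) ∧ ∀ w ∈ S, g w ≠ 0 := by
  obtain ⟨g, hg, hfg, hgS⟩ := exists_eq_prod_sub_pow_mul hf fun w hw ↦ (hS w hw).2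
  have hc : ∏ w ∈ S, (-w) ^ analyticOrderNatAt f w ≠ 0 :=
    Finset.prod_ne_zero_iff.2 fun w hw ↦ pow_ne_zero _ (neg_ne_zero.2 (hS w hw).1)
  refine ⟨fun z ↦ (∏ w ∈ S, (-w) ^ analyticOrderNatAt f w) * g z, by fun_prop, fun z ↦ ?_,
    fun w hw ↦ mul_ne_zero hc (hgS w hw)⟩
  rw [hfg z, ← mul_assoc, ← Finset.prod_mul_distrib]
  congr 1
  refine Finset.prod_congr rfl fun w hw ↦ ?_
  have hw0 : w ≠ 0 := (hS w hw).1
  rw [← mul_pow]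
  congr 1
  field_simp
  ring

theorem one_le_norm_one_sub_div {z w : ℂ} (hw : w ≠ 0) (h : 2 * ‖w‖ ≤ ‖z‖) : 1 ≤ ‖1 - z / w‖ := by
  have h2 : 2 ≤ ‖z / w‖ := by rwa [norm_div, le_div_iff₀ (norm_pos_iff.2 hw)]
  have := norm_sub_norm_le (z / w) 1
  rw [norm_one, norm_sub_rev] at this
  linarith

theorem norm_le_of_eq_prod_one_sub_div_pow_mul {m : ℂ → ℕ} (hg : Differentiable ℂ g) (hR : 0 < R)
    (hfg : ∀ z, f z = (∏ w ∈ S, (1 - z / w) ^ m w) * g z) (hS : ∀ w ∈ S, w ≠ 0 ∧ ‖w‖ ≤ R)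
    (hM : ∀ z, ‖z‖ ≤ 2 * R → ‖f z‖ ≤ M) {z : ℂ} (hz : ‖z‖ ≤ 2 * R) : ‖g z‖ ≤ M := by
  have hR2 : 2 * R ≠ 0 := by positivity
  refine norm_le_of_forall_mem_frontier_norm_le isBounded_ball hg.diffContOnCl (fun y hy ↦ ?_)
    (by rwa [closure_ball _ hR2, mem_closedBall_zero_iff])
  rw [frontier_ball _ hR2, mem_sphere_zero_iff_norm] at hy
  refine le_trans ?_ (hM y hy.le)
  rw [hfg y, norm_mul, norm_prod]
  refine le_mul_of_one_le_left (norm_nonneg _) (Finset.one_le_prod fun w hw ↦ ?_)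
  rw [norm_pow]
  exact one_le_pow₀ (one_le_norm_one_sub_div (hS w hw).1 (by linarith [(hS w hw).2]))

theorem exists_eqOn_exp_of_ne_zero {c : ℂ} (hR : 0 < R) (hW : DifferentiableOn ℂ W (ball c R))
    (hne : ∀ z ∈ ball c R, W z ≠ 0) :
    ∃ k : ℂ → ℂ, k c = log (W c) ∧ EqOn W (fun z ↦ exp (k z)) (ball c R) ∧
      ∀ z ∈ ball c R, HasDerivAt k (logDeriv W z) z := by
  have hlog : DifferentiableOn ℂ (logDeriv W) (ball c R) := (hW.deriv isOpen_ball).div hW hne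
  obtain ⟨k, hkc, hk⟩ := hlog.isExactOn_ball.with_val_at c (log (W c))
  have hkd : DifferentiableOn ℂ (fun z ↦ exp (k z)) (ball c R) := fun z hz ↦
    (hk z hz).cexp.differentiableAt.differentiableWithinAt
  have hexp : EqOn (logDeriv W) (logDeriv fun z ↦ exp (k z)) (ball c R) := fun z hz ↦ by
    rw [logDeriv_apply (fun z ↦ exp (k z)), (hk z hz).cexp.deriv,
      mul_div_cancel_left₀ _ (exp_ne_zero _)]
  obtain ⟨a, -, ha⟩ := (logDeriv_eqOn_iff hW hkd isOpen_ball (convex_ball c R).isPreconnected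
    (fun z _ ↦ exp_ne_zero _) hne).1 hexp
  have hc : c ∈ ball c R := mem_ball_self hR
  have ha1 : a = 1 := by
    have := ha hc
    simp only [hkc, Pi.smul_apply, smul_eq_mul, exp_log (hne c hc)] at this
    exact mul_right_cancel₀ (hne c hc) (by rw [one_mul, ← this])
  exact ⟨k, hkc, by simpa [ha1] using ha, hk⟩

theorem norm_le_exp_of_forall_ne_zero (hW : DifferentiableOn ℂ W (ball 0 R)) (hW0 : W 0 = 1)
    (hW' : deriv W 0 = 0) (hne : ∀ z ∈ ball 0 R, W z ≠ 0) (hL : 0 < L)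
    (hWL : ∀ z ∈ ball 0 R, ‖W z‖ ≤ Real.exp L) {z : ℂ} (hz : ‖z‖ < R / 2) :
    ‖W z‖ ≤ Real.exp (2 * L * (‖z‖ / (R / 2)) ^ 2) := by
  have hR : 0 < R := by linarith [norm_nonneg z]
  obtain ⟨k, hk0, hWk, hk⟩ := exists_eqOn_exp_of_ne_zero hR hW hne
  rw [hW0, log_one] at hk0
  have hkd : DifferentiableOn ℂ k (ball 0 R) := fun y hy ↦
    (hk y hy).differentiableAt.differentiableWithinAt
  have hre : MapsTo k (ball 0 R) {z | z.re ≤ L} := fun y hy ↦ by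
    simpa [hWk hy, norm_exp] using hWL y hy
  have hbound : MapsTo k (ball 0 (R / 2)) (closedBall (k 0) (2 * L)) := fun y hy ↦ by
    rw [mem_ball_zero_iff] at hy
    rw [hk0, mem_closedBall_zero_iff]
    refine (borelCaratheodory_zero hL hkd hre hR (by simp; linarith) hk0).trans ?_
    rw [div_le_iff₀ (by linarith)]
    nlinarith
  have hlittle : (k · - k 0) =o[𝓝 0] fun w : ℂ ↦ ‖w - 0‖ ^ 1 := by
    have hk' : HasDerivAt k 0 0 := by simpa [logDeriv_apply, hW'] using hk 0 (mem_ball_self hR)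
    simpa using hk'.isLittleO.norm_right
  have hdist := dist_le_mul_div_pow_of_mapsTo_ball_of_isLittleO
    (hkd.mono (ball_subset_ball (by linarith))) hbound hlittle (mem_ball_zero_iff.2 hz)
  rw [hk0, dist_zero_right, dist_zero_right] at hdist
  rw [hWk (mem_ball_zero_iff.2 (by linarith)), norm_exp]
  exact Real.exp_le_exp.2 ((re_le_norm _).trans hdist)

theorem norm_mul_norm_neg_le_of_forall_ne_zero (hg : Differentiable ℂ g)
    (hne : ∀ z ∈ ball 0 R, g z ≠ 0) (hL : 0 < L)
    (hgL : ∀ z ∈ ball 0 R, ‖g z‖ ≤ ‖g 0‖ * Real.exp L) {z : ℂ} (hz : ‖z‖ < R / 2) :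
    ‖g z‖ * ‖g (-z)‖ ≤ ‖g 0‖ ^ 2 * Real.exp (2 * (2 * L) * (‖z‖ / (R / 2)) ^ 2) := by
  have hneg {y : ℂ} (hy : y ∈ ball 0 R) : -y ∈ ball 0 R := by simpa using hy
  have hg0 : g 0 ≠ 0 := hne 0 (mem_ball_self (by linarith [norm_nonneg z]))
  set W : ℂ → ℂ := fun y ↦ g y * g (-y) / g 0 ^ 2 with hW
  have hnorm (y : ℂ) : ‖W y‖ = ‖g y‖ * ‖g (-y)‖ / ‖g 0‖ ^ 2 := by
    rw [norm_div, norm_mul, norm_pow]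
  have hdiff : Differentiable ℂ W := by fun_prop
  have hderiv : deriv W 0 = 0 := by
    have heven : (fun y ↦ W (-y)) = W := funext fun y ↦ by simp only [hW, neg_neg, mul_comm]
    have : deriv W 0 = -deriv W 0 := by
      conv_lhs => rw [← heven, deriv_comp_neg, neg_zero]
    linear_combination this / 2
  have hWz : ‖W z‖ ≤ Real.exp (2 * (2 * L) * (‖z‖ / (R / 2)) ^ 2) := by
    refine norm_le_exp_of_forall_ne_zero hdiff.differentiableOn (by simp [hW, ← sq, hg0]) hderiv
      (fun y hy ↦ ?_) (by positivity) (fun y hy ↦ ?_) hz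
    · exact div_ne_zero (mul_ne_zero (hne y hy) (hne (-y) (hneg hy))) (pow_ne_zero 2 hg0)
    · rw [hnorm, div_le_iff₀ (by positivity)]
      calc ‖g y‖ * ‖g (-y)‖ ≤ (‖g 0‖ * Real.exp L) * (‖g 0‖ * Real.exp L) := by
            gcongr
            exacts [hgL y hy, hgL (-y) (hneg hy)]
        _ = Real.exp (2 * L) * ‖g 0‖ ^ 2 := by rw [two_mul L, Real.exp_add]; ring
  rwa [hnorm, div_le_iff₀' (by positivity)] at hWz

theorem norm_mul_norm_neg_le (hf : Differentiable ℂ f) (hf0 : f 0 ≠ 0)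
    (hS : ∀ w, w ∈ S ↔ f w = 0 ∧ ‖w‖ ≤ R) (hL : 0 < L)
    (hfL : ∀ z, ‖z‖ ≤ 2 * R → ‖f z‖ ≤ ‖f 0‖ * Real.exp L) {z : ℂ} (hz : ‖z‖ < R / 2) :
    ‖f z‖ * ‖f (-z)‖ ≤ (∏ w ∈ S, ‖1 - z ^ 2 / w ^ 2‖ ^ analyticOrderNatAt f w) *
      (‖f 0‖ ^ 2 * Real.exp (2 * (2 * L) * (‖z‖ / (R / 2)) ^ 2)) := by
  have hR : 0 < R := by linarith [norm_nonneg z]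
  have hSR : ∀ w ∈ S, w ≠ 0 ∧ ‖w‖ ≤ R := fun w hw ↦
    ⟨by rintro rfl; exact hf0 ((hS 0).1 hw).1, ((hS w).1 hw).2⟩
  have horder (w : ℂ) : analyticOrderAt f w ≠ ⊤ :=
    AnalyticOnNhd.analyticOrderAt_ne_top_of_isPreconnected (fun z _ ↦ hf.analyticAt z)
      isPreconnected_univ (mem_univ 0) (mem_univ w)
      (by simp [((hf.analyticAt 0).analyticOrderAt_eq_zero).2 hf0])
  obtain ⟨g, hg, hfg, hgS⟩ := exists_eq_prod_one_sub_div_pow_mul hf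
    fun w hw ↦ ⟨(hSR w hw).1, horder w⟩
  have hg0 : g 0 = f 0 := by simp [hfg 0]
  have hne : ∀ y ∈ ball 0 R, g y ≠ 0 := fun y hy h0 ↦
    hgS y ((hS y).2 ⟨by rw [hfg, h0, mul_zero], (mem_ball_zero_iff.1 hy).le⟩) h0
  have hgL : ∀ y ∈ ball 0 R, ‖g y‖ ≤ ‖g 0‖ * Real.exp L := fun y hy ↦
    norm_le_of_eq_prod_one_sub_div_pow_mul hg hR hfg hSR (hg0 ▸ hfL)
      (by linarith [mem_ball_zero_iff.1 hy])
  have hfactor (w : ℂ) : 1 - z ^ 2 / w ^ 2 = (1 - z / w) * (1 - -z / w) := by ring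
  rw [← norm_mul, hfg z, hfg (-z), mul_mul_mul_comm, ← Finset.prod_mul_distrib]
  simp only [← mul_pow, ← hfactor]
  rw [norm_mul, norm_mul, norm_prod, ← hg0]
  simp only [norm_pow]
  exact mul_le_mul_of_nonneg_left (norm_mul_norm_neg_le_of_forall_ne_zero hg hne hL hgL hz)
    (by positivity)

end EntireFunctions

section ThetaOscillation

open Complex Filter Topology Chebyshev
open scoped Nat

/-! ### Nonnegativity of the gap contradicts the growth of the Riemann xi function -/

variable {C r : ℝ}

theorem analyticOrderNatAt_riemannXi_one_half_add (l : ℝ) :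
    analyticOrderNatAt (fun z ↦ riemannXi (1 / 2 + z)) (l * I) = xiMultiplicity l := by
  have hcomp := analyticOrderAt_comp_of_deriv_ne_zero (f := riemannXi)
    (g := fun z : ℂ ↦ 1 / 2 + z) (z₀ := l * I) (by fun_prop) (by simp)
  exact congrArg ENat.toNat hcomp

theorem mem_image_xiOrdinates_iff (hgap : ∀ x, 1 < x → 0 ≤ psiGap C x) {R : ℝ} {w : ℂ} :
    w ∈ (xiOrdinates R).image (fun l : ℝ ↦ l * I) ↔ riemannXi (1 / 2 + w) = 0 ∧ ‖w‖ ≤ R := by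
  simp only [Finset.mem_image, mem_xiOrdinates, xiMultiplicity_ne_zero_iff]
  constructor
  · rintro ⟨l, ⟨hl, hlR⟩, rfl⟩
    exact ⟨hl, by simpa using hlR⟩
  · rintro ⟨hw, hwR⟩
    have hre : w.re = 0 := by simpa using re_eq_one_half_of_riemannXi_eq_zero hgap hw
    have hwI : w.im * I = w := by apply Complex.ext <;> simp [hre]
    exact ⟨w.im, ⟨by rwa [hwI], (abs_im_le_norm w).trans hwR⟩, hwI⟩

theorem prod_image_xiOrdinates (R r : ℝ) :
    ∏ w ∈ (xiOrdinates R).image (fun l : ℝ ↦ l * I), ‖1 - (r : ℂ) ^ 2 / w ^ 2‖ ^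
        analyticOrderNatAt (fun z ↦ riemannXi (1 / 2 + z)) w =
      ∏ l ∈ xiOrdinates R, (1 + r ^ 2 / l ^ 2) ^ xiMultiplicity l := by
  rw [Finset.prod_image fun a _ b _ hab ↦ by simpa using hab]
  refine Finset.prod_congr rfl fun l _ ↦ ?_
  have hl : 1 - (r : ℂ) ^ 2 / (l * I) ^ 2 = ((1 + r ^ 2 / l ^ 2 : ℝ) : ℂ) := by
    push_cast
    rw [mul_pow, I_sq]
    ring
  rw [analyticOrderNatAt_riemannXi_one_half_add, hl, norm_real, Real.norm_of_nonneg (by positivity)]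

theorem exists_norm_riemannXi_le_mul_exp : ∃ c > 0, ∀ (n : ℕ) (z : ℂ), ‖z‖ ≤ n →
    ‖riemannXi (1 / 2 + z)‖ ≤
      ‖riemannXi (1 / 2)‖ * Real.exp (c + (n + 3) * Real.log (n + 3)) := by
  have hξ : 0 < ‖riemannXi (1 / 2)‖ := norm_pos_iff.2 riemannXi_one_half_ne_zero
  set c := 3 * (Real.Gamma (1 / 4) + 1) / ‖riemannXi (1 / 2)‖ with hc
  refine ⟨c, by positivity, fun n z hz ↦ ?_⟩
  have hfac : ((n + 3)! : ℝ) ≤ Real.exp ((n + 3) * Real.log (n + 3)) := by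
    rw [mul_comm, ← Real.rpow_def_of_pos (by positivity)]
    exact_mod_cast Nat.factorial_le_pow (n + 3)
  calc ‖riemannXi (1 / 2 + z)‖ ≤ 3 * (Real.Gamma (1 / 4) + 1) * (n + 3)! := norm_riemannXi_le hz
    _ = ‖riemannXi (1 / 2)‖ * (c * (n + 3)!) := by rw [hc]; field_simp
    _ ≤ ‖riemannXi (1 / 2)‖ * (Real.exp c * Real.exp ((n + 3) * Real.log (n + 3))) := by
      gcongr
      linarith [Real.add_one_le_exp c]
    _ = _ := by rw [Real.exp_add]

theorem isLittleO_const_add_mul_log (c : ℝ) :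
    (fun n : ℕ ↦ c + ((2 * n : ℕ) + 3) * Real.log ((2 * n : ℕ) + 3)) =o[atTop]
      fun n : ℕ ↦ (n : ℝ) ^ 2 := by
  have hn : Tendsto (fun n : ℕ ↦ (n : ℝ)) atTop atTop := tendsto_natCast_atTop_atTop
  have hn2 : Tendsto (fun n : ℕ ↦ ((2 * n : ℕ) : ℝ) + 3) atTop atTop :=
    tendsto_atTop_mono (fun n ↦ by push_cast; linarith [n.cast_nonneg (α := ℝ)]) hn
  have hO : (fun n : ℕ ↦ ((2 * n : ℕ) : ℝ) + 3) =O[atTop] fun n : ℕ ↦ (n : ℝ) := by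
    refine .of_bound 5 ((eventually_ge_atTop 1).mono fun n h1 ↦ ?_)
    have h1' : (1 : ℝ) ≤ n := mod_cast h1
    rw [Real.norm_of_nonneg (by positivity), Real.norm_of_nonneg (by positivity)]
    push_cast
    linarith
  have hlog := (Real.isLittleO_log_id_atTop.comp_tendsto hn2).trans_isBigO hO
  refine .add (Asymptotics.isLittleO_const_left.2 (.inr ?_)) ?_
  · exact tendsto_norm_atTop_atTop.comp ((tendsto_pow_atTop two_ne_zero).comp hn)
  · simpa only [sq, Function.comp_def] using hO.mul_isLittleO hlog

theorem exists_norm_riemannXi_sq_le (hgap : ∀ x, 1 < x → 0 ≤ psiGap C x) (r : ℝ) :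
    ∃ R, ‖riemannXi (1 / 2 + r)‖ ^ 2 ≤
      (∏ l ∈ xiOrdinates R, (1 + r ^ 2 / l ^ 2) ^ xiMultiplicity l) *
        (‖riemannXi (1 / 2)‖ ^ 2 * Real.exp 1) := by
  obtain ⟨c, hc, hξ⟩ := exists_norm_riemannXi_le_mul_exp
  set L : ℕ → ℝ := fun n ↦ c + ((2 * n : ℕ) + 3) * Real.log ((2 * n : ℕ) + 3) 
  have hlim : Tendsto (fun n : ℕ ↦ 16 * r ^ 2 * (L n / n ^ 2)) atTop (𝓝 0) := by
    rw [← mul_zero (16 * r ^ 2)]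
    exact (isLittleO_const_add_mul_log c).tendsto_div_nhds_zero.const_mul _
  obtain ⟨n, hn, hrn⟩ := ((hlim.eventually_le_const one_pos).and
    (tendsto_natCast_atTop_atTop.eventually_gt_atTop (2 * |r|))).exists
  have hn0 : (0 : ℝ) < n := by linarith [abs_nonneg r]
  have hL : 0 < L n := add_pos_of_pos_of_nonneg hc <|
    mul_nonneg (by positivity) (Real.log_nonneg (by linarith [(2 * n).cast_nonneg (α := ℝ)]))
  refine ⟨n, ?_⟩
  have hbound := norm_mul_norm_neg_le (f := fun z ↦ riemannXi (1 / 2 + z)) (z := r) (R := n)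
    (differentiable_riemannXi.comp (by fun_prop)) (by simpa using riemannXi_one_half_ne_zero)
    (fun w ↦ mem_image_xiOrdinates_iff hgap) hL
    (fun z hz ↦ by simpa only [add_zero] using hξ (2 * n) z (by rwa [Nat.cast_mul, Nat.cast_two]))
    (by rw [norm_real, Real.norm_eq_abs]; linarith)
  rw [prod_image_xiOrdinates, ← sub_eq_add_neg, riemannXi_one_half_sub, ← sq, add_zero] at hbound
  refine hbound.trans ?_
  gcongr
  refine le_of_eq_of_le ?_ hn
  rw [norm_real, Real.norm_eq_abs, div_pow, sq_abs]
  field_simp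
  ring

theorem prod_one_add_sq_div_sq_pow_le {S : Finset ℝ} {m : ℝ → ℕ} {K : ℝ} (hS : ∀ l ∈ S, l ≠ 0)
    (hK : ∀ a > 0, ∑ l ∈ S, m l * (a / (a ^ 2 + l ^ 2)) ≤ K) (hr : 0 ≤ r) :
    ∏ l ∈ S, (1 + r ^ 2 / l ^ 2) ^ m l ≤ Real.exp (2 * K * r) := by
  set F : ℝ → ℝ := fun t ↦ 2 * K * t - ∑ l ∈ S, m l * Real.log (1 + t ^ 2 / l ^ 2) with hF
  have hderiv (t : ℝ) :
      HasDerivAt F (2 * K - 2 * ∑ l ∈ S, m l * (t / (t ^ 2 + l ^ 2))) t := by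
    rw [Finset.mul_sum]
    refine .sub (by simpa using (hasDerivAt_id t).const_mul (2 * K)) (.fun_sum fun l hl ↦ ?_)
    have hl0 : l ≠ 0 := hS l hl
    have hpos : 1 + t ^ 2 / l ^ 2 ≠ 0 := by positivity
    refine (((((hasDerivAt_id t).pow 2).div_const (l ^ 2)).const_add 1).log hpos
      |>.const_mul (m l : ℝ)).congr_deriv ?_
    simp only [Pi.pow_apply, id_eq, Nat.cast_ofNat, Nat.add_one_sub_one, pow_one, mul_one]
    field_simp
    ring
  have hmono : MonotoneOn F (Set.Ici 0) := by
    refine monotoneOn_of_deriv_nonneg (convex_Ici 0)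
      (fun t _ ↦ (hderiv t).continuousAt.continuousWithinAt)
      (fun t _ ↦ (hderiv t).differentiableAt.differentiableWithinAt) fun t ht ↦ ?_
    rw [interior_Ici] at ht
    rw [(hderiv t).deriv]
    linarith [hK t ht]
  have hFr : F 0 ≤ F r := hmono Set.self_mem_Ici hr hr
  simp only [hF] at hFr
  have hlog : Real.log (∏ l ∈ S, (1 + r ^ 2 / l ^ 2) ^ m l) =
      ∑ l ∈ S, m l * Real.log (1 + r ^ 2 / l ^ 2) := by
    rw [Real.log_prod fun l _ ↦ by positivity]
    simp only [Real.log_pow]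
  rw [← Real.log_le_iff_le_exp (Finset.prod_pos fun l _ ↦ by positivity), hlog]
  simpa using hFr

theorem exists_norm_riemannXi_sq_le_exp (hgap : ∀ x, 1 < x → 0 ≤ psiGap C x) :
    ∃ A K, ∀ r : ℝ, 0 ≤ r → ‖riemannXi (1 / 2 + r)‖ ^ 2 ≤ A * Real.exp (K * r) := by
  obtain ⟨K, hK⟩ := sum_xiOrdinates_poisson_le hgap
  refine ⟨‖riemannXi (1 / 2)‖ ^ 2 * Real.exp 1, 2 * K, fun r hr ↦ ?_⟩
  obtain ⟨R, hR⟩ := exists_norm_riemannXi_sq_le hgap r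
  rw [mul_comm] at hR
  exact hR.trans <| mul_le_mul_of_nonneg_left
    (prod_one_add_sq_div_sq_pow_le (fun l ↦ ne_zero_of_mem_xiOrdinates) (hK R) hr) (by positivity)

theorem not_forall_norm_riemannXi_sq_le_exp (A K : ℝ) :
    ¬ ∀ r : ℝ, 0 ≤ r → ‖riemannXi (1 / 2 + r)‖ ^ 2 ≤ A * Real.exp (K * r) := by
  intro h
  set c := A * Real.exp (K * (3 / 2)) * Real.pi ^ 2
  set D := Real.pi ^ 2 * Real.exp (2 * K)
  have hfac (k : ℕ) : (k ! : ℝ) ≤ c * D ^ k := by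
    have harg : (1 / 2 + ((2 * k + 3 / 2 : ℝ) : ℂ)) = 2 * k + 2 := by push_cast; ring
    have hexp : Real.exp (K * (2 * k + 3 / 2)) = Real.exp (K * (3 / 2)) * Real.exp (2 * K) ^ k := by
      rw [← Real.exp_nat_mul, ← Real.exp_add]
      ring_nf
    have hk : (k ! / Real.pi ^ (k + 1)) ^ 2 ≤ A * Real.exp (K * (2 * k + 3 / 2)) := by
      refine le_trans ?_ (h (2 * k + 3 / 2) (by positivity))
      rw [harg]
      gcongr
      exact factorial_div_pi_pow_le_norm_riemannXi k
    rw [div_pow, div_le_iff₀ (by positivity), hexp] at hk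
    calc (k ! : ℝ) ≤ (k ! : ℝ) ^ 2 := le_self_pow₀ (mod_cast k.factorial_pos) two_ne_zero
      _ ≤ _ := hk
      _ = c * D ^ k := by ring
  have hlim : Tendsto (fun k : ℕ ↦ c * (D ^ k / k !)) atTop (𝓝 0) := by
    simpa using (FloorSemiring.tendsto_pow_div_factorial_atTop D).const_mul c
  obtain ⟨k, hk⟩ := (hlim.eventually_lt_const one_pos).exists
  rw [← mul_div_assoc, div_lt_one (by positivity)] at hk
  exact (hfac k).not_gt hk

theorem exists_psiGap_neg (C : ℝ) : ∃ x, 1 < x ∧ psiGap C x < 0 := by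
  by_contra! hgap
  obtain ⟨A, K, h⟩ := exists_norm_riemannXi_sq_le_exp hgap
  exact not_forall_norm_riemannXi_sq_le_exp A K h

theorem frequently_lt_theta : ∃ᶠ x in atTop, x < θ x := by
  rw [Filter.frequently_atTop]
  by_contra! hcon
  obtain ⟨x₀, hx₀⟩ := hcon
  obtain ⟨C, hC⟩ := psi_sub_theta_le_mul_sqrt
  set y := max x₀ 1
  obtain ⟨x, hx, hneg⟩ := exists_psiGap_neg (|C| + ψ y)
  refine hneg.not_ge ?_
  have hψ : 0 ≤ ψ y := psi_nonneg y
  have hsqrt : 1 ≤ √x := Real.one_le_sqrt.2 hx.le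
  rw [psiGap, ← Real.sqrt_eq_rpow]
  rcases le_total x y with hxy | hyx
  · nlinarith [psi_mono hxy, abs_nonneg C]
  · nlinarith [hC x, hx₀ x ((le_max_left _ _).trans hyx), le_abs_self C]

end ThetaOscillation

/-- There are infinitely many positive integers n with P⁺(g(n)) < log g(n). -/
theorem stmt5 :
    {n : ℕ | 0 < n ∧ (maxPrimeFac (landau n) : ℝ) < Real.log (landau n)}.Infinite := by
  exact infinite_of_frequently_lt_theta frequently_lt_theta
end
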